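/- arXiv:1610.03712 — 7 statements merged into one kernel-verified Lean document; each statement's English description precedes it below -/
import Mathlib

section
/- Let F be an algebraically closed field and let A ∈ GL(3,F) be such that the centralizer of A in GL(3,F) is not a solvable group. Then A is diagonalizable and has a repeated eigenvalue; that is, there exist S ∈ GL(3,F) and nonzero scalars among which at least two coincide such that S·A·S⁻¹ is a diagonal matrix whose diagonal entries are not pairwise distinct. -/
open scoped MatrixGroups

namespace CentAux

theorem solv3 {F G : Type*} [Field F] [Group G] (ρ : G →* Matrix (Fin 3) (Fin 3) F)
    (hρ : Function.Injective ρ)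
    (h : ∀ g, ρ g 1 0 = 0 ∧ ρ g 2 0 = 0 ∧ ρ g 2 1 = 0 ∧ ρ g 0 0 = 1 ∧ ρ g 1 1 = 1 ∧ ρ g 2 2 = 1 ∧
      ρ g 0 1 = 0 ∧ ρ g 1 2 = 0) : Group.IsSolvable G := by
  apply Group.isSolvable_of_comm
  intro x y
  apply hρ
  rw [map_mul, map_mul]
  obtain ⟨h1, h2, h3, h4, h5, h6, h7, h8⟩ := h x
  obtain ⟨k1, k2, k3, k4, k5, k6, k7, k8⟩ := h y
  ext i j
  fin_cases i <;> fin_cases j <;> simp [Matrix.mul_apply, Fin.sum_univ_three, *, add_comm]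

theorem solv2 {F G : Type*} [Field F] [Group G] (ρ : G →* Matrix (Fin 3) (Fin 3) F)
    (hρ : Function.Injective ρ)
    (h : ∀ g, ρ g 1 0 = 0 ∧ ρ g 2 0 = 0 ∧ ρ g 2 1 = 0 ∧ ρ g 0 0 = 1 ∧ ρ g 1 1 = 1 ∧ ρ g 2 2 = 1) :
    Group.IsSolvable G := by
  let φ : G →* Multiplicative (F × F) :=
    { toFun := fun g => Multiplicative.ofAdd (ρ g 0 1, ρ g 1 2)
      map_one' := by simp
      map_mul' := by
        intro x y
        obtain ⟨h1, h2, h3, h4, h5, h6⟩ := h x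
        obtain ⟨k1, k2, k3, k4, k5, k6⟩ := h y
        rw [← ofAdd_add, map_mul]
        simp [Matrix.mul_apply, Fin.sum_univ_three, *, add_comm] }
  have : Group.IsSolvable φ.ker := by
    apply solv3 (ρ.comp φ.ker.subtype) (hρ.comp Subtype.val_injective)
    rintro ⟨g, hg⟩
    have hg' : (ρ g 0 1, ρ g 1 2) = ((0, 0) : F × F) := hg
    obtain ⟨h1, h2, h3, h4, h5, h6⟩ := h g
    simp only [Prod.mk.injEq] at hg'
    exact ⟨h1, h2, h3, h4, h5, h6, hg'.1, hg'.2⟩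
  exact Group.isSolvable_of_ker_le_range φ.ker.subtype φ (by simp)

theorem solv1 {F G : Type*} [Field F] [Group G] (ρ : G →* Matrix (Fin 3) (Fin 3) F)
    (hρ : Function.Injective ρ)
    (h : ∀ g, ρ g 1 0 = 0 ∧ ρ g 2 0 = 0 ∧ ρ g 2 1 = 0) :
    Group.IsSolvable G := by
  let φ₀ : G →* (F × F × F) :=
    { toFun := fun g => (ρ g 0 0, ρ g 1 1, ρ g 2 2)
      map_one' := by simp
      map_mul' := by
        intro x y
        obtain ⟨h1, h2, h3⟩ := h x
        obtain ⟨k1, k2, k3⟩ := h y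
        rw [map_mul]
        simp [Matrix.mul_apply, Fin.sum_univ_three, *] }
  let φ := φ₀.toHomUnits
  have : Group.IsSolvable φ.ker := by
    apply solv2 (ρ.comp φ.ker.subtype) (hρ.comp Subtype.val_injective)
    rintro ⟨g, hg⟩
    have hg' : (ρ g 0 0, ρ g 1 1, ρ g 2 2) = ((1, 1, 1) : F × F × F) :=
      congrArg Units.val (show φ g = 1 from hg)
    obtain ⟨h1, h2, h3⟩ := h g
    simp only [Prod.mk.injEq] at hg'
    exact ⟨h1, h2, h3, hg'.1, hg'.2.1, hg'.2.2⟩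
  exact Group.isSolvable_of_ker_le_range φ.ker.subtype φ (by simp)

open Matrix

theorem flag {F : Type*} [Field F] (H : Subgroup (GL (Fin 3) F))
    (K₁ K₂ : Submodule F (Fin 3 → F)) (h1 : K₁ ≠ ⊥) (h12 : K₁ < K₂) (h2 : K₂ ≠ ⊤)
    (i1 : ∀ g ∈ H, ∀ v ∈ K₁, (g : Matrix (Fin 3) (Fin 3) F) *ᵥ v ∈ K₁)
    (i2 : ∀ g ∈ H, ∀ v ∈ K₂, (g : Matrix (Fin 3) (Fin 3) F) *ᵥ v ∈ K₂) : Group.IsSolvable H := by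
  obtain ⟨u, hu, hu0⟩ := Submodule.exists_mem_ne_zero_of_ne_bot h1
  obtain ⟨v, hv, hvn⟩ := SetLike.exists_of_lt h12
  obtain ⟨w, -, hw⟩ := SetLike.exists_of_lt (lt_top_iff_ne_top.2 h2)
  have hu2 := h12.le hu
  have key3 : ∀ α β γ : F, α • u + β • v + γ • w ∈ K₂ → γ = 0 := by
    intro α β γ hm
    by_contra hγ
    apply hw
    have : γ • w ∈ K₂ := (Submodule.add_mem_iff_right _
      (K₂.add_mem (K₂.smul_mem α hu2) (K₂.smul_mem β hv))).1 hm
    exact (Submodule.smul_mem_iff _ hγ).1 this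
  have key2 : ∀ α β γ : F, α • u + β • v + γ • w ∈ K₁ → β = 0 ∧ γ = 0 := by
    intro α β γ hm
    have hγ := key3 α β γ (h12.le hm)
    subst hγ
    refine ⟨?_, rfl⟩
    by_contra hβ
    apply hvn
    rw [zero_smul, add_zero] at hm
    exact (Submodule.smul_mem_iff _ hβ).1
      ((Submodule.add_mem_iff_right _ (K₁.smul_mem α hu)).1 hm)
  let P : Matrix (Fin 3) (Fin 3) F := (Matrix.of ![u, v, w])ᵀ
  have hli : LinearIndependent F P.col := by
    rw [Fintype.linearIndependent_iff]
    intro c hc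
    have hc' : c 0 • u + c 1 • v + c 2 • w = 0 := by
      rw [← hc, Fin.sum_univ_three]; rfl
    obtain ⟨hb, hg⟩ := key2 _ _ _ (hc' ▸ K₁.zero_mem)
    have ha : c 0 = 0 := by
      simp only [hb, hg, zero_smul, add_zero] at hc'
      exact (smul_eq_zero.1 hc').resolve_right hu0
    intro i
    fin_cases i <;> assumption
  obtain ⟨Q, hQ⟩ := Matrix.linearIndependent_cols_iff_isUnit.1 hli
  let ρ : H →* Matrix (Fin 3) (Fin 3) F :=
    (Units.coeHom _).comp ((MulAut.conj Q⁻¹).toMonoidHom.comp H.subtype)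
  have hρ : ∀ g : H, P * ρ g = ((g : GL (Fin 3) F) : Matrix (Fin 3) (Fin 3) F) * P := by
    intro g
    have : Q * (MulAut.conj Q⁻¹ (g : GL (Fin 3) F)) = g * Q := by simp [mul_assoc]
    rw [← hQ]
    exact congrArg Units.val this
  have hcol : ∀ (g : H) (j : Fin 3), ((g : GL (Fin 3) F) : Matrix (Fin 3) (Fin 3) F) *ᵥ (![u, v, w] j)
      = ρ g 0 j • u + ρ g 1 j • v + ρ g 2 j • w := by
    intro g j
    ext i
    have := congrFun (congrFun (hρ g) i) j
    rw [Matrix.mul_apply, Matrix.mul_apply, Fin.sum_univ_three] at this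
    simp only [Matrix.mulVec, dotProduct]
    rw [show (∑ k, ((g : GL (Fin 3) F) : Matrix (Fin 3) (Fin 3) F) i k * ![u, v, w] j k) = _ from this.symm]
    simp [P, mul_comm]
  apply solv1 ρ
  · exact Units.val_injective.comp ((MulAut.conj Q⁻¹).injective.comp Subtype.val_injective)
  · intro g
    have a := hcol g 0
    have b := hcol g 1
    have a' := key2 _ _ _ (a ▸ i1 g g.2 u hu)
    have b' := key3 _ _ _ (b ▸ i2 g g.2 v hv)
    exact ⟨a'.1, a'.2, b'⟩

/-- kernel of a matrix -/
abbrev kr {F : Type*} [Field F] (M : Matrix (Fin 3) (Fin 3) F) : Submodule F (Fin 3 → F) :=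
  LinearMap.ker M.mulVecLin

theorem mem_kr {F : Type*} [Field F] (M : Matrix (Fin 3) (Fin 3) F) (v : Fin 3 → F) :
    v ∈ kr M ↔ M *ᵥ v = 0 := by simp [kr]

theorem inv_kr {F : Type*} [Field F] (M g : Matrix (Fin 3) (Fin 3) F) (h : Commute g M)
    (v : Fin 3 → F) (hv : v ∈ kr M) : g *ᵥ v ∈ kr M := by
  rw [mem_kr] at *
  rw [Matrix.mulVec_mulVec, ← h.eq, ← Matrix.mulVec_mulVec, hv, Matrix.mulVec_zero]

theorem kr_eq_top {F : Type*} [Field F] (M : Matrix (Fin 3) (Fin 3) F) (h : kr M = ⊤) : M = 0 := by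
  apply Matrix.ext_of_mulVec_single
  intro i
  rw [Matrix.zero_mulVec, ← mem_kr, h]
  trivial

/-- the generic (minimal polynomial of degree three) case -/
theorem cubic {F : Type*} [Field F] (H : Subgroup (GL (Fin 3) F))
    (X Y Z : Matrix (Fin 3) (Fin 3) F) (h : X * Y * Z = 0) (hXY : Commute X Y)
    (h1 : X * Y ≠ 0) (h2 : X * Z ≠ 0) (h3 : Y * Z ≠ 0)
    (cX : ∀ g ∈ H, Commute (g : Matrix (Fin 3) (Fin 3) F) X)
    (cY : ∀ g ∈ H, Commute (g : Matrix (Fin 3) (Fin 3) F) Y) : Group.IsSolvable H := by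
  apply flag H (kr X) (kr (X * Y))
  · intro hb
    apply h3
    apply kr_eq_top
    rw [eq_top_iff]
    intro v _
    rw [mem_kr]
    have : (Y * Z) *ᵥ v ∈ kr X := by
      rw [mem_kr, Matrix.mulVec_mulVec, ← mul_assoc, h, Matrix.zero_mulVec]
    rw [hb] at this
    simpa using this
  · refine lt_of_le_of_ne ?_ ?_
    · intro v hv
      rw [mem_kr] at *
      rw [hXY.eq, ← Matrix.mulVec_mulVec, hv, Matrix.mulVec_zero]
    · intro he
      apply h2
      apply kr_eq_top
      rw [eq_top_iff]
      intro v _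
      have : Z *ᵥ v ∈ kr (X * Y) := by
        rw [mem_kr, Matrix.mulVec_mulVec, h, Matrix.zero_mulVec]
      rw [← he, mem_kr, Matrix.mulVec_mulVec] at this
      rwa [mem_kr]
  · exact fun ht => h1 (kr_eq_top _ ht)
  · exact fun g hg => inv_kr _ _ (cX g hg)
  · exact fun g hg => inv_kr _ _ ((cX g hg).mul_right (cY g hg))

theorem nilp {F : Type*} [Field F] (H : Subgroup (GL (Fin 3) F))
    (N : Matrix (Fin 3) (Fin 3) F) (h : N * N = 0) (h1 : N ≠ 0)
    (c : ∀ g ∈ H, Commute (g : Matrix (Fin 3) (Fin 3) F) N) : Group.IsSolvable H := by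
  apply flag H (LinearMap.range N.mulVecLin) (kr N)
  · intro hb
    rw [LinearMap.range_eq_bot] at hb
    exact h1 (kr_eq_top _ (by rw [kr, hb, LinearMap.ker_zero]))
  · refine lt_of_le_of_ne ?_ ?_
    · rintro _ ⟨v, rfl⟩
      rw [mem_kr, Matrix.mulVecLin_apply, Matrix.mulVec_mulVec, h, Matrix.zero_mulVec]
    · intro he
      have := LinearMap.finrank_range_add_finrank_ker N.mulVecLin
      have hd : Module.finrank F (LinearMap.range N.mulVecLin) =
        Module.finrank F (LinearMap.ker N.mulVecLin) := by rw [he]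
      rw [hd, Module.finrank_fintype_fun_eq_card, Fintype.card_fin] at this
      omega
  · exact fun ht => h1 (kr_eq_top _ ht)
  · rintro g hg _ ⟨v, rfl⟩
    refine ⟨(g : Matrix (Fin 3) (Fin 3) F) *ᵥ v, ?_⟩
    simp only [Matrix.mulVecLin_apply, Matrix.mulVec_mulVec, (c g hg).eq]
  · exact fun g hg => inv_kr _ _ (c g hg)

theorem diag {F : Type*} [Field F] (A : GL (Fin 3) F) (a b : F)
    (hab : a ≠ b)
    (h : ((A : Matrix (Fin 3) (Fin 3) F) - a • 1) * ((A : Matrix (Fin 3) (Fin 3) F) - b • 1) = 0) :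
    ∃ (S : GL (Fin 3) F) (d : Fin 3 → F),
      (∃ i j : Fin 3, i ≠ j ∧ d i = d j) ∧
      ((S * A * S⁻¹ : GL (Fin 3) F) : Matrix (Fin 3) (Fin 3) F) = Matrix.diagonal d := by
  set M : Matrix (Fin 3) (Fin 3) F := (A : Matrix (Fin 3) (Fin 3) F) with hM
  have h' : (M - b • 1) * (M - a • 1) = 0 := by
    rw [← h]
    exact ((Commute.refl _).sub_left ((Commute.one_left _).smul_left b)).sub_right
      ((Commute.one_right _).smul_right a)
  have hs : ⊤ ≤ Submodule.span F ((kr (M - a • 1) : Set (Fin 3 → F)) ∪ kr (M - b • 1)) := by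
    intro v _
    have e : v = (a - b)⁻¹ • ((M - b • 1) *ᵥ v) - (a - b)⁻¹ • ((M - a • 1) *ᵥ v) := by
      rw [← smul_sub, ← Matrix.sub_mulVec, sub_sub_sub_cancel_left, ← sub_smul, Matrix.smul_mulVec,
        Matrix.one_mulVec, smul_smul, inv_mul_cancel₀ (sub_ne_zero.2 hab), one_smul]
    rw [e]
    refine Submodule.sub_mem _ (Submodule.smul_mem _ _ (Submodule.subset_span (Or.inl ?_)))
      (Submodule.smul_mem _ _ (Submodule.subset_span (Or.inr ?_)))
    · rw [SetLike.mem_coe, mem_kr, Matrix.mulVec_mulVec, h, Matrix.zero_mulVec]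
    · rw [SetLike.mem_coe, mem_kr, Matrix.mulVec_mulVec, h', Matrix.zero_mulVec]
  let B₀ := Module.Basis.ofSpan hs
  have hB₀ : ∀ i, B₀ i ∈ (kr (M - a • 1) : Set (Fin 3 → F)) ∪ kr (M - b • 1) := fun i =>
    Module.Basis.ofSpan_subset hs ⟨i, rfl⟩
  have : Fintype _ := FiniteDimensional.fintypeBasisIndex B₀
  let B := B₀.reindex (Fintype.equivFinOfCardEq (n := 3)
    (by rw [← Module.finrank_eq_card_basis B₀]; simp))
  have hB : ∀ i, ∃ t, (t = a ∨ t = b) ∧ M *ᵥ (B i) = t • B i := by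
    intro i
    have : B i ∈ (kr (M - a • 1) : Set (Fin 3 → F)) ∪ kr (M - b • 1) := by
      rw [Module.Basis.reindex_apply]; exact hB₀ _
    rcases this with h | h
    · refine ⟨a, Or.inl rfl, ?_⟩
      rwa [SetLike.mem_coe, mem_kr, Matrix.sub_mulVec, sub_eq_zero, Matrix.smul_mulVec,
        Matrix.one_mulVec] at h
    · refine ⟨b, Or.inr rfl, ?_⟩
      rwa [SetLike.mem_coe, mem_kr, Matrix.sub_mulVec, sub_eq_zero, Matrix.smul_mulVec,
        Matrix.one_mulVec] at h
  choose d hd hMd using hB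
  let P : Matrix (Fin 3) (Fin 3) F := (Matrix.of (fun i => B i))ᵀ
  have hli : LinearIndependent F P.col := B.linearIndependent
  obtain ⟨Q, hQ⟩ := Matrix.linearIndependent_cols_iff_isUnit.1 hli
  refine ⟨Q⁻¹, d, ?_, ?_⟩
  · rcases hd 0 with h0 | h0 <;> rcases hd 1 with h1 | h1 <;> rcases hd 2 with h2 | h2 <;>
    first
    | exact ⟨0, 1, by decide, h0.trans h1.symm⟩
    | exact ⟨0, 2, by decide, h0.trans h2.symm⟩
    | exact ⟨1, 2, by decide, h1.trans h2.symm⟩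
  · have hMP : M * P = P * Matrix.diagonal d := by
      ext i j
      rw [Matrix.mul_diagonal]
      have := congrFun (hMd j) i
      rw [Pi.smul_apply, smul_eq_mul, mul_comm] at this
      exact this
    rw [inv_inv, Units.val_mul, Units.val_mul, hQ, mul_assoc, ← hM, hMP, ← hQ, ← mul_assoc,
      Units.inv_mul, one_mul]

theorem quad {F : Type*} [Field F] (A : GL (Fin 3) F)
    (hs : ¬ Group.IsSolvable ↥(Subgroup.centralizer ({A} : Set (GL (Fin 3) F)))) (a b : F)
    (cA : ∀ g ∈ Subgroup.centralizer ({A} : Set (GL (Fin 3) F)), ∀ t : F,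
      Commute (g : Matrix (Fin 3) (Fin 3) F) ((A : Matrix (Fin 3) (Fin 3) F) - t • 1))
    (h : ((A : Matrix (Fin 3) (Fin 3) F) - a • 1) * ((A : Matrix (Fin 3) (Fin 3) F) - b • 1) = 0) :
    ∃ (S : GL (Fin 3) F) (d : Fin 3 → F),
      (∃ i j : Fin 3, i ≠ j ∧ d i = d j) ∧
      ((S * A * S⁻¹ : GL (Fin 3) F) : Matrix (Fin 3) (Fin 3) F) = Matrix.diagonal d := by
  by_cases hab : a = b
  · subst hab
    by_cases h0 : (A : Matrix (Fin 3) (Fin 3) F) - a • 1 = 0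
    · refine ⟨1, fun _ => a, ⟨0, 1, by decide, rfl⟩, ?_⟩
      rw [one_mul, inv_one, mul_one, sub_eq_zero.1 h0, Matrix.smul_one_eq_diagonal]
    · exact absurd (nilp _ _ h h0 fun g hg => cA g hg a) hs
  · exact diag A a b hab h

end CentAux

/-- If `F` is algebraically closed and the centralizer of
`A ∈ GL(3,F)` in `GL(3,F)` is not solvable, then `A` is diagonalizable with a
repeated eigenvalue: some conjugate of `A` is a diagonal matrix with nonzero,
not pairwise distinct diagonal entries. -/
theorem centralizer_not_solvable_diagonalizable_repeated_eigenvalue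
    (F : Type*) [Field F] [IsAlgClosed F] (A : GL (Fin 3) F)
    (h : ¬ IsSolvable ↥(Subgroup.centralizer ({A} : Set (GL (Fin 3) F)))) :
    ∃ (S : GL (Fin 3) F) (d : Fin 3 → F),
      (∀ i, d i ≠ 0) ∧ (∃ i j : Fin 3, i ≠ j ∧ d i = d j) ∧
      ((S * A * S⁻¹ : GL (Fin 3) F) : Matrix (Fin 3) (Fin 3) F) = Matrix.diagonal d := by
  suffices hh : ∃ (S : GL (Fin 3) F) (d : Fin 3 → F),
      (∃ i j : Fin 3, i ≠ j ∧ d i = d j) ∧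
      ((S * A * S⁻¹ : GL (Fin 3) F) : Matrix (Fin 3) (Fin 3) F) = Matrix.diagonal d by
    obtain ⟨S, d, h1, h2⟩ := hh
    refine ⟨S, d, ?_, h1, h2⟩
    have hu : IsUnit (Matrix.diagonal d) := h2 ▸ (S * A * S⁻¹).isUnit
    rw [Matrix.isUnit_diagonal, Pi.isUnit_iff] at hu
    exact fun i => (hu i).ne_zero
  have cA : ∀ g ∈ Subgroup.centralizer ({A} : Set (GL (Fin 3) F)), ∀ t : F,
      Commute (g : Matrix (Fin 3) (Fin 3) F) ((A : Matrix (Fin 3) (Fin 3) F) - t • 1) := by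
    intro g hg t
    have hc : Commute (g : Matrix (Fin 3) (Fin 3) F) (A : Matrix (Fin 3) (Fin 3) F) :=
      congrArg Units.val (Subgroup.mem_centralizer_singleton_iff.1 hg)
    exact hc.sub_right ((Commute.one_right _).smul_right t)
  have hcomm : ∀ s t : F, Commute ((A : Matrix (Fin 3) (Fin 3) F) - s • 1)
      ((A : Matrix (Fin 3) (Fin 3) F) - t • 1) := by
    intro s t
    exact ((Commute.refl _).sub_left ((Commute.one_left _).smul_left s)).sub_right
      ((Commute.one_right _).smul_right t)
  have hroots : ∃ a b c : F, ((A : Matrix (Fin 3) (Fin 3) F) - a • 1) *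
      ((A : Matrix (Fin 3) (Fin 3) F) - b • 1) * ((A : Matrix (Fin 3) (Fin 3) F) - c • 1) = 0 := by
    set M : Matrix (Fin 3) (Fin 3) F := (A : Matrix (Fin 3) (Fin 3) F)
    have hsp := IsAlgClosed.splits M.charpoly
    have hp := hsp.eq_prod_roots_of_monic M.charpoly_monic
    have hcard : M.charpoly.roots.card = 3 := by
      rw [← hsp.natDegree_eq_card_roots, Matrix.charpoly_natDegree_eq_dim, Fintype.card_fin]
    obtain ⟨a, b, c, habc⟩ := Multiset.card_eq_three.1 hcard
    refine ⟨a, b, c, ?_⟩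
    have := M.aeval_self_charpoly
    rw [hp, habc] at this
    simpa [Algebra.algebraMap_eq_smul_one, mul_assoc] using this
  obtain ⟨a, b, c, habc⟩ := hroots
  by_cases h1 : ((A : Matrix (Fin 3) (Fin 3) F) - a • 1) *
      ((A : Matrix (Fin 3) (Fin 3) F) - b • 1) = 0
  · exact CentAux.quad A h a b cA h1
  by_cases h2 : ((A : Matrix (Fin 3) (Fin 3) F) - a • 1) *
      ((A : Matrix (Fin 3) (Fin 3) F) - c • 1) = 0
  · exact CentAux.quad A h a c cA h2
  by_cases h3 : ((A : Matrix (Fin 3) (Fin 3) F) - b • 1) *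
      ((A : Matrix (Fin 3) (Fin 3) F) - c • 1) = 0
  · exact CentAux.quad A h b c cA h3
  exact absurd (CentAux.cubic _ _ _ _ habc (hcomm a b) h1 h2 h3 (fun g hg => cA g hg a)
    (fun g hg => cA g hg b)) h
end

section
/- Let F be an algebraically closed field, let G be a group and ρ : G → GL(3,F) an injective group homomorphism. Suppose A, B ∈ G commute, the centralizers C_G(A) and C_G(B) are both proper subgroups of G, both are not solvable, and C_G(A) ≠ C_G(B). Then there exists S ∈ GL(3,F) and nonzero scalars λ ≠ μ and x ≠ y in F such that S·ρ(A)·S⁻¹ is the diagonal matrix diag(λ, λ, μ) and S·ρ(B)·S⁻¹ is the diagonal matrix diag(x, y, x). -/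
open scoped MatrixGroups


theorem aux_solv {G : Type*} [Group G] (K L : Subgroup G) (hKL : ∀ g ∈ K, ∀ h ∈ K, g * h * g⁻¹ * h⁻¹ ∈ L)
    [hL : Group.IsSolvable L] : Group.IsSolvable K := by
  have h1 : commutator K ≤ L.subgroupOf K := by
    rw [commutator_def, Subgroup.commutator_le]
    rintro ⟨g, hg⟩ - ⟨h, hh⟩ -
    exact hKL g hg h hh
  have h2 : Group.IsSolvable (L.subgroupOf K) := by
    let f : (L.subgroupOf K) →* L := 
      ((K.subtype).comp (L.subgroupOf K).subtype).codRestrict L (fun x => x.2)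
    apply Group.isSolvable_of_isSolvable_injective (f := f)
    intro x y hxy
    have := congrArg Subtype.val hxy
    exact Subtype.ext (Subtype.ext this)
  refine Group.isSolvable_of_ker_le_range (L.subgroupOf K).subtype (Abelianization.of (G := K)) ?_
  rw [Abelianization.ker_of, Subgroup.range_subtype]
  exact h1

section AuxLemmas

variable {F : Type*} [Field F]

/-- upper triangular -/
def auxT (F : Type*) [Field F] : Subgroup (GL (Fin 3) F) where
  carrier := {g | g.1 1 0 = 0 ∧ g.1 2 0 = 0 ∧ g.1 2 1 = 0}
  one_mem' := by simp
  mul_mem' := by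
    rintro a b ⟨h1, h2, h3⟩ ⟨k1, k2, k3⟩
    simp [Matrix.mul_apply, Fin.sum_univ_three, h1, h2, h3, k1, k2, k3]
  inv_mem' := by
    rintro a ⟨h1, h2, h3⟩
    have h := a.inv_mul
    have d := congrFun₂ h
    simp only [Matrix.mul_apply, Fin.sum_univ_three] at d
    have := d 0 0; have := d 0 1; have := d 0 2
    have := d 1 0; have := d 1 1; have := d 1 2
    have := d 2 0; have := d 2 1; have := d 2 2
    have e := congrFun₂ a.mul_inv
    simp only [Matrix.mul_apply, Fin.sum_univ_three] at e
    have e0 := e 0 0; have e1 := e 1 1; have e2 := e 2 2; have e22 := e 2 1; have e21 := e 2 0; have e10:= e 1 0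
    simp only [Matrix.one_apply, Set.mem_ofPred_eq] at *
    simp at *
    simp only [h1,h2,h3] at *
    have x2 : a.1 2 2 ≠ 0 := by rintro h; simp [h] at *
    have y1 : (↑a:Matrix (Fin 3) (Fin 3) F)⁻¹ 2 0 = 0 := by simp at e21; tauto
    have y2 : (↑a:Matrix (Fin 3) (Fin 3) F)⁻¹ 2 1 = 0 := by simp at e22; tauto
    simp [y1,y2] at *
    have x2 : a.1 1 1 ≠ 0 := by rintro h; simp [h] at *
    tauto

theorem auxT_def (g : GL (Fin 3) F) : g ∈ auxT F ↔ g.1 1 0 = 0 ∧ g.1 2 0 = 0 ∧ g.1 2 1 = 0 := Iff.rfl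

/-- unitriangular -/
def auxU (F : Type*) [Field F] : Subgroup (GL (Fin 3) F) where
  carrier := {g | g ∈ auxT F ∧ g.1 0 0 = 1 ∧ g.1 1 1 = 1 ∧ g.1 2 2 = 1}
  one_mem' := ⟨one_mem _, by simp⟩
  mul_mem' := by
    rintro a b ⟨h, h1, h2, h3⟩ ⟨k, k1, k2, k3⟩
    refine ⟨mul_mem h k, ?_⟩
    rw [auxT_def] at h k
    simp [Matrix.mul_apply, Fin.sum_univ_three, h1, h2, h3, k1, k2, k3, h, k]
  inv_mem' := by
    rintro a ⟨h, h1, h2, h3⟩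
    have k := inv_mem h
    refine ⟨k, ?_⟩
    rw [auxT_def] at h k
    have e := congrFun₂ a.mul_inv
    have e0 := e 0 0; have e1 := e 1 1; have e2 := e 2 2
    simp only [Matrix.mul_apply, Fin.sum_univ_three, h, k, h1, h2, h3] at e0 e1 e2
    simp at e0 e1 e2 ⊢
    tauto

theorem auxU_def (g : GL (Fin 3) F) : g ∈ auxU F ↔ g ∈ auxT F ∧ g.1 0 0 = 1 ∧ g.1 1 1 = 1 ∧ g.1 2 2 = 1 := Iff.rfl

/-- center of the unitriangular group -/
def auxZ (F : Type*) [Field F] : Subgroup (GL (Fin 3) F) where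
  carrier := {g | g ∈ auxU F ∧ g.1 0 1 = 0 ∧ g.1 1 2 = 0}
  one_mem' := ⟨one_mem _, by simp⟩
  mul_mem' := by
    rintro a b ⟨h, h1, h2⟩ ⟨k, k1, k2⟩
    refine ⟨mul_mem h k, ?_⟩
    rw [auxU_def, auxT_def] at h k
    simp [Matrix.mul_apply, Fin.sum_univ_three, h1, h2, k1, k2, h, k]
  inv_mem' := by
    rintro a ⟨h, h1, h2⟩
    have k := inv_mem h
    refine ⟨k, ?_⟩
    rw [auxU_def, auxT_def] at h k
    have e := congrFun₂ a.mul_inv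
    have e0 := e 0 1; have e1 := e 1 2
    simp only [Matrix.mul_apply, Fin.sum_univ_three, h, k, h1, h2] at e0 e1
    simp at e0 e1 ⊢
    tauto

theorem auxZ_def (g : GL (Fin 3) F) : g ∈ auxZ F ↔ g ∈ auxU F ∧ g.1 0 1 = 0 ∧ g.1 1 2 = 0 := Iff.rfl

theorem auxZ_solv : Group.IsSolvable (auxZ F) := by
  apply aux_solv (auxZ F) ⊥
  intro g hg h hh
  rw [Subgroup.mem_bot, mul_inv_eq_one, mul_inv_eq_iff_eq_mul]
  rw [auxZ_def, auxU_def, auxT_def] at hg hh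
  ext i j
  fin_cases i <;> fin_cases j <;> 
    simp [Matrix.mul_apply, Fin.sum_univ_three, hg, hh, add_comm]

theorem auxU_solv : Group.IsSolvable (auxU F) := by
  have := auxZ_solv (F := F)
  apply aux_solv (auxU F) (auxZ F)
  intro g hg h hh
  have hc : g * h * g⁻¹ * h⁻¹ ∈ auxU F := mul_mem (mul_mem (mul_mem hg hh) (inv_mem hg)) (inv_mem hh)
  have e : (g * h * g⁻¹ * h⁻¹) * (h * g) = g * h := by group
  generalize g * h * g⁻¹ * h⁻¹ = c at *
  refine ⟨hc, ?_⟩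
  rw [auxU_def, auxT_def] at hg hh hc
  have e := congrFun₂ (congrArg (fun z : GL (Fin 3) F => z.1) e)
  have e0 := e 0 1; have e1 := e 1 2
  simp [Matrix.mul_apply, Fin.sum_univ_three, hg, hh, hc] at e0 e1
  constructor
  · linear_combination e0
  · linear_combination e1

theorem auxT_diag (g : GL (Fin 3) F) (hg : g ∈ auxT F) : g.1 0 0 ≠ 0 ∧ g.1 1 1 ≠ 0 ∧ g.1 2 2 ≠ 0 := by
  have k := inv_mem hg
  rw [auxT_def] at hg k
  have e := congrFun₂ g.mul_inv
  have e0 := e 0 0; have e1 := e 1 1; have e2 := e 2 2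
  simp only [Matrix.mul_apply, Fin.sum_univ_three, hg, k] at e0 e1 e2
  refine ⟨?_, ?_, ?_⟩ <;> intro h <;> simp [h] at e0 e1 e2

theorem auxT_solv : Group.IsSolvable (auxT F) := by
  have := auxU_solv (F := F)
  apply aux_solv (auxT F) (auxU F)
  intro g hg h hh
  have hc : g * h * g⁻¹ * h⁻¹ ∈ auxT F := mul_mem (mul_mem (mul_mem hg hh) (inv_mem hg)) (inv_mem hh)
  have e : (g * h * g⁻¹ * h⁻¹) * (h * g) = g * h := by group
  generalize g * h * g⁻¹ * h⁻¹ = c at *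
  refine ⟨hc, ?_⟩
  obtain ⟨g0, g1, g2⟩ := auxT_diag g hg
  obtain ⟨h0, h1, h2⟩ := auxT_diag h hh
  rw [auxT_def] at hg hh hc
  have e := congrFun₂ (congrArg (fun z : GL (Fin 3) F => z.1) e)
  have e0 := e 0 0; have e1 := e 1 1; have e2 := e 2 2
  simp [Matrix.mul_apply, Fin.sum_univ_three, hg, hh, hc] at e0 e1 e2
  refine ⟨?_, ?_, ?_⟩
  · apply mul_right_cancel₀ (mul_ne_zero g0 h0); linear_combination e0
  · apply mul_right_cancel₀ (mul_ne_zero g1 h1); linear_combination e1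
  · apply mul_right_cancel₀ (mul_ne_zero g2 h2); linear_combination e2

/-- a matrix from a basis -/
theorem aux_basis (e : Fin 3 → Fin 3 → F) (he : LinearIndependent F e) :
    ∃ P : GL (Fin 3) F, ∀ i j, P.1 i j = e j i := by
  have : IsUnit (Matrix.of e) := Matrix.linearIndependent_rows_iff_isUnit.1 he
  have h2 : IsUnit (Matrix.of e).transpose := (Matrix.isUnit_transpose _).2 this
  exact ⟨h2.unit, fun i j => rfl⟩

theorem aux_col (g P : GL (Fin 3) F) (e : Fin 3 → Fin 3 → F) (hP : ∀ i j, P.1 i j = e j i)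
   (i : Fin 3) (c : Fin 3 → F) (h : g.1.mulVec (e i) = ∑ j, c j • e j) (k : Fin 3) :
   (P⁻¹ * g * P).1 k i = c k := by
  have h1 : P.1.mulVec (Pi.single i 1) = e i := by
    ext j; simp [hP]
  have h2 : P.1.mulVec c = ∑ j, c j • e j := by
    ext j; simp [Matrix.mulVec, dotProduct, hP, mul_comm]
  have h3 : (P⁻¹ * g * P).1.mulVec (Pi.single i 1) = c := by
    simp only [Units.val_mul]
    rw [← Matrix.mulVec_mulVec, h1, ← Matrix.mulVec_mulVec, h, ← h2, Matrix.mulVec_mulVec,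
      P.inv_mul, Matrix.one_mulVec]
  have := congrFun h3 k
  rw [← this]; simp

theorem aux_flag {K : Type*} [Group K] (φ : K →* GL (Fin 3) F) (hφ : Function.Injective φ)
    (W₁ W₂ : Submodule F (Fin 3 → F)) (hW : W₁ ≤ W₂) (e : Fin 3 → Fin 3 → F)
    (h0 : e 0 ∈ W₁) (h0' : e 0 ≠ 0) (h1 : e 1 ∈ W₂) (h1' : e 1 ∉ W₁) (h2 : e 2 ∉ W₂)
    (i1 : ∀ k, ∀ v ∈ W₁, (φ k).1.mulVec v ∈ W₁)
    (i2 : ∀ k, ∀ v ∈ W₂, (φ k).1.mulVec v ∈ W₂) : Group.IsSolvable K := by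
  have c2 : ∀ c : Fin 3 → F, ∑ j, c j • e j ∈ W₂ → c 2 = 0 := by
    intro c hc
    by_contra h
    apply h2
    rw [Fin.sum_univ_three] at hc
    rw [Submodule.add_mem_iff_right _ (add_mem (W₂.smul_mem _ (hW h0)) (W₂.smul_mem _ h1))] at hc
    exact (Submodule.smul_mem_iff _ h).1 hc
  have c1 : ∀ c : Fin 3 → F, ∑ j, c j • e j ∈ W₁ → c 1 = 0 := by
    intro c hc
    by_contra h
    apply h1'
    have := c2 c (hW hc)
    rw [Fin.sum_univ_three, this, zero_smul, add_zero] at hc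
    rw [Submodule.add_mem_iff_right _ (W₁.smul_mem _ (h0))] at hc
    exact (Submodule.smul_mem_iff _ h).1 hc
  have li : LinearIndependent F e := by
    rw [Fintype.linearIndependent_iff]
    intro c hc
    have a2 := c2 c (by rw [hc]; exact zero_mem _)
    have a1 := c1 c (by rw [hc]; exact zero_mem _)
    rw [Fin.sum_univ_three, a1, a2] at hc
    simp [h0'] at hc
    intro i; fin_cases i <;> assumption
  obtain ⟨P, hP⟩ := aux_basis e li
  have ex : ∀ v : Fin 3 → F, ∃ c : Fin 3 → F, v = ∑ j, c j • e j := by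
    intro v
    refine ⟨(P⁻¹).1.mulVec v, ?_⟩
    have h2 : P.1.mulVec ((P⁻¹).1.mulVec v) = ∑ j, ((P⁻¹).1.mulVec v) j • e j := by
      ext j; simp only [Matrix.mulVec, dotProduct, hP, mul_comm, Finset.sum_apply, Pi.smul_apply, smul_eq_mul]
    rw [← h2, Matrix.mulVec_mulVec, P.mul_inv, Matrix.one_mulVec]
  have key : ∀ k, P⁻¹ * φ k * P ∈ auxT F := by
    intro k
    obtain ⟨c, hc⟩ := ex ((φ k).1.mulVec (e 0))
    obtain ⟨d, hd⟩ := ex ((φ k).1.mulVec (e 1))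
    have m0 := i1 k _ h0
    have m1 := i2 k _ h1
    rw [hc] at m0
    rw [hd] at m1
    rw [auxT_def, aux_col _ P e hP 0 c hc, aux_col _ P e hP 0 c hc, aux_col _ P e hP 1 d hd]
    exact ⟨c1 c m0, c2 c (hW m0), c2 d m1⟩
  have := auxT_solv (F := F)
  let f : K →* auxT F := 
    { toFun := fun k => ⟨P⁻¹ * φ k * P, key k⟩
      map_one' := by ext1; simp
      map_mul' := fun x y => by ext1; simp [mul_assoc] }
  apply Group.isSolvable_of_isSolvable_injective (f := f)
  intro x y hxy
  have := congrArg Subtype.val hxy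
  apply hφ
  simpa [f] using this

theorem aux_ne {M : Matrix (Fin 3) (Fin 3) F} (h : M ≠ 0) : ∃ v, M.mulVec v ≠ 0 := by
  by_contra! hc
  apply h
  apply Matrix.mulVec_injective
  funext v
  simp [hc]

theorem aux_cubic [IsAlgClosed F] (a : Matrix (Fin 3) (Fin 3) F) :
    ∃ l m n : F, (a - l • 1) * (a - m • 1) * (a - n • 1) = 0 := by
  have hs := IsAlgClosed.splits a.charpoly
  have hd : a.charpoly.roots.card = 3 := by
    rw [← hs.natDegree_eq_card_roots, Matrix.charpoly_natDegree_eq_dim]; simp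
  obtain ⟨l, m, n, h⟩ := Multiset.card_eq_three.1 hd
  have hp := hs.eq_prod_roots_of_monic a.charpoly_monic
  have h0 := a.aeval_self_charpoly
  rw [hp, h] at h0
  refine ⟨l, m, n, ?_⟩
  simp [Algebra.algebraMap_eq_smul_one] at h0
  rw [mul_assoc]; exact h0

theorem aux_rank {M : Matrix (Fin 3) (Fin 3) F} (h : M.rank ≤ 1) :
    ∃ u f : Fin 3 → F, M = Matrix.vecMulVec u f := by
  obtain ⟨⟨u, hu⟩, h⟩ := finrank_le_one_iff.1 h
  have : ∀ j, ∃ c : F, c • u = M.col j := by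
    intro j
    obtain ⟨c, hc⟩ := h ⟨M.col j, ⟨Pi.single j 1, by simp⟩⟩
    exact ⟨c, congrArg Subtype.val hc⟩
  choose f hf using this
  refine ⟨u, f, ?_⟩
  ext i j
  have := congrFun (hf j) i
  simp [Matrix.vecMulVec_apply] at this ⊢
  rw [← this, mul_comm]

theorem aux_kerinv {M k : Matrix (Fin 3) (Fin 3) F} (h : k * M = M * k) :
    ∀ v ∈ LinearMap.ker M.mulVecLin, k.mulVec v ∈ LinearMap.ker M.mulVecLin := by
  intro v hv
  simp only [LinearMap.mem_ker, Matrix.mulVecLin_apply] at *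
  rw [Matrix.mulVec_mulVec, ← h, ← Matrix.mulVec_mulVec, hv, Matrix.mulVec_zero]

theorem aux_rangeinv {M k : Matrix (Fin 3) (Fin 3) F} (h : k * M = M * k) :
    ∀ v ∈ LinearMap.range M.mulVecLin, k.mulVec v ∈ LinearMap.range M.mulVecLin := by
  rintro _ ⟨v, rfl⟩
  refine ⟨k.mulVec v, ?_⟩
  simp only [Matrix.mulVecLin_apply, Matrix.mulVec_mulVec, h]

theorem aux_form [IsAlgClosed F] {K : Type*} [Group K] (φ : K →* GL (Fin 3) F)
    (hφ : Function.Injective φ) (a : Matrix (Fin 3) (Fin 3) F)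
    (hc : ∀ k, (φ k).1 * a = a * (φ k).1) (hns : ∀ c : F, a ≠ c • 1)
    (hsol : ¬ Group.IsSolvable K) :
    ∃ (l : F) (u f : Fin 3 → F), f ⬝ᵥ u ≠ 0 ∧ a = l • 1 + Matrix.vecMulVec u f := by
  have hcl : ∀ k (l : F), (φ k).1 * (a - l • 1) = (a - l • 1) * (φ k).1 := by
    intro k l
    simp [mul_sub, sub_mul, hc]
  have rn : ∀ M : Matrix (Fin 3) (Fin 3) F, 
      M.rank + Module.finrank F (LinearMap.ker M.mulVecLin) = 3 := by
    intro M
    have := M.mulVecLin.finrank_range_add_finrank_ker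
    rw [Module.finrank_fin_fun] at this
    exact this
  by_cases hr : ∃ l : F, (a - l • 1).rank ≤ 1
  · obtain ⟨l, hl⟩ := hr
    obtain ⟨u, f, huf⟩ := aux_rank hl
    refine ⟨l, u, f, ?_, by rw [← huf]; simp⟩
    intro hfu
    apply hsol
    have hcN := fun k => hcl k l
    have hN0 : a - l • 1 ≠ 0 := sub_ne_zero.2 (hns l)
    have hN2 : (a - l • 1) * (a - l • 1) = 0 := by
      rw [huf, Matrix.vecMulVec_mul_vecMulVec, hfu]; simp
    generalize a - l • 1 = N at *
    obtain ⟨v, hv⟩ := aux_ne hN0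
    have hle : LinearMap.range N.mulVecLin ≤ LinearMap.ker N.mulVecLin := by
      rintro _ ⟨v, rfl⟩
      simp [Matrix.mulVec_mulVec, hN2]
    have : ¬ LinearMap.ker N.mulVecLin ≤ LinearMap.range N.mulVecLin := by
      intro h
      have h1 := Submodule.finrank_mono h
      have h2 := rn N
      have h3 : Module.finrank F (LinearMap.range N.mulVecLin) = N.rank := rfl
      omega
    obtain ⟨e, he, he'⟩ := SetLike.not_le_iff_exists.1 this
    exact aux_flag φ hφ (LinearMap.range N.mulVecLin) (LinearMap.ker N.mulVecLin) hle
      ![N.mulVec v, e, v] ⟨v, rfl⟩ hv he he' hv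
      (fun k => aux_rangeinv (hcN k)) (fun k => aux_kerinv (hcN k))
  · push Not at hr
    exfalso
    apply hsol
    have hp : ∀ l m : F, (a - l • 1) * (a - m • 1) ≠ 0 := by
      intro l m h
      have h1 : LinearMap.range (a - m • 1).mulVecLin ≤ LinearMap.ker (a - l • 1).mulVecLin := by
        rintro _ ⟨v, rfl⟩
        simp only [LinearMap.mem_ker, Matrix.mulVecLin_apply, Matrix.mulVec_mulVec, h, Matrix.zero_mulVec]
      have h1 := Submodule.finrank_mono h1
      have h2 := rn (a - l • 1)
      have h3 : Module.finrank F (LinearMap.range (a - m • 1).mulVecLin) = (a - m • 1).rank := rfl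
      have := hr l
      have := hr m
      omega
    obtain ⟨l, m, n, h⟩ := aux_cubic a
    have cm : ∀ l m : F, (a - l • 1) * (a - m • 1) = (a - m • 1) * (a - l • 1) := by
      intro l m
      simp only [mul_sub, sub_mul, smul_mul_assoc, mul_smul_comm, one_mul, mul_one]
      module
    have q1 := hp m n
    have q2 := hp l n
    have q3 := hp l m
    have c1 := fun k => hcl k l
    have c2 := fun k => hcl k m
    have hlm := cm l m
    generalize a - l • 1 = L at *
    generalize a - m • 1 = M at *
    generalize a - n • 1 = N at *
    obtain ⟨v1, h1⟩ := aux_ne q1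
    obtain ⟨v2, h2⟩ := aux_ne q2
    obtain ⟨v3, h3⟩ := aux_ne q3
    refine aux_flag φ hφ (LinearMap.ker L.mulVecLin) (LinearMap.ker (L * M).mulVecLin) ?_
      ![(M * N).mulVec v1, N.mulVec v2, v3] ?_ h1 ?_ ?_ h3
      (fun k => aux_kerinv (c1 k)) (fun k => aux_kerinv ?_)
    · intro v hv
      simp only [LinearMap.mem_ker, Matrix.mulVecLin_apply] at *
      rw [hlm, ← Matrix.mulVec_mulVec, hv, Matrix.mulVec_zero]
    · simp [Matrix.mulVec_mulVec, ← mul_assoc, h]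
    · simp [Matrix.mulVec_mulVec, ← mul_assoc, h]
    · simpa [Matrix.mulVec_mulVec] using h2
    · rw [← mul_assoc, c1, mul_assoc, c2, mul_assoc]

theorem aux_conj (g P : GL (Fin 3) F) (e : Fin 3 → Fin 3 → F) (hP : ∀ i j, P.1 i j = e j i)
    (d : Fin 3 → F) (h : ∀ i, g.1.mulVec (e i) = d i • e i) :
    ((P⁻¹ * g * P⁻¹⁻¹ : GL (Fin 3) F) : Matrix (Fin 3) (Fin 3) F) = Matrix.diagonal d ∧ 
      ∀ i, d i ≠ 0 := by
  have h1 : ((P⁻¹ * g * P⁻¹⁻¹ : GL (Fin 3) F) : Matrix (Fin 3) (Fin 3) F) = Matrix.diagonal d := by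
    rw [inv_inv]
    ext k i
    rw [aux_col g P e hP i (Pi.single i (d i))]
    · rcases eq_or_ne k i with rfl | hk
      · simp
      · simp [hk]
    · rw [h i, Finset.sum_eq_single i]
      · simp
      · intro b _ hb; simp [hb]
      · simp
  refine ⟨h1, ?_⟩
  have h2 : IsUnit (Matrix.diagonal d).det := by
    rw [← h1]
    exact (Matrix.isUnit_iff_isUnit_det _).1 (Units.isUnit _)
  rw [Matrix.det_diagonal, isUnit_iff_ne_zero, Finset.prod_ne_zero_iff] at h2
  exact fun i => h2 i (Finset.mem_univ _)

theorem aux_par {u f v g : Fin 3 → F} (hf : f ⬝ᵥ u ≠ 0) (hg : g ⬝ᵥ v ≠ 0) (hfv : f ⬝ᵥ v ≠ 0)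
    (h : Matrix.vecMulVec u f * Matrix.vecMulVec v g = Matrix.vecMulVec v g * Matrix.vecMulVec u f) :
    ∃ c : F, c ≠ 0 ∧ Matrix.vecMulVec v g = c • Matrix.vecMulVec u f := by
  have h' : ∀ i j, (f ⬝ᵥ v) * (u i * g j) = (g ⬝ᵥ u) * (v i * f j) := by
    intro i j
    have := congrFun₂ h i j
    simp [Matrix.vecMulVec_mul_vecMulVec, Matrix.vecMulVec_apply] at this
    linear_combination this
  have nz : ∀ {w z : Fin 3 → F}, w ⬝ᵥ z ≠ 0 → ∃ i, w i ≠ 0 := by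
    intro w z hw
    by_contra! hc
    exact hw (by simp [dotProduct, hc])
  obtain ⟨j, hj⟩ := nz hf
  obtain ⟨k, hk⟩ := nz (w := u) (z := f) (by rwa [dotProduct_comm] at hf)
  obtain ⟨p, hp⟩ := nz hg
  obtain ⟨q, hq⟩ := nz (w := v) (z := g) (by rwa [dotProduct_comm] at hg)
  have hgu : g ⬝ᵥ u ≠ 0 := by
    intro h0
    have := h' k p
    rw [h0, zero_mul] at this
    simp [hfv, hk, hp] at this
  have h1 : ∀ i m, v i * g m = (g j * v k / (f j * u k)) * (u i * f m) := by
    intro i m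
    have a1 := h' i j
    have a2 := h' k m
    field_simp
    apply mul_left_cancel₀ (mul_ne_zero hfv hgu)
    linear_combination -(g m * u k * (f ⬝ᵥ v)) * a1 + (f ⬝ᵥ v) * (u i * g j) * a2
  refine ⟨g j * v k / (f j * u k), ?_, ?_⟩
  · intro h0
    have := h1 q p
    rw [h0, zero_mul] at this
    simp [hp, hq] at this
  · ext i m
    simpa [Matrix.vecMulVec_apply] using h1 i m

theorem aux_mv (l : F) (u f w : Fin 3 → F) :
    (l • (1 : Matrix (Fin 3) (Fin 3) F) + Matrix.vecMulVec u f).mulVec w = l • w + (f ⬝ᵥ w) • u := by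
  ext i
  simp [Matrix.add_mulVec, Matrix.smul_mulVec, Matrix.vecMulVec_mulVec, mul_comm]

theorem aux_mv0 (u f w : Fin 3 → F) :
    (Matrix.vecMulVec u f).mulVec w = (f ⬝ᵥ w) • u := by
  simpa using aux_mv 0 u f w

theorem aux_elt [IsAlgClosed F] {G : Type*} [Group G] (ρ : G →* GL (Fin 3) F)
    (hρ : Function.Injective ρ) (A : G)
    (hAproper : Subgroup.centralizer ({A} : Set G) ≠ ⊤)
    (hAsol : ¬ Group.IsSolvable ↥(Subgroup.centralizer ({A} : Set G))) :
    ∃ (l : F) (u f : Fin 3 → F), f ⬝ᵥ u ≠ 0 ∧ (ρ A).1 = l • 1 + Matrix.vecMulVec u f := by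
  refine aux_form (ρ.comp (Subgroup.centralizer {A}).subtype)
    (hρ.comp (Subgroup.subtype_injective _)) _ ?_ ?_ hAsol
  · rintro ⟨k, hk⟩
    rw [Subgroup.mem_centralizer_singleton_iff] at hk
    have := congrArg (fun x => (ρ x).1) hk
    simp only [map_mul, Units.val_mul] at this
    exact this
  · intro c hc
    apply hAproper
    rw [eq_top_iff]
    intro k _
    rw [Subgroup.mem_centralizer_singleton_iff]
    apply hρ
    apply Units.ext
    simp [hc]

theorem aux_cent {G : Type*} [Group G] (ρ : G →* GL (Fin 3) F)
    (hρ : Function.Injective ρ) (A B : G) (l c : F) 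
    (h : (ρ B).1 = l • 1 + c • (ρ A).1) :
    Subgroup.centralizer ({A} : Set G) ≤ Subgroup.centralizer ({B} : Set G) := by
  intro k hk
  rw [Subgroup.mem_centralizer_singleton_iff] at *
  have := congrArg (fun x => (ρ x).1) hk
  simp only [map_mul, Units.val_mul] at this
  apply hρ
  apply Units.ext
  simp only [map_mul, Units.val_mul]
  rw [h]
  simp [mul_add, add_mul, this]



end AuxLemmas

/-- If a group `G` embeds in `GL(3,F)` for `F` algebraically
closed, and `A, B ∈ G` commute, have proper, non-solvable and distinct
centralizers, then after a simultaneous conjugation `ρ(A) = diag(λ,λ,μ)` and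
`ρ(B) = diag(x,y,x)` with `λ ≠ μ`, `x ≠ y` nonzero. -/
theorem commuting_nonsolvable_centralizers_simultaneous_diag
    (F : Type*) [Field F] [IsAlgClosed F]
    (G : Type*) [Group G] (ρ : G →* GL (Fin 3) F) (hρ : Function.Injective ρ)
    (A B : G) (hAB : Commute A B)
    (hAproper : Subgroup.centralizer ({A} : Set G) ≠ ⊤)
    (hBproper : Subgroup.centralizer ({B} : Set G) ≠ ⊤)
    (hAsol : ¬ IsSolvable ↥(Subgroup.centralizer ({A} : Set G)))
    (hBsol : ¬ IsSolvable ↥(Subgroup.centralizer ({B} : Set G)))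
    (hne : Subgroup.centralizer ({A} : Set G) ≠ Subgroup.centralizer ({B} : Set G)) :
    ∃ (S : GL (Fin 3) F) (lam mu x y : F),
      lam ≠ 0 ∧ mu ≠ 0 ∧ x ≠ 0 ∧ y ≠ 0 ∧ lam ≠ mu ∧ x ≠ y ∧
      ((S * ρ A * S⁻¹ : GL (Fin 3) F) : Matrix (Fin 3) (Fin 3) F)
        = Matrix.diagonal ![lam, lam, mu] ∧
      ((S * ρ B * S⁻¹ : GL (Fin 3) F) : Matrix (Fin 3) (Fin 3) F)
        = Matrix.diagonal ![x, y, x] := by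
  obtain ⟨l, u, f, hfu, ha⟩ := aux_elt ρ hρ A hAproper hAsol
  obtain ⟨x, v, g, hgv, hb⟩ := aux_elt ρ hρ B hBproper hBsol
  have hcomm : Matrix.vecMulVec u f * Matrix.vecMulVec v g
      = Matrix.vecMulVec v g * Matrix.vecMulVec u f := by
    have h := congrArg (fun z => (ρ z).1) hAB.eq
    simp only [map_mul, Units.val_mul] at h
    rw [ha, hb] at h
    simp only [add_mul, mul_add, smul_mul_assoc, mul_smul_comm, one_mul, mul_one] at h
    have h2 := sub_eq_zero.2 h
    rw [← sub_eq_zero, ← h2]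
    module
  by_cases hfv : f ⬝ᵥ v = 0
  · have hgu : g ⬝ᵥ u = 0 := by
      by_contra hgu
      have h2 := congrArg (fun M => g ⬝ᵥ (M.mulVec u)) hcomm
      simp only [← Matrix.mulVec_mulVec, aux_mv0, Matrix.mulVec_smul, hfv, dotProduct_smul,
        smul_eq_mul, hgu, zero_smul, dotProduct_zero, mul_zero] at h2
      simp [hfu, hgu, hgv] at h2
    obtain ⟨e, he0, he⟩ : ∃ e : Fin 3 → F, e ≠ 0 ∧ (Matrix.of ![f, g, 0]).mulVec e = 0 :=
      Matrix.exists_mulVec_eq_zero_iff.2 (Matrix.det_eq_zero_of_row_eq_zero 2 (by simp))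
    have hfe : f ⬝ᵥ e = 0 := congrFun he 0
    have hge : g ⬝ᵥ e = 0 := congrFun he 1
    have li : LinearIndependent F ![e, v, u] := by
      rw [Fintype.linearIndependent_iff]
      intro c hc
      have k1 := congrArg (fun z => f ⬝ᵥ z) hc
      have k2 := congrArg (fun z => g ⬝ᵥ z) hc
      simp [Fin.sum_univ_three, dotProduct_add, hfe, hge, hfv, hgu, hfu, hgv] at k1 k2
      simp [Fin.sum_univ_three, k1, k2, he0] at hc
      intro i; fin_cases i <;> assumption
    obtain ⟨P, hP⟩ := aux_basis _ li
    obtain ⟨p1, p2⟩ := aux_conj (ρ A) P _ hP ![l, l, l + f ⬝ᵥ u] (by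
      intro i
      rw [ha, aux_mv]
      fin_cases i <;> simp [hfe, hfv, add_smul])
    obtain ⟨q1, q2⟩ := aux_conj (ρ B) P _ hP ![x, x + g ⬝ᵥ v, x] (by
      intro i
      rw [hb, aux_mv]
      fin_cases i <;> simp [hge, hgu, add_smul])
    exact ⟨P⁻¹, l, l + f ⬝ᵥ u, x, x + g ⬝ᵥ v, p2 0, p2 2, q2 0, q2 1, by simpa using hfu,
      by simpa using hgv, p1, q1⟩
  · exfalso
    apply hne
    obtain ⟨c, hc0, hc⟩ := aux_par hfu hgv hfv hcomm
    apply le_antisymm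
    · refine aux_cent ρ hρ A B (x - c * l) c ?_
      rw [ha, hb, hc]
      module
    · refine aux_cent ρ hρ B A (l - c⁻¹ * x) c⁻¹ ?_
      rw [ha, hb, hc, smul_add, smul_smul c⁻¹ c, inv_mul_cancel₀ hc0]
      module
end

section
/- Let G be a group containing elements A, B, C, D such that A commutes with B, B commutes with C, C commutes with D, and D commutes with A. Suppose that the subgroup of G generated by A and C is not solvable and the subgroup of G generated by B and D is not solvable. Then for every field F there is no injective group homomorphism from G into GL(3,F). -/
open scoped MatrixGroups

namespace CommSq

variable {F V Γ : Type*} [Field F] [AddCommGroup V] [Module F V] [Group Γ]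

/-- Elements acting trivially on `U/U'`. -/
def triv (ρ : Γ →* Module.End F V) (U U' : Submodule F V)
    (hU' : ∀ g, ∀ u ∈ U', ρ g u ∈ U') : Subgroup Γ where
  carrier := {g | ∀ u ∈ U, ρ g u - u ∈ U'}
  one_mem' := by
    intro u _
    simp
  mul_mem' := by
    intro g h hg hh u hu
    have h1 := U'.add_mem (hU' g _ (hh u hu)) (hg u hu)
    simpa using h1
  inv_mem' := by
    intro g hg u hu
    have h1 := U'.neg_mem (hU' g⁻¹ _ (hg u hu))
    have h2 : ρ g⁻¹ (ρ g u) = u := by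
      rw [← Module.End.mul_apply, ← map_mul]; simp
    rw [map_sub, h2] at h1
    simpa using h1

open scoped commutatorElement in
lemma comm_le (ρ : Γ →* Module.End F V) (U U' : Submodule F V)
    (hU : ∀ g, ∀ u ∈ U, ρ g u ∈ U)
    (hU' : ∀ g, ∀ u ∈ U', ρ g u ∈ U') (N : Subgroup Γ)
    (h : ∀ g ∈ N, ∀ k ∈ N, ∀ u ∈ U, ρ g (ρ k u) - ρ k (ρ g u) ∈ U') :
    ⁅N, N⁆ ≤ triv ρ U U' hU' := by
  rw [Subgroup.commutator_le]
  intro g hg k hk u hu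
  have h1 := h g hg k hk (ρ (g⁻¹ * k⁻¹) u) (hU _ _ hu)
  simp only [← Module.End.mul_apply, ← map_mul] at h1
  have e1 : g * (k * (g⁻¹ * k⁻¹)) = ⁅g, k⁆ := by rw [commutatorElement_def]; group
  have e2 : k * (g * (g⁻¹ * k⁻¹)) = 1 := by group
  rw [e1, e2] at h1
  simpa using h1

lemma triv_comm (ρ : Γ →* Module.End F V) (U U' U'' : Submodule F V)
    (hU : ∀ g, ∀ u ∈ U, ρ g u ∈ U)
    (hU' : ∀ g, ∀ u ∈ U', ρ g u ∈ U') (hU'' : ∀ g, ∀ u ∈ U'', ρ g u ∈ U'')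
    (N : Subgroup Γ) (h1 : N ≤ triv ρ U U' hU') (h2 : N ≤ triv ρ U' U'' hU'') :
    ⁅N, N⁆ ≤ triv ρ U U'' hU'' := by
  apply comm_le ρ U U'' hU hU''
  intro g hg k hk u hu
  have a := h1 hg u hu
  have b := h1 hk u hu
  have a' := h2 hk _ a
  have b' := h2 hg _ b
  have := U''.sub_mem b' a'
  simp only [map_sub] at this
  convert this using 1
  abel

/-- `f` acts as a scalar on `U/U'`. -/
def Sc (f : Module.End F V) (U U' : Submodule F V) : Prop :=
  ∃ a : F, ∀ u ∈ U, f u - a • u ∈ U'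

lemma Sc.inv {f : Module.End F V} {U U' : Submodule F V} (h : Sc f U U') (hl : U' ≤ U) :
    ∀ u ∈ U, f u ∈ U := by
  obtain ⟨a, ha⟩ := h
  intro u hu
  have := U.add_mem (hl (ha u hu)) (U.smul_mem a hu)
  simpa using this

lemma Sc.comm {f g : Module.End F V} {U U' : Submodule F V} (hf : Sc f U U') (hg : Sc g U U')
    (hf' : ∀ u ∈ U', f u ∈ U') (hg' : ∀ u ∈ U', g u ∈ U') :
    ∀ u ∈ U, f (g u) - g (f u) ∈ U' := by
  obtain ⟨a, ha⟩ := hf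
  obtain ⟨b, hb⟩ := hg
  intro u hu
  have h1 := U'.sub_mem (hf' _ (hb u hu)) (hg' _ (ha u hu))
  have h2 := U'.sub_mem (U'.smul_mem b (ha u hu)) (U'.smul_mem a (hb u hu))
  have h3 := U'.add_mem h1 h2
  convert h3 using 1
  simp only [map_sub, map_smul, smul_sub, smul_smul, mul_comm a b]
  abel

lemma flag_solvable (ρ : Γ →* Module.End F V) (hρ : Function.Injective ρ)
    (L W : Submodule F V) (hLW : L ≤ W)
    (h1 : ∀ g, Sc (ρ g) L ⊥) (h2 : ∀ g, Sc (ρ g) W L) (h3 : ∀ g, Sc (ρ g) ⊤ W) :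
    IsSolvable Γ := by
  have iL := fun g => (h1 g).inv bot_le
  have iW := fun g => (h2 g).inv hLW
  have i0 : ∀ g, ∀ u ∈ (⊥ : Submodule F V), ρ g u ∈ (⊥ : Submodule F V) := by
    intro g u hu
    rw [Submodule.mem_bot] at hu ⊢
    simp [hu]
  have iT : ∀ g, ∀ u ∈ (⊤ : Submodule F V), ρ g u ∈ (⊤ : Submodule F V) := by
    intros; trivial
  refine ⟨3, ?_⟩
  have a1 : derivedSeries Γ 1 ≤ triv ρ L ⊥ i0 :=
    comm_le ρ _ _ iL i0 _ fun g _ k _ => (h1 g).comm (h1 k) (i0 g) (i0 k)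
  have a2 : derivedSeries Γ 1 ≤ triv ρ W L iL :=
    comm_le ρ _ _ iW iL _ fun g _ k _ => (h2 g).comm (h2 k) (iL g) (iL k)
  have a3 : derivedSeries Γ 1 ≤ triv ρ ⊤ W iW :=
    comm_le ρ _ _ iT iW _ fun g _ k _ => (h3 g).comm (h3 k) (iW g) (iW k)
  have b1 : derivedSeries Γ 2 ≤ triv ρ W ⊥ i0 := triv_comm ρ _ _ _ iW iL i0 _ a2 a1
  have b2 : derivedSeries Γ 2 ≤ triv ρ ⊤ W iW :=
    (derivedSeries_antitone Γ (by norm_num : 1 ≤ 2)).trans a3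
  have c : derivedSeries Γ 3 ≤ triv ρ ⊤ ⊥ i0 := triv_comm ρ _ _ _ iT iW i0 _ b2 b1
  rw [eq_bot_iff]
  intro g hg
  rw [Subgroup.mem_bot]
  apply hρ
  ext u
  have := c hg u trivial
  rw [Submodule.mem_bot, sub_eq_zero] at this
  simpa using this

lemma sc_of_finrank [FiniteDimensional F V] (f : Module.End F V) (U U' : Submodule F V)
    (hl : U' ≤ U) (hU : ∀ u ∈ U, f u ∈ U) (hU' : ∀ u ∈ U', f u ∈ U')
    (hd : Module.finrank F U = Module.finrank F U' + 1) : Sc f U U' := by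
  have hlt : U' < U := lt_of_le_of_ne hl (by rintro rfl; omega)
  obtain ⟨v, hv, hv'⟩ := SetLike.exists_of_lt hlt
  have hs : U' ⊔ F ∙ v = U := by
    apply Submodule.eq_of_le_of_finrank_le
    · exact sup_le hl (by simpa [Submodule.span_singleton_le_iff_mem] using hv)
    · have : U' < U' ⊔ F ∙ v := by
        refine lt_of_le_of_ne le_sup_left fun h => hv' ?_
        rw [h]
        exact Submodule.mem_sup_right (Submodule.mem_span_singleton_self v)
      have := Submodule.finrank_lt_finrank_of_lt this
      omega
  have key : ∀ u ∈ U, ∃ w ∈ U', ∃ c : F, w + c • v = u := by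
    intro u hu
    rw [← hs, Submodule.mem_sup] at hu
    obtain ⟨w, hw, z, hz, rfl⟩ := hu
    obtain ⟨c, rfl⟩ := Submodule.mem_span_singleton.1 hz
    exact ⟨w, hw, c, rfl⟩
  obtain ⟨w, hw, a, hwa⟩ := key _ (hU v hv)
  refine ⟨a, fun u hu => ?_⟩
  obtain ⟨x, hx, c, rfl⟩ := key u hu
  have h1 := U'.sub_mem (U'.add_mem (hU' x hx) (U'.smul_mem c hw)) (U'.smul_mem a hx)
  convert h1 using 1
  simp only [map_add, map_smul, ← hwa, smul_add, smul_smul, mul_comm a c]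
  abel

lemma exists_two [FiniteDimensional F V] [IsAlgClosed F] (hV : Module.finrank F V = 3)
    (b : Module.End F V) (hb : ∀ c : F, ∃ v, b v ≠ c • v) :
    ∃ W : Submodule F V, Module.finrank F W = 2 ∧
      ∀ f : Module.End F V, Commute f b → ∀ u ∈ W, f u ∈ W := by
  have : Nontrivial V := Module.nontrivial_of_finrank_pos (R := F) (by omega)
  obtain ⟨c, hc⟩ := Module.End.exists_eigenvalue b
  obtain ⟨v, hv⟩ := hc.exists_hasEigenvector
  set t : Module.End F V := b - c • 1 with ht
  have hcomm : ∀ f : Module.End F V, Commute f b → ∀ u, f (t u) = t (f u) := by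
    intro f hf u
    have := LinearMap.congr_fun hf.eq u
    simp only [Module.End.mul_apply] at this
    simp [ht, this]
  have hrk := LinearMap.finrank_range_add_finrank_ker t
  have hk1 : 0 < Module.finrank F (LinearMap.ker t) := by
    rw [Module.finrank_pos_iff_exists_ne_zero]
    refine ⟨⟨v, ?_⟩, ?_⟩
    · simp [ht, hv.apply_eq_smul]
    · intro h
      exact hv.2 (congrArg Subtype.val h)
  have hr1 : 0 < Module.finrank F (LinearMap.range t) := by
    rw [Module.finrank_pos_iff_exists_ne_zero]
    obtain ⟨w, hw⟩ := hb c
    refine ⟨⟨t w, ⟨w, rfl⟩⟩, ?_⟩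
    intro h
    have h' : t w = 0 := congrArg Subtype.val h
    apply hw
    simpa [ht, sub_eq_zero] using h'
  by_cases h2 : Module.finrank F (LinearMap.ker t) = 2
  · refine ⟨_, h2, fun f hf u hu => ?_⟩
    rw [LinearMap.mem_ker] at hu ⊢
    rw [← hcomm f hf, hu, map_zero]
  · refine ⟨LinearMap.range t, by omega, fun f hf u hu => ?_⟩
    obtain ⟨x, rfl⟩ := hu
    exact ⟨f x, (hcomm f hf x).symm⟩

lemma exists_one [FiniteDimensional F V] [IsAlgClosed F] (hV : Module.finrank F V = 3)
    (W : Submodule F V) (hW : Module.finrank F W = 2)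
    (k : Module.End F V) (hk : ¬ Sc k W ⊥) :
    ∃ L : Submodule F V, L ≤ W ∧ Module.finrank F L = 1 ∧
      ∀ f : Module.End F V, Commute f k → (∀ u ∈ W, f u ∈ W) → ∀ u ∈ L, f u ∈ L := by
  have hcomm : ∀ f : Module.End F V, Commute f k → ∀ u, f (k u) = k (f u) :=
    fun f hf u => LinearMap.congr_fun hf.eq u
  have fin : ∀ L : Submodule F V, L ≤ W → L ≠ W → (∃ v ∈ L, v ≠ 0) →
      Module.finrank F L = 1 := by
    intro L hL hne ⟨v, hv, hv0⟩
    have h1 := Submodule.finrank_lt_finrank_of_lt (lt_of_le_of_ne hL hne)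
    have h2 : 0 < Module.finrank F L := by
      rw [Module.finrank_pos_iff_exists_ne_zero]
      exact ⟨⟨v, hv⟩, fun h => hv0 (congrArg Subtype.val h)⟩
    omega
  by_cases hinv : ∀ u ∈ W, k u ∈ W
  · have : Nontrivial W := Module.nontrivial_of_finrank_pos (R := F) (by omega)
    obtain ⟨c, hc⟩ := Module.End.exists_eigenvalue (k.restrict hinv)
    obtain ⟨v, hv⟩ := hc.exists_hasEigenvector
    have hvk : k v = c • (v : V) := congrArg Subtype.val hv.apply_eq_smul
    refine ⟨W ⊓ LinearMap.ker (k - c • 1), inf_le_left, fin _ inf_le_left ?_ ?_, ?_⟩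
    · intro h
      apply hk
      refine ⟨c, fun u hu => ?_⟩
      rw [← h] at hu
      simpa using hu.2
    · exact ⟨v, ⟨v.2, by simp [hvk]⟩, fun h => hv.2 (Subtype.ext h)⟩
    · rintro f hf hfW u ⟨hu, hu'⟩
      refine ⟨hfW u hu, ?_⟩
      simp only [SetLike.mem_coe, LinearMap.mem_ker, LinearMap.sub_apply, LinearMap.smul_apply,
        Module.End.one_apply, sub_eq_zero] at hu' ⊢
      rw [← hcomm f hf, hu', map_smul]
  · refine ⟨W ⊓ W.comap k, inf_le_left, fin _ inf_le_left ?_ ?_, ?_⟩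
    · intro h
      apply hinv
      intro u hu
      rw [← h] at hu
      exact hu.2
    · by_contra hcon
      push Not at hcon
      have hq := W.finrank_quotient_add_finrank
      have hinj : Function.Injective (W.mkQ ∘ₗ k ∘ₗ W.subtype) := by
        rw [← LinearMap.ker_eq_bot, LinearMap.ker_eq_bot']
        intro m hm
        apply Subtype.ext
        apply hcon
        refine ⟨m.2, ?_⟩
        simpa using hm
      have := LinearMap.finrank_le_finrank_of_injective hinj
      omega
    · rintro f hf hfW u ⟨hu, hu'⟩
      refine ⟨hfW u hu, ?_⟩
      have := hfW _ hu'
      rw [hcomm f hf] at this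
      exact this

lemma main [FiniteDimensional F V] [IsAlgClosed F] (hV : Module.finrank F V = 3)
    {H K : Type*} [Group H] [Group K] (ρ : H →* Module.End F V) (σ : K →* Module.End F V)
    (hρ : Function.Injective ρ) (hσ : Function.Injective σ)
    (hc : ∀ h k, Commute (ρ h) (σ k)) : IsSolvable H ∨ IsSolvable K := by
  by_cases hs : ∀ k, ∃ c : F, ∀ v, σ k v = c • v
  · right
    apply isSolvable_of_comm
    intro a b
    apply hσ
    obtain ⟨x, hx⟩ := hs a
    obtain ⟨y, hy⟩ := hs b
    ext v
    simp [hx, hy, smul_smul, mul_comm]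
  push Not at hs
  obtain ⟨b, hb⟩ := hs
  obtain ⟨W, hW, hWi⟩ := exists_two hV (σ b) hb
  have hT : Module.finrank F (⊤ : Submodule F V) = Module.finrank F W + 1 := by
    rw [finrank_top]; omega
  by_cases hK : ∀ k, Sc (σ k) W ⊥
  · right
    refine flag_solvable σ hσ ⊥ W bot_le ?_ hK ?_
    · intro k
      refine ⟨0, fun u hu => ?_⟩
      rw [Submodule.mem_bot] at hu ⊢
      simp [hu]
    · intro k
      exact sc_of_finrank _ _ _ le_top (fun _ _ => trivial) ((hK k).inv bot_le) hT
  · left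
    push Not at hK
    obtain ⟨k, hk⟩ := hK
    obtain ⟨L, hL, hL1, hLi⟩ := exists_one hV W hW (σ k) hk
    have iW := fun h => hWi (ρ h) (hc h b)
    have iL := fun h => hLi (ρ h) (hc h k) (iW h)
    refine flag_solvable ρ hρ L W hL ?_ ?_ ?_
    · intro h
      refine sc_of_finrank _ _ _ bot_le (iL h) ?_ (by simp [hL1])
      intro u hu
      rw [Submodule.mem_bot] at hu ⊢
      simp [hu]
    · exact fun h => sc_of_finrank _ _ _ hL (iW h) (iL h) (by omega)
    · exact fun h => sc_of_finrank _ _ _ le_top (fun _ _ => trivial) (iW h) hT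

end CommSq

/-- If a group `G` has elements `A, B, C, D` with `A` commuting
with `B`, `B` with `C`, `C` with `D` and `D` with `A`, and both `⟨A,C⟩` and
`⟨B,D⟩` are non-solvable, then `G` has no faithful representation in `GL(3,F)`
for any field `F`. -/
theorem no_embedding_in_GL3_of_commuting_square
    (G : Type*) [Group G] (A B C D : G)
    (hAB : Commute A B) (hBC : Commute B C) (hCD : Commute C D) (hDA : Commute D A)
    (hAC : ¬ IsSolvable ↥(Subgroup.closure ({A, C} : Set G)))
    (hBD : ¬ IsSolvable ↥(Subgroup.closure ({B, D} : Set G))) :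
    ∀ (F : Type*) [Field F], ¬ ∃ ρ : G →* GL (Fin 3) F, Function.Injective ρ := by
  intro F _ ⟨ρ, hρ⟩
  let E := AlgebraicClosure F
  let m : Matrix (Fin 3) (Fin 3) F →+* Matrix (Fin 3) (Fin 3) E :=
    (algebraMap F E).mapMatrix
  have hm : Function.Injective m :=
    Matrix.map_injective (algebraMap F E).injective
  let τ : G →* Module.End E (Fin 3 → E) :=
    ((Matrix.toLinAlgEquiv' (R := E) (n := Fin 3)).toMulEquiv.toMonoidHom.comp
      (m : Matrix (Fin 3) (Fin 3) F →* Matrix (Fin 3) (Fin 3) E)).comp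
      ((Units.coeHom (Matrix (Fin 3) (Fin 3) F)).comp ρ)
  have hτ : Function.Injective τ := by
    intro x y hxy
    apply hρ
    apply Units.ext
    apply hm
    exact (Matrix.toLinAlgEquiv' (R := E) (n := Fin 3)).injective hxy
  have hcl : ∀ x ∈ Subgroup.closure ({A, C} : Set G),
      ∀ y ∈ Subgroup.closure ({B, D} : Set G), Commute x y := by
    have h1 : ∀ y ∈ ({B, D} : Set G), ∀ x ∈ Subgroup.closure ({A, C} : Set G), Commute x y := by
      intro y hy x hx
      have : Subgroup.closure ({A, C} : Set G) ≤ Subgroup.centralizer {y} := by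
        rw [Subgroup.closure_le]
        rintro z (rfl | rfl) <;> rcases hy with rfl | rfl <;>
          rw [SetLike.mem_coe, Subgroup.mem_centralizer_singleton_iff]
        · exact hAB.eq
        · exact hDA.symm.eq
        · exact hBC.symm.eq
        · exact hCD.eq
      exact Subgroup.mem_centralizer_singleton_iff.1 (this hx)
    intro x hx y hy
    have : Subgroup.closure ({B, D} : Set G) ≤ Subgroup.centralizer {x} := by
      rw [Subgroup.closure_le]
      intro z hz
      rw [SetLike.mem_coe, Subgroup.mem_centralizer_singleton_iff]
      exact (h1 z hz x hx).symm.eq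
    exact (Subgroup.mem_centralizer_singleton_iff.1 (this hy)).symm
  rcases CommSq.main (F := E) (V := Fin 3 → E) (by simp)
    (τ.comp (Subgroup.closure ({A, C} : Set G)).subtype)
    (τ.comp (Subgroup.closure ({B, D} : Set G)).subtype)
    (hτ.comp Subtype.val_injective) (hτ.comp Subtype.val_injective)
    (fun h k => (hcl h h.2 k k.2).map τ) with h | h
  · exact hAC h
  · exact hBD h
end

section
/- Let F₂ denote the free group of rank 2. For every field F there is no injective group homomorphism from the direct product F₂ × F₂ into GL(3,F). More generally, if a group G contains a subgroup isomorphic to F₂ × F₂, then there is no injective group homomorphism from G into GL(3,F) for any field F. -/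
open scoped MatrixGroups

namespace F2F2

/-- Some term of the derived series acts trivially. -/
def Sol {F G V : Type*} [Field F] [Group G] [AddCommGroup V] [Module F V]
    (ρ : Representation F G V) : Prop :=
  ∃ n, ∀ g ∈ derivedSeries G n, ρ g = 1

lemma commutator_trivial {F G V : Type*} [Field F] [Group G] [AddCommGroup V] [Module F V]
    (ρ : Representation F G V) (N : Subgroup G)
    (h : ∀ a ∈ N, ∀ b ∈ N, ρ a * ρ b = ρ b * ρ a) : ∀ g ∈ ⁅N, N⁆, ρ g = 1 := by
  have : ⁅N, N⁆ ≤ MonoidHom.ker ρ := by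
    rw [Subgroup.commutator_le]
    intro a ha b hb
    rw [MonoidHom.mem_ker]
    have e : a * b * a⁻¹ * b⁻¹ = (a * b) * (b * a)⁻¹ := by
      group
    rw [commutatorElement_def, e, map_mul, map_mul, h a ha b hb, ← map_mul, ← map_mul, mul_inv_cancel, map_one]
  intro g hg
  exact this hg

lemma sol_of_comm {F G V : Type*} [Field F] [Group G] [AddCommGroup V] [Module F V]
    (ρ : Representation F G V) (h : ∀ a b, ρ a * ρ b = ρ b * ρ a) : Sol ρ :=
  ⟨1, fun g hg => commutator_trivial ρ ⊤ (fun a _ b _ => h a b) g (by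
    simpa only [derivedSeries_succ, derivedSeries_zero] using hg)⟩

lemma sol_of_scalar {F G V : Type*} [Field F] [Group G] [AddCommGroup V] [Module F V]
    (ρ : Representation F G V) (h : ∀ a, ∃ c : F, ∀ v, ρ a v = c • v) : Sol ρ := by
  apply sol_of_comm
  intro a b
  obtain ⟨c, hc⟩ := h a
  obtain ⟨d, hd⟩ := h b
  ext v
  simp [hc, hd, smul_smul, mul_comm]

lemma sol_of_finrank_le_one {F G V : Type*} [Field F] [Group G] [AddCommGroup V] [Module F V]
    [FiniteDimensional F V] (ρ : Representation F G V) (h : Module.finrank F V ≤ 1) : Sol ρ := by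
  apply sol_of_scalar
  intro a
  obtain ⟨v, hv⟩ := finrank_le_one_iff.1 h
  obtain ⟨c, hc⟩ := hv (ρ a v)
  refine ⟨c, fun w => ?_⟩
  obtain ⟨d, rfl⟩ := hv w
  rw [map_smul, ← hc, smul_comm]

lemma sol_ext {F G V : Type*} [Field F] [Group G] [AddCommGroup V] [Module F V]
    (ρ : Representation F G V) (W : Submodule F V) (hW : ∀ g, W ≤ W.comap (ρ g))
    (h1 : Sol (ρ.subrepresentation W hW)) (h2 : Sol (ρ.quotient W hW)) : Sol ρ := by
  obtain ⟨n, hn⟩ := h1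
  obtain ⟨m, hm⟩ := h2
  have k1 : ∀ g ∈ derivedSeries G (max n m), ∀ w ∈ W, ρ g w = w := by
    intro g hg w hw
    have := hn g (derivedSeries_antitone G (le_max_left n m) hg)
    have := congrArg (fun f => ((f ⟨w, hw⟩ : W) : V)) this
    simpa using this
  have k2 : ∀ g ∈ derivedSeries G (max n m), ∀ v, ρ g v - v ∈ W := by
    intro g hg v
    have := hm g (derivedSeries_antitone G (le_max_right n m) hg)
    have := congrArg (fun f => f (Submodule.Quotient.mk v)) this
    exact (Submodule.Quotient.eq W).1 this
  refine ⟨max n m + 1, fun g hg => commutator_trivial ρ _ (fun a ha b hb => ?_) g hg⟩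
  ext v
  have e1 := k1 a ha _ (k2 b hb v)
  have e2 := k1 b hb _ (k2 a ha v)
  rw [map_sub] at e1 e2
  simp only [Module.End.mul_apply]
  have e3 := sub_eq_iff_eq_add.1 e1
  have e4 := sub_eq_iff_eq_add.1 e2
  rw [e3, e4]
  abel

lemma irred_case {F A B V : Type*} [Field F] [IsAlgClosed F] [Group A] [Group B]
    [AddCommGroup V] [Module F V] [FiniteDimensional F V]
    (α : Representation F A V) (β : Representation F B V)
    (hc : ∀ a b v, α a (β b v) = β b (α a v))
    (h3 : Module.finrank F V ≤ 3) (h1 : 1 < Module.finrank F V)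
    (hirr : ∀ W : Submodule F V, (∀ a, W ≤ W.comap (α a)) → (∀ b, W ≤ W.comap (β b)) →
      W = ⊥ ∨ W = ⊤) : Sol α ∨ Sol β := by
  by_cases hs : ∀ a, ∃ c : F, ∀ v, α a v = c • v
  · exact Or.inl (sol_of_scalar α hs)
  right
  push Not at hs
  obtain ⟨a, ha⟩ := hs
  have : Nontrivial V := Module.finrank_pos_iff.1 (by omega : 0 < Module.finrank F V)
  obtain ⟨μ, hμ⟩ := Module.End.exists_eigenvalue (α a)
  -- a line invariant under `B`
  have key : ∃ L : Submodule F V, (∀ b, L ≤ L.comap (β b)) ∧ Module.finrank F L = 1 := by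
    set E := Module.End.eigenspace (α a) μ with hE
    have hEb : ∀ b, E ≤ E.comap (β b) := by
      intro b v hv
      rw [Submodule.mem_comap]
      rw [hE, Module.End.mem_eigenspace_iff] at hv ⊢
      rw [hc, hv, map_smul]
    have hE0 : E ≠ ⊥ := hμ
    have hE1 : E ≠ ⊤ := by
      intro h
      obtain ⟨v, hv⟩ := ha μ
      apply hv
      have : v ∈ E := by rw [h]; trivial
      rwa [hE, Module.End.mem_eigenspace_iff] at this
    have p0 : 0 < Module.finrank F E := Nat.pos_of_ne_zero
      (fun h => hE0 (Submodule.finrank_eq_zero.1 h))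
    have p1 : Module.finrank F E < Module.finrank F V := Submodule.finrank_lt hE1
    by_cases hl : Module.finrank F E = 1
    · exact ⟨E, hEb, hl⟩
    have hnot : ¬ ∀ g, E ≤ E.comap (α g) := fun h => (hirr E h hEb).elim hE0 hE1
    push Not at hnot
    obtain ⟨g, hg⟩ := hnot
    have hinj : Function.Injective (α g) := by
      intro x y hxy
      have := congrArg (α g⁻¹) hxy
      simpa using this
    have hr : Module.finrank F (E.map (α g)) = Module.finrank F E :=
      (LinearEquiv.finrank_eq (Submodule.equivMapOfInjective (α g) hinj E)).symm
    have hsum := Submodule.finrank_sup_add_finrank_inf_eq E (E.map (α g))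
    have hle : Module.finrank F (E ⊔ E.map (α g) : Submodule F V) ≤ Module.finrank F V :=
      Submodule.finrank_le _
    have hlt : E ⊓ E.map (α g) < E := by
      refine lt_of_le_of_ne inf_le_left (fun h => hg ?_)
      have h' : E ≤ E.map (α g) := inf_eq_left.1 h
      have h'' := Submodule.eq_of_le_of_finrank_eq h' hr.symm
      exact Submodule.map_le_iff_le_comap.1 h''.ge
    have hlt' := Submodule.finrank_lt_finrank_of_lt hlt
    refine ⟨E ⊓ E.map (α g), ?_, by omega⟩
    rintro b v ⟨hv1, w, hw, rfl⟩
    exact ⟨hEb b hv1, β b w, hEb b hw, hc _ _ _⟩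
  obtain ⟨L, hLb, hL⟩ := key
  obtain ⟨w, hw0, hw⟩ := finrank_eq_one_iff'.1 hL
  have hχ : ∀ b, ∃ c : F, β b w = c • (w : V) := by
    intro b
    obtain ⟨c, h⟩ := hw ⟨β b w, hLb b w.2⟩
    exact ⟨c, (congrArg Subtype.val h).symm⟩
  choose χ hχ using hχ
  have hU := hirr (⨅ b, Module.End.eigenspace (β b) (χ b)) (by
      intro g v hv
      simp only [Submodule.mem_comap, Submodule.mem_iInf, Module.End.mem_eigenspace_iff] at hv ⊢
      intro b
      rw [← hc, hv, map_smul]) (by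
      intro b v hv
      have hv' := hv
      simp only [Submodule.mem_iInf, Module.End.mem_eigenspace_iff] at hv'
      rw [Submodule.mem_comap, hv' b]
      exact Submodule.smul_mem _ _ hv)
  have hwU : (w : V) ∈ (⨅ b, Module.End.eigenspace (β b) (χ b)) := by
    simp only [Submodule.mem_iInf, Module.End.mem_eigenspace_iff]
    exact hχ
  rcases hU with hU | hU
  · rw [hU, Submodule.mem_bot] at hwU
    exact absurd (Subtype.ext hwU) hw0
  · apply sol_of_scalar
    intro b
    refine ⟨χ b, fun v => ?_⟩
    have : v ∈ (⨅ b, Module.End.eigenspace (β b) (χ b)) := by rw [hU]; trivial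
    simp only [Submodule.mem_iInf, Module.End.mem_eigenspace_iff] at this
    exact this b

lemma main_aux {F A B : Type*} [Field F] [IsAlgClosed F] [Group A] [Group B] (d : ℕ) :
    ∀ (V : Type*) [AddCommGroup V] [Module F V] [FiniteDimensional F V]
    (α : Representation F A V) (β : Representation F B V)
    (_ : ∀ a b v, α a (β b v) = β b (α a v))
    (_ : Module.finrank F V ≤ 3) (_ : Module.finrank F V ≤ d), Sol α ∨ Sol β := by
  induction d with
  | zero =>
    intro V _ _ _ α β _ _ h
    exact Or.inl (sol_of_finrank_le_one α (by omega))
  | succ d ih =>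
    intro V _ _ _ α β hc h3 hd
    by_cases h1 : Module.finrank F V ≤ 1
    · exact Or.inl (sol_of_finrank_le_one α h1)
    by_cases hirr : ∀ W : Submodule F V, (∀ a, W ≤ W.comap (α a)) → (∀ b, W ≤ W.comap (β b)) →
      W = ⊥ ∨ W = ⊤
    · exact irred_case α β hc h3 (by omega) hirr
    push Not at hirr
    obtain ⟨W, hWa, hWb, hW0, hW1⟩ := hirr
    have p0 : 0 < Module.finrank F W := Nat.pos_of_ne_zero
      (fun h => hW0 (Submodule.finrank_eq_zero.1 h))
    have p1 : Module.finrank F W < Module.finrank F V :=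
      Submodule.finrank_lt hW1
    have p2 := Submodule.finrank_quotient_add_finrank W
    by_cases hl : Module.finrank F W ≤ 1
    · have := ih (V ⧸ W) (α.quotient W hWa) (β.quotient W hWb) (by
        intro a b v
        obtain ⟨v, rfl⟩ := Submodule.Quotient.mk_surjective W v
        exact congrArg (Submodule.Quotient.mk (p := W)) (hc a b v)) (by omega) (by omega)
      exact this.imp (sol_ext α W hWa (sol_of_finrank_le_one _ hl))
        (sol_ext β W hWb (sol_of_finrank_le_one _ hl))
    · have := ih W (α.subrepresentation W hWa) (β.subrepresentation W hWb) (by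
        intro a b v
        exact Subtype.ext (hc a b v)) (by omega) (by omega)
      exact this.imp (fun h => sol_ext α W hWa h (sol_of_finrank_le_one _ (by omega)))
        (fun h => sol_ext β W hWb h (sol_of_finrank_le_one _ (by omega)))

lemma isSolvable_of_sol {F G V : Type*} [Field F] [Group G] [AddCommGroup V] [Module F V]
    (ρ : Representation F G V) (hρ : Function.Injective ρ) (h : Sol ρ) : Group.IsSolvable G := by
  obtain ⟨n, hn⟩ := h
  refine ⟨n, (Subgroup.eq_bot_iff_forall _).2 fun g hg => hρ ?_⟩
  rw [hn g hg, map_one]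

lemma free_not_solvable : ¬ Group.IsSolvable (FreeGroup (Fin 2)) := by
  intro h
  let σ : Equiv.Perm (Fin 5) := finRotate 5
  let τ : Equiv.Perm (Fin 5) := Equiv.swap 0 (σ 0)
  let f : FreeGroup (Fin 2) →* Equiv.Perm (Fin 5) := FreeGroup.lift ![σ, τ]
  have hf : Function.Surjective f := by
    rw [← MonoidHom.range_eq_top, eq_top_iff,
      ← Equiv.Perm.closure_cycle_adjacent_swap (isCycle_finRotate (n := 3)) support_finRotate 0,
      Subgroup.closure_le]
    rintro x (rfl | rfl)
    · exact ⟨FreeGroup.of 0, by simp [f, σ]⟩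
    · exact ⟨FreeGroup.of 1, by simp [f, τ, σ]⟩
  exact Equiv.Perm.not_isSolvable (Fin 5) (by simp) (Group.isSolvable_of_surjective hf)

lemma part_one (F : Type*) [Field F]
    (ρ : (FreeGroup (Fin 2) × FreeGroup (Fin 2)) →* GL (Fin 3) F)
    (hρ : Function.Injective ρ) : False := by
  let K := AlgebraicClosure F
  let φ : GL (Fin 3) F →* GL (Fin 3) K := Matrix.GeneralLinearGroup.map (algebraMap F K)
  have hφ : Function.Injective φ := by
    intro x y hxy
    ext i j
    have := congrArg (fun m : GL (Fin 3) K => (m : Matrix (Fin 3) (Fin 3) K) i j) hxy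
    exact (algebraMap F K).injective (by simpa [φ] using this)
  let ψ : GL (Fin 3) K →* Module.End K (Fin 3 → K) :=
    (Matrix.toLinAlgEquiv' (R := K) (n := Fin 3)).toAlgHom.toRingHom.toMonoidHom.comp
      (Units.coeHom _)
  have hψ : Function.Injective ψ := by
    intro x y hxy
    exact Units.ext ((Matrix.toLinAlgEquiv' (R := K) (n := Fin 3)).injective hxy)
  let θ : Representation K (FreeGroup (Fin 2) × FreeGroup (Fin 2)) (Fin 3 → K) :=
    ψ.comp (φ.comp ρ)
  have hθ : Function.Injective θ := hψ.comp (hφ.comp hρ)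
  let α : Representation K (FreeGroup (Fin 2)) (Fin 3 → K) := θ.comp (MonoidHom.inl _ _)
  let β : Representation K (FreeGroup (Fin 2)) (Fin 3 → K) := θ.comp (MonoidHom.inr _ _)
  have hα : Function.Injective α := hθ.comp (fun x y h => congrArg Prod.fst h)
  have hβ : Function.Injective β := hθ.comp (fun x y h => congrArg Prod.snd h)
  have hc : ∀ a b v, α a (β b v) = β b (α a v) := by
    intro a b v
    have : α a * β b = β b * α a := by
      change θ (a, 1) * θ (1, b) = θ (1, b) * θ (a, 1)
      rw [← map_mul, ← map_mul]
      simp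
    exact congrArg (fun f => f v) this
  rcases main_aux 3 (Fin 3 → K) α β hc (by simp) (by simp) with h | h
  · exact free_not_solvable (isSolvable_of_sol α hα h)
  · exact free_not_solvable (isSolvable_of_sol β hβ h)

end F2F2

/-- `F₂ × F₂` has no faithful representation in `GL(3,F)` for
any field `F`; more generally, no group containing a subgroup isomorphic to
`F₂ × F₂` embeds in `GL(3,F)` for any field `F`. -/
theorem no_embedding_F2_times_F2_in_GL3 :
    (∀ (F : Type*) [Field F],
      ¬ ∃ ρ : (FreeGroup (Fin 2) × FreeGroup (Fin 2)) →* GL (Fin 3) F,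
        Function.Injective ρ) ∧
    (∀ (G : Type*) [Group G] (H : Subgroup G),
      Nonempty (H ≃* FreeGroup (Fin 2) × FreeGroup (Fin 2)) →
      ∀ (F : Type*) [Field F],
        ¬ ∃ ρ : G →* GL (Fin 3) F, Function.Injective ρ) := by
  refine ⟨fun F _ ⟨ρ, hρ⟩ => F2F2.part_one F ρ hρ, ?_⟩
  rintro G _ H ⟨e⟩ F _ ⟨ρ, hρ⟩
  exact F2F2.part_one F (ρ.comp (H.subtype.comp e.symm.toMonoidHom))
    (hρ.comp (H.subtype_injective.comp e.symm.injective))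
end

section
/- Let F be a field, d ≥ 2, and let H be an abelian group with injective homomorphisms i₁ : H → G₁ and i₂ : H → G₂ into groups G₁ and G₂. Suppose ρ₁ : G₁ → GL(d,F) and ρ₂ : G₂ → GL(d,F) are injective group homomorphisms such that: (a) ρ₁ ∘ i₁ = ρ₂ ∘ i₂ on H; (b) ρ₁(i₁(h)) is a diagonal matrix for every h ∈ H; (c) for every g ∈ G₁ not in the image of i₁, the bottom-left entry (row d, column 1) of ρ₁(g) is nonzero, and for every g ∈ G₂ not in the image of i₂, the top-right entry (row 1, column d) of ρ₂(g) is nonzero. Then the amalgamated free product G₁ *_H G₂ (the pushout of i₁ and i₂ in the category of groups) admits an injective group homomorphism into GL(d, F(t)), where F(t) is the field of rational functions in one variable over F. -/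
open scoped MatrixGroups

open Monoid Monoid.PushoutI

noncomputable section ShalenHelpers

/-- Multiplication by a matrix with a unique dominant entry produces a dominant coordinate. -/
theorem shalen_step {F : Type} [Field F] {d : ℕ} (v : Valuation (RatFunc F) (WithZero (Multiplicative ℤ)))
    (hX : ∀ n : ℤ, v (RatFunc.X ^ n) = WithZero.exp n)
    (hC : ∀ a : F, a ≠ 0 → v (RatFunc.C a) = 1)
    (e : Fin d → ℤ) (r s : Fin d)
    (he : ∀ j k, (j ≠ r ∨ k ≠ s) → e j - e k < e r - e s) (hrs : 0 < e r - e s)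
    (A : Matrix (Fin d) (Fin d) F) (hA : A r s ≠ 0)
    (x : Fin d → RatFunc F) (hx : ∀ k, v (x k) ≤ v (x s)) (h1 : 1 ≤ v (x s))
    (y : Fin d → RatFunc F)
    (hy : ∀ j, y j = ∑ k, RatFunc.X ^ (e j - e k) * RatFunc.C (A j k) * x k) :
    1 < v (y r) ∧ ∀ j, j ≠ r → v (y j) < v (y r) := by
  have hC' : ∀ a : F, v (RatFunc.C a) ≤ 1 := by
    intro a
    by_cases ha : a = 0
    · simp [ha]
    · exact (hC a ha).le
  have hpos : 0 < v (x s) := lt_of_lt_of_le zero_lt_one h1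
  have hterm : ∀ j k, (j ≠ r ∨ k ≠ s) →
      v (RatFunc.X ^ (e j - e k) * RatFunc.C (A j k) * x k)
        < WithZero.exp (e r - e s) * v (x s) := by
    intro j k hjk
    rw [map_mul, map_mul, hX]
    calc WithZero.exp (e j - e k) * v (RatFunc.C (A j k)) * v (x k)
        ≤ WithZero.exp (e j - e k) * 1 * v (x s) := by
          gcongr
          · exact hC' _
          · exact hx k
      _ = WithZero.exp (e j - e k) * v (x s) := by rw [mul_one]
      _ < _ := by
          apply mul_lt_mul_of_pos_right _ hpos
          exact WithZero.exp_lt_exp.2 (he j k hjk)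
  have hmain : v (RatFunc.X ^ (e r - e s) * RatFunc.C (A r s) * x s)
      = WithZero.exp (e r - e s) * v (x s) := by
    rw [map_mul, map_mul, hX, hC _ hA, mul_one]
  have hyr : v (y r) = WithZero.exp (e r - e s) * v (x s) := by
    rw [hy, ← hmain]
    apply v.map_sum_eq_of_lt (Finset.mem_univ s)
    intro k hk
    rw [hmain]
    exact hterm r k (Or.inr (by simpa using hk))
  have hbig : v (x s) < WithZero.exp (e r - e s) * v (x s) := by
    conv_lhs => rw [← one_mul (v (x s)), ← WithZero.exp_zero]
    exact mul_lt_mul_of_pos_right (WithZero.exp_lt_exp.2 hrs) hpos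
  rw [hyr]
  refine ⟨lt_of_le_of_lt h1 hbig, fun j hj => ?_⟩
  rw [hy]
  apply v.map_sum_lt' (hpos.trans hbig)
  intro k _
  exact hterm j k (Or.inl hj)

/-- The diagonal matrix with entries powers of the variable. -/
def shalenD (F : Type) [Field F] {d : ℕ} (e : Fin d → ℤ) : GL (Fin d) (RatFunc F) where
  val := Matrix.diagonal fun j => RatFunc.X ^ (e j)
  inv := Matrix.diagonal fun j => RatFunc.X ^ (-e j)
  val_inv := by
    rw [Matrix.diagonal_mul_diagonal, ← Matrix.diagonal_one]
    congr 1; funext j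
    rw [← zpow_add₀ RatFunc.X_ne_zero]; simp
  inv_val := by
    rw [Matrix.diagonal_mul_diagonal, ← Matrix.diagonal_one]
    congr 1; funext j
    rw [← zpow_add₀ RatFunc.X_ne_zero]; simp

/-- Base change to rational functions followed by conjugation by `shalenD`. -/
def shalenM (F : Type) [Field F] {d : ℕ} (e : Fin d → ℤ) : GL (Fin d) F →* GL (Fin d) (RatFunc F) :=
  (MulAut.conj (shalenD F e)).toMonoidHom.comp (Matrix.GeneralLinearGroup.map RatFunc.C)

theorem shalenM_apply {F : Type} [Field F] {d : ℕ} (e : Fin d → ℤ) (A : GL (Fin d) F) (j k : Fin d) :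
    ((shalenM F e A : GL (Fin d) (RatFunc F)) : Matrix (Fin d) (Fin d) (RatFunc F)) j k
      = RatFunc.X ^ (e j - e k) * RatFunc.C ((A : Matrix (Fin d) (Fin d) F) j k) := by
  have : ((shalenM F e A : GL (Fin d) (RatFunc F)) : Matrix (Fin d) (Fin d) (RatFunc F))
      = Matrix.diagonal (fun j => RatFunc.X ^ (e j)) *
        (A : Matrix (Fin d) (Fin d) F).map RatFunc.C *
        Matrix.diagonal (fun j => RatFunc.X ^ (-e j)) := rfl
  rw [this, Matrix.mul_diagonal, Matrix.diagonal_mul, Matrix.map_apply, sub_eq_add_neg,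
    zpow_add₀ RatFunc.X_ne_zero]
  ring

theorem shalenM_diag {F : Type} [Field F] {d : ℕ} (e : Fin d → ℤ) (A : GL (Fin d) F)
    (hA : Matrix.IsDiag (A : Matrix (Fin d) (Fin d) F)) :
    shalenM F e A = Matrix.GeneralLinearGroup.map RatFunc.C A := by
  ext j k
  rw [shalenM_apply]
  by_cases h : j = k
  · subst h; simp
  · have := hA h
    simp [this]

end ShalenHelpers

/-- Shalen's linearity criterion for amalgamated free
products. Here the amalgamated free product `G₁ *_H G₂` is realised as
`Monoid.PushoutI i`, the pushout in the category of groups of the family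
of injections `i b : H → G b` indexed by `b : Bool` (with `G₁ = G true` and
`G₂ = G false`). Given faithful `d`-dimensional representations `ρ b` of the
`G b` over a field `F` which agree on `H`, are diagonal on `H`, and satisfy
the corner-entry condition off `H`, the amalgam embeds in `GL(d, F(t))`. -/
theorem shalen_amalgam_embeds_in_GL_ratFunc
    (F : Type) [Field F] (d : ℕ) (hd : 2 ≤ d)
    (H : Type) [CommGroup H] (G : Bool → Type) [∀ b, Group (G b)]
    (i : ∀ b, H →* G b) (hi : ∀ b, Function.Injective (i b))
    (ρ : ∀ b, G b →* GL (Fin d) F) (hρ : ∀ b, Function.Injective (ρ b))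
    (hagree : ∀ h : H, ρ true (i true h) = ρ false (i false h))
    (hdiag : ∀ h : H, Matrix.IsDiag ((ρ true (i true h) : GL (Fin d) F) : Matrix (Fin d) (Fin d) F))
    (hbotleft : ∀ g : G true, g ∉ Set.range (i true) →
      ((ρ true g : GL (Fin d) F) : Matrix (Fin d) (Fin d) F)
        ⟨d - 1, by omega⟩ ⟨0, by omega⟩ ≠ 0)
    (htopright : ∀ g : G false, g ∉ Set.range (i false) →
      ((ρ false g : GL (Fin d) F) : Matrix (Fin d) (Fin d) F)
        ⟨0, by omega⟩ ⟨d - 1, by omega⟩ ≠ 0) :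
    ∃ ψ : Monoid.PushoutI i →* GL (Fin d) (RatFunc F), Function.Injective ψ := by
  classical
  let K := RatFunc F
  let v : Valuation (RatFunc F) (WithZero (Multiplicative ℤ)) := RatFunc.inftyValuation F
  have hX : ∀ n : ℤ, v (RatFunc.X ^ n) = WithZero.exp n := RatFunc.inftyValuation.X_zpow F
  have hC : ∀ a : F, a ≠ 0 → v (RatFunc.C a) = 1 := fun a ha => RatFunc.inftyValuation.C F ha
  let e : Bool → Fin d → ℤ := fun b j => if b then (j : ℤ) else -(j : ℤ)
  let r : Bool → Fin d := fun b => if b then ⟨d - 1, by omega⟩ else ⟨0, by omega⟩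
  have hrs : ∀ b, 0 < e b (r b) - e b (r (!b)) := by
    intro b; cases b <;> simp [e, r] <;> omega
  have he : ∀ b j k, (j ≠ r b ∨ k ≠ r (!b)) → e b j - e b k < e b (r b) - e b (r (!b)) := by
    intro b j k
    have hj := j.2
    have hk := k.2
    cases b <;> simp [e, r, Fin.ext_iff] <;> omega
  have hdiag' : ∀ b h, Matrix.IsDiag ((ρ b (i b h) : GL (Fin d) F) : Matrix (Fin d) (Fin d) F) := by
    intro b h
    cases b
    · rw [← hagree]; exact hdiag h
    · exact hdiag h
  have hcorner : ∀ b (g : G b), g ∉ (i b).range →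
      ((ρ b g : GL (Fin d) F) : Matrix (Fin d) (Fin d) F) (r b) (r (!b)) ≠ 0 := by
    intro b g hg
    cases b
    · exact htopright g hg
    · exact hbotleft g hg
  let base' : H →* GL (Fin d) (RatFunc F) :=
    (Matrix.GeneralLinearGroup.map RatFunc.C).comp ((ρ true).comp (i true))
  let ψ : Monoid.PushoutI i →* GL (Fin d) (RatFunc F) :=
    Monoid.PushoutI.lift (fun b => (shalenM F (e b)).comp (ρ b)) base' (by
      intro b
      ext1 h
      change shalenM F (e b) (ρ b (i b h)) = Matrix.GeneralLinearGroup.map RatFunc.C (ρ true (i true h))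
      rw [shalenM_diag _ _ (hdiag' b h)]
      cases b
      · rw [hagree]
      · rfl)
  have hψof : ∀ b (g : G b), ψ (of b g) = shalenM F (e b) (ρ b g) := fun b g =>
    Monoid.PushoutI.lift_of _ _ _ g
  have hψbase : ∀ h, ψ (base i h) = Matrix.GeneralLinearGroup.map RatFunc.C (ρ true (i true h)) :=
    fun h => Monoid.PushoutI.lift_base _ _ _ h
  let vec : Monoid.PushoutI i → Fin d → RatFunc F := fun x =>
    ((ψ x : GL (Fin d) (RatFunc F)) : Matrix (Fin d) (Fin d) (RatFunc F)).mulVec (fun _ => 1)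
  have hvec1 : vec 1 = fun _ => 1 := by simp [vec]
  have hvecmul : ∀ x y, vec (x * y) =
      ((ψ x : GL (Fin d) (RatFunc F)) : Matrix (Fin d) (Fin d) (RatFunc F)).mulVec (vec y) := by
    intro x y; simp [vec]
  let Dom : Bool → (Fin d → RatFunc F) → Prop := fun b x =>
    1 < v (x (r b)) ∧ ∀ j, j ≠ r b → v (x j) < v (x (r b))
  obtain ⟨T⟩ := NormalWord.transversal_nonempty i hi
  have key : ∀ w : NormalWord T, (w.fstIdx = none → w.prod = base i w.head) ∧
      ∀ b, w.fstIdx = some b → Dom b (vec w.prod) := by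
    intro w
    induction w using NormalWord.consRecOn with
    | empty =>
      refine ⟨fun _ => by simp, fun b hb => ?_⟩
      simp [CoprodI.Word.fstIdx] at hb
    | cons b g w hmw hgn hgr hw1 ih =>
      have hfst : (NormalWord.cons g w hmw hgr).fstIdx = some b := by
        simp [CoprodI.Word.fstIdx, NormalWord.cons, CoprodI.Word.cons]
      refine ⟨fun h => by rw [hfst] at h; simp at h, fun b' hb' => ?_⟩
      rw [hfst] at hb'
      obtain rfl : b = b' := by simpa using hb'
      rw [NormalWord.prod_cons, hvecmul, hψof]
      have hx : (∀ k, v (vec w.prod k) ≤ v (vec w.prod (r (!b)))) ∧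
          1 ≤ v (vec w.prod (r (!b))) := by
        rcases hw : w.fstIdx with _ | c
        · rw [ih.1 hw, hw1, map_one, hvec1]
          simp
        · have hc : c = !b := by
            rw [hw] at hmw
            cases b <;> cases c <;> simp_all
          subst hc
          obtain ⟨h1, h2⟩ := ih.2 _ hw
          refine ⟨fun k => ?_, h1.le⟩
          by_cases hk : k = r (!b)
          · rw [hk]
          · exact (h2 k hk).le
      refine shalen_step v hX hC (e b) (r b) (r (!b)) (he b) (hrs b) _ (hcorner b g hgr)
        (vec w.prod) hx.1 hx.2 _ ?_
      intro j
      rw [Matrix.mulVec, dotProduct]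
      exact Finset.sum_congr rfl fun k _ => by rw [shalenM_apply]
    | base h w hw1 ih =>
      have hprod : (base i h • w).prod = base i h * w.prod := NormalWord.prod_smul _ _
      have hfst : (base i h • w).fstIdx = w.fstIdx := by
        rw [NormalWord.base_smul_def]
      have hhead : (base i h • w).head = h * w.head := by
        rw [NormalWord.base_smul_def]
      rw [hfst, hhead, hprod]
      refine ⟨fun hn => by rw [ih.1 hn, map_mul], fun b hb => ?_⟩
      have hval : ∀ j, v (vec (base i h * w.prod) j) = v (vec w.prod j) := by
        intro j
        rw [hvecmul, hψbase]
        have hdg := hdiag h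
        have hent : ∀ k, k ≠ j → ((ρ true (i true h) : GL (Fin d) F) : Matrix (Fin d) (Fin d) F) j k = 0 :=
          fun k hk => hdg hk.symm
        have hne : ((ρ true (i true h) : GL (Fin d) F) : Matrix (Fin d) (Fin d) F) j j ≠ 0 := by
          intro h0
          have hu := congrFun (congrFun (Units.mul_inv (ρ true (i true h))) j) j
          rw [Matrix.mul_apply, Finset.sum_eq_zero] at hu
          · simp at hu
          · intro k _
            by_cases hk : k = j
            · rw [hk, h0, zero_mul]
            · rw [hent k hk, zero_mul]
        rw [Matrix.mulVec, dotProduct, Finset.sum_eq_single j]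
        · change v (RatFunc.C _ * _) = _
          rw [map_mul, hC _ hne, one_mul]
        · intro k _ hk
          change RatFunc.C _ * _ = _
          rw [hent k hk, map_zero, zero_mul]
        · simp
      obtain ⟨h1, h2⟩ := ih.2 b hb
      refine ⟨by rw [hval]; exact h1, fun j hj => ?_⟩
      rw [hval, hval]
      exact h2 j hj
  refine ⟨ψ, (injective_iff_map_eq_one ψ).2 fun x hx => ?_⟩
  obtain ⟨w, rfl⟩ : ∃ w : NormalWord T, w.prod = x := NormalWord.equiv.symm.surjective x
  rcases hw : w.fstIdx with _ | b
  · have hp := (key w).1 hw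
    rw [hp] at hx ⊢
    rw [hψbase] at hx
    have h1 : ρ true (i true w.head) = 1 := by
      ext j k
      have hjk := congrArg (fun M : GL (Fin d) (RatFunc F) =>
        (M : Matrix (Fin d) (Fin d) (RatFunc F)) j k) hx
      change RatFunc.C _ = (1 : Matrix (Fin d) (Fin d) (RatFunc F)) j k at hjk
      apply RatFunc.C.injective
      rw [hjk, Units.val_one, Matrix.one_apply, Matrix.one_apply]
      split_ifs <;> simp
    have h2 : w.head = 1 := by
      apply hi true
      apply hρ true
      rw [h1, map_one, map_one]
    rw [h2, map_one]
  · exfalso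
    have hdom := ((key w).2 b hw).1
    have : vec w.prod = fun _ => 1 := by simp [vec, hx]
    rw [this] at hdom
    simp at hdom
end

section
/- Let B₃ be the braid group on three strands, with presentation ⟨x, y | x² = y³⟩. For every p equal to zero or a prime, there exist a field F of characteristic p and an injective group homomorphism from B₃ into GL(2,F). Since B₃ is nonabelian, the minimal dimension of a faithful linear representation of B₃ over fields of characteristic p equals 2 for every such p. -/
open scoped MatrixGroups

/-- The single defining relator `x² y⁻³` of the braid group
`B₃ = ⟨x, y | x² = y³⟩` (generators `0 ↦ x`, `1 ↦ y`). -/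
def braid3Rels : Set (FreeGroup (Fin 2)) :=
  {FreeGroup.of (0 : Fin 2) ^ 2 * (FreeGroup.of (1 : Fin 2) ^ 3)⁻¹}

/-- The braid group on three strands, `B₃ = ⟨x, y | x² = y³⟩`. -/
abbrev BraidGroup3 : Type := PresentedGroup braid3Rels

open Matrix

/-- Words in the positive monoid generated by `xy` and `xy²`. -/
inductive PosWord {G : Type*} [Group G] (x y : G) : G → Prop
  | one : PosWord x y 1
  | a (w : G) : PosWord x y w → PosWord x y (x * y * w)
  | b (w : G) : PosWord x y w → PosWord x y (x * y ^ 2 * w)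

/-- Normal form `z^k y^i w x^j` with `z = x²`. -/
def HasNF {G : Type*} [Group G] (x y g : G) : Prop :=
  ∃ (k : ℤ) (i j : ℕ) (w : G), i < 3 ∧ j < 2 ∧ PosWord x y w ∧
    g = (x ^ 2) ^ k * (y ^ i * (w * x ^ j))

section NF
variable {G : Type*} [Group G] {x y : G}

theorem HasNF.zpow_mul {g : G} (h : HasNF x y g) (n : ℤ) : HasNF x y ((x ^ 2) ^ n * g) := by
  obtain ⟨k, i, j, w, hi, hj, hw, rfl⟩ := h
  exact ⟨n + k, i, j, w, hi, hj, hw, by rw [_root_.zpow_add, mul_assoc]⟩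

theorem comm_x (k : ℤ) : x * (x ^ 2) ^ k = (x ^ 2) ^ k * x :=
  (((Commute.refl x).pow_right 2).zpow_right k).eq

theorem comm_y (hxy : x ^ 2 = y ^ 3) (k : ℤ) : y * (x ^ 2) ^ k = (x ^ 2) ^ k * y := by
  rw [hxy]
  exact (((Commute.refl y).pow_right 3).zpow_right k).eq

theorem HasNF.y_mul (hxy : x ^ 2 = y ^ 3) {g : G} (h : HasNF x y g) : HasNF x y (y * g) := by
  obtain ⟨k, i, j, w, hi, hj, hw, rfl⟩ := h
  rw [← mul_assoc, comm_y hxy, mul_assoc]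
  apply HasNF.zpow_mul
  rw [← mul_assoc, ← pow_succ']
  by_cases h3 : i + 1 < 3
  · exact ⟨0, i + 1, j, w, h3, hj, hw, by simp⟩
  · obtain rfl : i = 2 := by omega
    refine ⟨1, 0, j, w, by norm_num, hj, hw, ?_⟩
    rw [hxy]; simp

theorem HasNF.x_mul {g : G} (h : HasNF x y g) : HasNF x y (x * g) := by
  obtain ⟨k, i, j, w, hi, hj, hw, rfl⟩ := h
  rw [← mul_assoc, comm_x, mul_assoc]
  apply HasNF.zpow_mul
  interval_cases i
  · cases hw with
    | one =>
      interval_cases j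
      · exact ⟨0, 0, 1, 1, by norm_num, by norm_num, .one, by simp⟩
      · exact ⟨1, 0, 0, 1, by norm_num, by norm_num, .one, by simp [pow_two]⟩
    | a w hw => exact ⟨1, 1, j, w, by norm_num, hj, hw, by simp [pow_two, mul_assoc]⟩
    | b w hw => exact ⟨1, 2, j, w, by norm_num, hj, hw, by simp [pow_two, mul_assoc]⟩
  · exact ⟨0, 0, j, _, by norm_num, hj, .a w hw, by simp [mul_assoc]⟩
  · exact ⟨0, 0, j, _, by norm_num, hj, .b w hw, by simp [mul_assoc]⟩

theorem HasNF.of_closure (hxy : x ^ 2 = y ^ 3) {g : G} (hg : g ∈ Subgroup.closure {x, y}) :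
    HasNF x y g := by
  induction hg using Subgroup.closure_induction_left with
  | one => exact ⟨0, 0, 0, 1, by norm_num, by norm_num, .one, by simp⟩
  | mul_left a ha b hb ih =>
    rcases ha with rfl | rfl
    · exact ih.x_mul
    · exact ih.y_mul hxy
  | inv_mul_cancel a ha b hb ih =>
    rcases ha with rfl | rfl
    · have : a⁻¹ * b = (a ^ 2) ^ (-1 : ℤ) * (a * b) := by simp [pow_two, mul_assoc]
      rw [this]
      exact ih.x_mul.zpow_mul _
    · have : a⁻¹ * b = (x ^ 2) ^ (-1 : ℤ) * (a * (a * b)) := by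
        rw [hxy]; simp [pow_succ, mul_assoc]
      rw [this]
      exact ((ih.y_mul hxy).y_mul hxy).zpow_mul _

end NF

section Rep
variable {F : Type*} [Field F] {Γ : Type*} [LinearOrderedCommGroupWithZero Γ]
  (v : Valuation F Γ)

/-- The ping-pong region. -/
def Reg (a : Fin 2 → F) : Prop := v (a 0) < v (a 1)

/-- If `X, Y` act by the given formulas, a relation in the group they come from is trivial. -/
theorem faithful_core {G : Type*} [Group G] {x y : G} (hxy : x ^ 2 = y ^ 3)
    (ρ : G →* GL (Fin 2) F) (t : F) (ht : 1 < v t)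
    (hX : (ρ x).1 = !![0, t; t ^ 2, 0]) (hY : (ρ y).1 = !![0, -t; t, -t])
    {g : G} (hnf : HasNF x y g) (hg : ρ g = 1) : g = 1 := by
  have ht0 : t ≠ 0 := by rintro rfl; simp at ht
  have hv0 : 0 < v t := lt_trans zero_lt_one ht
  have actX : ∀ a b : F, (ρ x).1 *ᵥ ![a, b] = ![t * b, t ^ 2 * a] := by
    intro a b; rw [hX]; ext i; fin_cases i <;> simp [mulVec, dotProduct, Fin.sum_univ_two]
  have actY : ∀ a b : F, (ρ y).1 *ᵥ ![a, b] = ![- (t * b), t * (a - b)] := by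
    intro a b; rw [hY]; ext i
    fin_cases i <;> simp [mulVec, dotProduct, Fin.sum_univ_two]
    ring
  have mulAct : ∀ (g h : G) (u : Fin 2 → F), (ρ (g * h)).1 *ᵥ u = (ρ g).1 *ᵥ ((ρ h).1 *ᵥ u) := by
    intro g h u; rw [map_mul, Units.val_mul, mulVec_mulVec]
  have actXY : ∀ a b : F, (ρ (x * y)).1 *ᵥ ![a, b] = ![t ^ 2 * (a - b), t ^ 3 * (-b)] := by
    intro a b; rw [mulAct, actY, actX]; congr 1
    · ring
    · congr 1; ring
  have actYY : ∀ a b : F, (ρ (y ^ 2)).1 *ᵥ ![a, b] = ![t ^ 2 * (b - a), t ^ 2 * (-a)] := by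
    intro a b; rw [pow_two, mulAct, actY, actY]; congr 1
    · ring
    · congr 1; ring
  have actXYY : ∀ a b : F, (ρ (x * y ^ 2)).1 *ᵥ ![a, b] = ![t ^ 3 * (-a), t ^ 4 * (b - a)] := by
    intro a b; rw [mulAct, actYY, actX]; congr 1
    · ring
    · congr 1; ring
  have eta : ∀ u : Fin 2 → F, u = ![u 0, u 1] := by
    intro u; ext i; fin_cases i <;> rfl
  have h23 : v t ^ 2 < v t ^ 3 := pow_lt_pow_right₀ ht (by norm_num)
  have h34 : v t ^ 3 < v t ^ 4 := pow_lt_pow_right₀ ht (by norm_num)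
  -- positive words preserve the region
  have regXY : ∀ u, Reg v u → Reg v ((ρ (x * y)).1 *ᵥ u) := by
    intro u hu
    rw [eta u, actXY]
    unfold Reg at *
    have h1 : v (u 0 - u 1) = v (u 1) := v.map_sub_eq_of_lt_right hu
    have h0 : 0 < v (u 1) := lt_of_le_of_lt zero_le hu
    simp only [cons_val_zero, cons_val_one, map_mul, map_pow, Valuation.map_neg, h1]
    exact mul_lt_mul_of_pos_right h23 h0
  have regXYY : ∀ u, Reg v u → Reg v ((ρ (x * y ^ 2)).1 *ᵥ u) := by
    intro u hu
    rw [eta u, actXYY]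
    unfold Reg at *
    have h1 : v (u 1 - u 0) = v (u 1) := v.map_sub_eq_of_lt_left hu
    have h0 : 0 < v (u 1) := lt_of_le_of_lt zero_le hu
    simp only [cons_val_zero, cons_val_one, map_mul, map_pow, Valuation.map_neg, h1]
    calc v t ^ 3 * v (u 0) ≤ v t ^ 3 * v (u 1) := by gcongr
      _ < v t ^ 4 * v (u 1) := mul_lt_mul_of_pos_right h34 h0
  have regW : ∀ w, PosWord x y w → ∀ u, Reg v u → Reg v ((ρ w).1 *ᵥ u) := by
    intro w hw
    induction hw with
    | one => intro u hu; simpa using hu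
    | a w _ ih => intro u hu; rw [mulAct]; exact regXY _ (ih u hu)
    | b w _ ih => intro u hu; rw [mulAct]; exact regXYY _ (ih u hu)
  -- central element
  have hz : ρ (x ^ 2) = Units.map (Matrix.scalar (Fin 2) (α := F)).toMonoidHom (Units.mk0 t ht0 ^ 3) := by
    ext i j
    simp only [map_pow, Units.val_pow_eq_pow_val, hX]
    fin_cases i <;> fin_cases j <;> simp [pow_two, pow_succ] <;> ring
  have hzk : ∀ k : ℤ, ρ ((x ^ 2) ^ k) =
      Units.map (Matrix.scalar (Fin 2) (α := F)).toMonoidHom ((Units.mk0 t ht0 ^ 3) ^ k) := by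
    intro k; rw [map_zpow, hz, map_zpow]
  have regz : ∀ (k : ℤ) u, Reg v u → Reg v ((ρ ((x ^ 2) ^ k)).1 *ᵥ u) := by
    intro k u hu
    rw [hzk]
    have hpos : 0 < v (((Units.mk0 t ht0 ^ 3) ^ k : Fˣ) : F) := by
      rw [Valuation.pos_iff]; exact Units.ne_zero _
    generalize ((Units.mk0 t ht0 ^ 3) ^ k : Fˣ) = c at hpos ⊢
    have : (Units.map (Matrix.scalar (Fin 2) (α := F)).toMonoidHom c).1 *ᵥ u = ![c * u 0, c * u 1] := by
      ext i; fin_cases i <;> simp [mulVec, dotProduct, Fin.sum_univ_two]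
    rw [this]
    unfold Reg at *
    simp only [cons_val_zero, cons_val_one, map_mul]
    exact mul_lt_mul_of_pos_left hu hpos
  -- key contradiction
  have key : ∀ (w : G) (k : ℤ) (q : G) (u : Fin 2 → F), PosWord x y w →
      ρ (w * ((x ^ 2) ^ k * q)) = 1 → ¬ Reg v u → Reg v ((ρ q).1 *ᵥ u) → False := by
    intro w k q u hw h1 hu hq
    apply hu
    have := regW w hw _ (regz k _ hq)
    rw [← mulAct, ← mulAct, mul_assoc, h1] at this
    simpa using this
  have n10 : ¬ Reg v ![1, 0] := by simp [Reg]
  have n11 : ¬ Reg v ![1, 1] := by simp [Reg]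
  have conj : ∀ a b : G, ρ (a * b) = 1 → ρ (b * a) = 1 := by
    intro a b h
    rw [map_mul] at h ⊢
    exact mul_eq_one_comm.mp h
  have caseXY : ∀ (w : G) (k : ℤ), PosWord x y w → ρ (w * ((x ^ 2) ^ k * (x * y))) ≠ 1 := by
    intro w k hw h
    refine key w k _ ![1, 1] hw h n11 ?_
    rw [actXY]; simp [Reg, ht0, hv0]
  have caseXYY : ∀ (w : G) (k : ℤ), PosWord x y w → ρ (w * ((x ^ 2) ^ k * (x * y ^ 2))) ≠ 1 := by
    intro w k hw h
    refine key w k _ ![1, 0] hw h n10 ?_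
    rw [actXYY]; simpa [Reg] using h34
  obtain ⟨k, i, j, w, hi, hj, hw, rfl⟩ := hnf
  have hg' : ρ (w * ((x ^ 2) ^ k * (x ^ j * y ^ i))) = 1 := by
    have e1 : (x ^ 2) ^ k * (y ^ i * (w * x ^ j)) = ((x ^ 2) ^ k * y ^ i) * (w * x ^ j) := by
      simp only [mul_assoc]
    rw [e1] at hg
    have := conj _ _ hg
    have e2 : x ^ j * (x ^ 2) ^ k = (x ^ 2) ^ k * x ^ j :=
      (((Commute.refl x).pow_pow j 2).zpow_right k).eq
    have e3 : w * x ^ j * ((x ^ 2) ^ k * y ^ i) = w * ((x ^ 2) ^ k * (x ^ j * y ^ i)) := by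
      rw [mul_assoc, ← mul_assoc (x ^ j), e2, mul_assoc]
    rwa [e3] at this
  interval_cases j
  · interval_cases i
    · simp only [pow_zero, mul_one, one_mul] at hg' ⊢
      cases hw with
      | one =>
        rw [one_mul, hzk] at hg'
        have h2 := congrArg (fun m : GL (Fin 2) F => m.1 0 0) hg'
        have h2' : (t ^ 3) ^ k = 1 := by
          have e : (Units.map (Matrix.scalar (Fin 2) (α := F)).toMonoidHom
              ((Units.mk0 t ht0 ^ 3) ^ k)).1 0 0 = (((Units.mk0 t ht0 ^ 3) ^ k : Fˣ) : F) := by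
            generalize ((Units.mk0 t ht0 ^ 3) ^ k : Fˣ) = c
            simp
          have h2'' := e.symm.trans h2
          simpa using h2''
        have h3 := congrArg v h2'
        rw [map_zpow₀, map_pow, map_one] at h3
        have h4 : 1 < v t ^ 3 := one_lt_pow₀ ht (by norm_num)
        have : k = 0 := by
          rcases lt_trichotomy k 0 with hk | hk | hk
          · exact absurd h3 (zpow_lt_one_of_neg₀ h4 hk).ne
          · exact hk
          · exact absurd h3 (one_lt_zpow₀ h4 hk).ne'
        simp [this]
      | a w hw =>
        exfalso
        have h5 := conj _ _ hg'
        rw [← mul_assoc] at h5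
        exact caseXY w k hw (conj _ _ h5)
      | b w hw =>
        exfalso
        have h5 := conj _ _ hg'
        rw [← mul_assoc] at h5
        exact caseXYY w k hw (conj _ _ h5)
    · exfalso
      refine key w k _ ![1, 0] hw hg' n10 ?_
      simp only [pow_zero, one_mul, pow_one]
      rw [actY]; simp [Reg, ht0, hv0]
    · exfalso
      refine key w k _ ![1, 1] hw hg' n11 ?_
      simp only [pow_zero, one_mul]
      rw [actYY]; simp [Reg, ht0, hv0]
  · exfalso
    interval_cases i
    · refine key w k _ ![1, 0] hw hg' n10 ?_
      simp only [pow_zero, mul_one, pow_one]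
      rw [actX]; simp [Reg, ht0, hv0]
    · simp only [pow_one] at hg'
      exact caseXY w k hw hg'
    · simp only [pow_one] at hg'
      exact caseXYY w k hw hg'

end Rep

theorem braid3_rel : (PresentedGroup.of 0 : BraidGroup3) ^ 2 = (PresentedGroup.of 1) ^ 3 := by
  have h : PresentedGroup.mk braid3Rels
      (FreeGroup.of (0 : Fin 2) ^ 2 * (FreeGroup.of (1 : Fin 2) ^ 3)⁻¹) = 1 :=
    (QuotientGroup.eq_one_iff _).mpr (Subgroup.subset_normalClosure rfl)
  rw [map_mul, map_inv, mul_inv_eq_one, map_pow, map_pow] at h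
  exact h

theorem braid3_hom {H : Type*} [Group H] (X Y : H) (h : X ^ 2 = Y ^ 3) :
    ∃ ρ : BraidGroup3 →* H, ρ (PresentedGroup.of 0) = X ∧ ρ (PresentedGroup.of 1) = Y := by
  have hr : ∀ r ∈ braid3Rels, FreeGroup.lift ![X, Y] r = 1 := by
    intro r hr
    obtain rfl := hr
    simp [h]
  exact ⟨PresentedGroup.toGroup hr, by simp [PresentedGroup.toGroup.of],
    by simp [PresentedGroup.toGroup.of]⟩

theorem braid3_nf (g : BraidGroup3) : HasNF (PresentedGroup.of 0) (PresentedGroup.of 1) g := by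
  apply HasNF.of_closure braid3_rel
  have h := PresentedGroup.closure_range_of braid3Rels
  have h2 : Set.range (PresentedGroup.of : Fin 2 → BraidGroup3) =
      {PresentedGroup.of 0, PresentedGroup.of 1} := by
    ext a; simp [Fin.exists_fin_two, eq_comm]
  rw [← h2, h]
  trivial

theorem braid3_faithful (K : Type*) [Field K] :
    ∃ ρ : BraidGroup3 →* GL (Fin 2) (RatFunc K), Function.Injective ρ := by
  classical
  have ht0 : (RatFunc.X : RatFunc K) ≠ 0 := RatFunc.X_ne_zero
  let X : GL (Fin 2) (RatFunc K) := GeneralLinearGroup.mkOfDetNeZero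
    !![0, RatFunc.X; RatFunc.X ^ 2, 0] (by simp [det_fin_two, ht0])
  let Y : GL (Fin 2) (RatFunc K) := GeneralLinearGroup.mkOfDetNeZero
    !![0, -RatFunc.X; RatFunc.X, -RatFunc.X] (by simp [det_fin_two, ht0])
  have hXY : X ^ 2 = Y ^ 3 := by
    apply Units.ext
    rw [Units.val_pow_eq_pow_val, Units.val_pow_eq_pow_val]
    change !![0, RatFunc.X; RatFunc.X ^ 2, 0] ^ 2 = !![0, -RatFunc.X; RatFunc.X, -RatFunc.X] ^ 3
    ext i j
    fin_cases i <;> fin_cases j <;> simp [pow_succ, mul_apply, Fin.sum_univ_two] <;> ring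
  obtain ⟨ρ, h0, h1⟩ := braid3_hom X Y hXY
  refine ⟨ρ, (injective_iff_map_eq_one ρ).mpr fun g hg => ?_⟩
  refine faithful_core (RatFunc.inftyValuation K) braid3_rel ρ RatFunc.X ?_ ?_ ?_ (braid3_nf g) hg
  · rw [RatFunc.inftyValuation.X, ← WithZero.exp_zero, WithZero.exp_lt_exp]; norm_num
  · rw [h0]; rfl
  · rw [h1]; rfl

/-- For every `p` equal to zero or a prime, the braid group
`B₃` embeds in `GL(2,F)` for some field `F` of characteristic `p`; moreover it
embeds in `GL(1,F')` for no field `F'` (it is nonabelian), so `m_p(B₃) = 2`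
for every such `p`. -/
theorem braid3_min_faithful_dimension_eq_two
    (p : ℕ) (hp : p = 0 ∨ p.Prime) :
    (∃ (F : Type) (_ : Field F), CharP F p ∧
      ∃ ρ : BraidGroup3 →* GL (Fin 2) F, Function.Injective ρ) ∧
    (∀ (F' : Type) [Field F'],
      ¬ ∃ ρ : BraidGroup3 →* GL (Fin 1) F', Function.Injective ρ) := by
  constructor
  · rcases hp with rfl | hp
    · obtain ⟨ρ, hρ⟩ := braid3_faithful ℚ
      exact ⟨RatFunc ℚ, inferInstance, inferInstance, ρ, hρ⟩
    · haveI : Fact p.Prime := ⟨hp⟩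
      obtain ⟨ρ, hρ⟩ := braid3_faithful (ZMod p)
      exact ⟨RatFunc (ZMod p), inferInstance, inferInstance, ρ, hρ⟩
  · rintro F' _ ⟨ρ, hρ⟩
    have hc : ∀ a b : BraidGroup3, a * b = b * a := by
      intro a b
      apply hρ
      rw [map_mul, map_mul]
      ext i j
      fin_cases i; fin_cases j
      simp [Matrix.mul_apply, mul_comm]
    obtain ⟨σ, h0, h1⟩ := braid3_hom (Equiv.swap (0 : Fin 3) 1) (finRotate 3) (by decide)
    have h := congrArg σ (hc (PresentedGroup.of 0) (PresentedGroup.of 1))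
    rw [map_mul, map_mul, h0, h1] at h
    revert h
    decide
end

section
/- Let F₂ be the free group of rank 2 and let α be an automorphism of F₂ whose image in the outer automorphism group Out(F₂) = Aut(F₂)/Inn(F₂) has finite order. Then the semidirect product F₂ ⋊_α ℤ admits an injective group homomorphism into GL(2,ℂ). -/
open scoped MatrixGroups

namespace F2GL

open scoped Pointwise

abbrev F := FreeGroup (Fin 2)
abbrev a : F := FreeGroup.of 0
abbrev b : F := FreeGroup.of 1

/-- The endomorphism sending the generators to `u`, `v`. -/
def hom2 {G : Type*} [Group G] (u v : G) : F →* G := FreeGroup.lift ![u, v]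

@[simp] lemma hom2_a {G : Type*} [Group G] (u v : G) : hom2 u v (FreeGroup.of 0) = u := by
  simp [hom2]
@[simp] lemma hom2_b {G : Type*} [Group G] (u v : G) : hom2 u v (FreeGroup.of 1) = v := by
  simp [hom2]

lemma hom_ext2 {G : Type*} [Group G] {f g : F →* G} (ha : f a = g a) (hb : f b = g b) : f = g := by
  apply FreeGroup.ext_hom
  intro i
  fin_cases i
  · exact ha
  · exact hb

lemma aut_ext2 {f g : MulAut F} (ha : f a = g a) (hb : f b = g b) : f = g := by
  have : f.toMonoidHom = g.toMonoidHom := hom_ext2 ha hb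
  ext x
  exact DFunLike.congr_fun this x

/-- An automorphism from its values and those of its inverse. -/
def mkAut (u v u' v' : F) (h1 : hom2 u' v' u = a) (h2 : hom2 u' v' v = b)
    (h3 : hom2 u v u' = a) (h4 : hom2 u v v' = b) : MulAut F :=
  MonoidHom.toMulEquiv (hom2 u v) (hom2 u' v')
    (hom_ext2 (by simp [h1]) (by simp [h2])) (hom_ext2 (by simp [h3]) (by simp [h4]))

lemma mkAut_a (u v u' v' : F) (h1 : hom2 u' v' u = a) (h2 : hom2 u' v' v = b)
    (h3 : hom2 u v u' = a) (h4 : hom2 u v v' = b) : mkAut u v u' v' h1 h2 h3 h4 a = u := by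
  simp [mkAut]
lemma mkAut_b (u v u' v' : F) (h1 : hom2 u' v' u = a) (h2 : hom2 u' v' v = b)
    (h3 : hom2 u v u' = a) (h4 : hom2 u v v' = b) : mkAut u v u' v' h1 h2 h3 h4 b = v := by
  simp [mkAut]

/-- `a ↦ ab`, `b ↦ a⁻¹`. -/
def tau : MulAut F := mkAut (a * b) a⁻¹ b⁻¹ (b * a) (by simp) (by simp) (by simp) (by simp)
/-- swap -/
def sig : MulAut F := mkAut b a b a (by simp) (by simp) (by simp) (by simp)
/-- `b ↦ b⁻¹` -/
def ib : MulAut F := mkAut a b⁻¹ a b⁻¹ (by simp) (by simp) (by simp) (by simp)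
/-- `a ↦ a⁻¹` -/
def ia : MulAut F := mkAut a⁻¹ b a⁻¹ b (by simp) (by simp) (by simp) (by simp)
/-- `a ↦ b`, `b ↦ a⁻¹` -/
def rot : MulAut F := mkAut b a⁻¹ b⁻¹ a (by simp) (by simp) (by simp) (by simp)
/-- `b ↦ b a ^ k` -/
def shear (k : ℤ) : MulAut F := mkAut a (b * a ^ k) a (b * a ^ (-k))
  (by simp) (by simp) (by simp) (by simp)

@[simp] lemma tau_a : tau (FreeGroup.of 0) = a * b := mkAut_a ..
@[simp] lemma tau_b : tau (FreeGroup.of 1) = a⁻¹ := mkAut_b ..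
@[simp] lemma sig_a : sig (FreeGroup.of 0) = b := mkAut_a ..
@[simp] lemma sig_b : sig (FreeGroup.of 1) = a := mkAut_b ..
@[simp] lemma ib_a : ib (FreeGroup.of 0) = a := mkAut_a ..
@[simp] lemma ib_b : ib (FreeGroup.of 1) = b⁻¹ := mkAut_b ..
@[simp] lemma ia_a : ia (FreeGroup.of 0) = a⁻¹ := mkAut_a ..
@[simp] lemma ia_b : ia (FreeGroup.of 1) = b := mkAut_b ..
@[simp] lemma rot_a : rot (FreeGroup.of 0) = b := mkAut_a ..
@[simp] lemma rot_b : rot (FreeGroup.of 1) = a⁻¹ := mkAut_b ..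
@[simp] lemma shear_a (k : ℤ) : shear k (FreeGroup.of 0) = a := mkAut_a ..
@[simp] lemma shear_b (k : ℤ) : shear k (FreeGroup.of 1) = b * a ^ k := mkAut_b ..

lemma tau_six : tau ^ 6 = MulAut.conj (a * b * a⁻¹ * b⁻¹) := by
  apply aut_ext2 <;> simp [pow_succ, MulAut.mul_apply, mul_assoc]

/-- exponent sums -/
def cnt (i : Fin 2) (w : F) : ℤ :=
  Multiplicative.toAdd (FreeGroup.lift (fun j => Multiplicative.ofAdd (if j = i then (1:ℤ) else 0)) w)

@[simp] lemma cnt_mul (i) (u v : F) : cnt i (u * v) = cnt i u + cnt i v := by simp [cnt]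
@[simp] lemma cnt_one (i) : cnt i 1 = 0 := by simp [cnt]
@[simp] lemma cnt_inv (i) (u : F) : cnt i u⁻¹ = - cnt i u := by simp [cnt]
@[simp] lemma cnt_of (i j : Fin 2) : cnt i (FreeGroup.of j) = if j = i then 1 else 0 := by simp [cnt]
@[simp] lemma cnt_zpow (i) (u : F) (k : ℤ) : cnt i (u ^ k) = k * cnt i u := by simp [cnt]

/-- the action on the abelianization -/
def Mat (α : MulAut F) : Matrix (Fin 2) (Fin 2) ℤ := fun i j => cnt i (α (FreeGroup.of j))

lemma cnt_aut (α : MulAut F) (i) (w : F) :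
    cnt i (α w) = Mat α i 0 * cnt 0 w + Mat α i 1 * cnt 1 w := by
  induction w using FreeGroup.induction_on with
  | C1 => simp
  | of j => fin_cases j <;> simp [Mat]
  | inv_of j h => rw [map_inv, cnt_inv, h]; simp only [cnt_inv]; ring
  | mul u v hu hv => rw [map_mul, cnt_mul, hu, hv]; simp only [cnt_mul]; ring

lemma Mat_mul (α β : MulAut F) : Mat (α * β) = Mat α * Mat β := by
  ext i j
  rw [Matrix.mul_apply, Fin.sum_univ_two]
  exact cnt_aut α i _

lemma Mat_one : Mat 1 = 1 := by
  ext i j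
  fin_cases i <;> fin_cases j <;> simp [Mat]

lemma Mat_conj (g : F) : Mat (MulAut.conj g) = 1 := by
  rw [← Mat_one]
  ext i j
  simp [Mat]

/-- bundled `Mat` -/
def MatHom : MulAut F →* Matrix (Fin 2) (Fin 2) ℤ := ⟨⟨Mat, Mat_one⟩, Mat_mul⟩

lemma Mat_pow (α : MulAut F) (n : ℕ) : Mat (α ^ n) = Mat α ^ n := map_pow MatHom α n

lemma Mat_inv_mul (α : MulAut F) : Mat α⁻¹ * Mat α = 1 := by
  rw [← Mat_mul, inv_mul_cancel, Mat_one]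
lemma Mat_mul_inv (α : MulAut F) : Mat α * Mat α⁻¹ = 1 := by
  rw [← Mat_mul, mul_inv_cancel, Mat_one]

lemma Mat_tau : Mat tau = !![1, -1; 1, 0] := by
  ext i j; fin_cases i <;> fin_cases j <;> simp [Mat]
lemma Mat_sig : Mat sig = !![0, 1; 1, 0] := by
  ext i j; fin_cases i <;> fin_cases j <;> simp [Mat]
lemma Mat_ib : Mat ib = !![1, 0; 0, -1] := by
  ext i j; fin_cases i <;> fin_cases j <;> simp [Mat]
lemma Mat_ia : Mat ia = !![-1, 0; 0, 1] := by
  ext i j; fin_cases i <;> fin_cases j <;> simp [Mat]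
lemma Mat_rot : Mat rot = !![0, -1; 1, 0] := by
  ext i j; fin_cases i <;> fin_cases j <;> simp [Mat]
lemma Mat_shear (k : ℤ) : Mat (shear k) = !![1, k; 0, 1] := by
  ext i j; fin_cases i <;> fin_cases j <;> simp [Mat]

/-! ### Ping-pong -/

/-- nonzero rational vectors -/
def NZ := {v : Fin 2 → ℚ // v ≠ 0}

instance : MulAction SL(2, ℚ) NZ where
  smul g v := ⟨g.1.mulVec v.1, by
    intro h
    apply v.2
    have := congrArg ((g⁻¹).1.mulVec) h
    rw [Matrix.mulVec_mulVec, ← Matrix.SpecialLinearGroup.coe_mul, inv_mul_cancel,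
      Matrix.SpecialLinearGroup.coe_one, Matrix.one_mulVec, Matrix.mulVec_zero] at this
    exact this⟩
  one_smul v := Subtype.ext (by
    change (1 : SL(2, ℚ)).1.mulVec v.1 = v.1
    simp)
  mul_smul g h v := Subtype.ext (by
    change (g * h).1.mulVec v.1 = g.1.mulVec (h.1.mulVec v.1)
    rw [Matrix.mulVec_mulVec, Matrix.SpecialLinearGroup.coe_mul])

lemma NZ_smul (g : SL(2, ℚ)) (v : NZ) : (g • v).1 = g.1.mulVec v.1 := rfl

lemma NZ_ne (v : NZ) : v.1 0 ≠ 0 ∨ v.1 1 ≠ 0 := by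
  by_contra! h
  apply v.2
  ext i
  fin_cases i
  · exact h.1
  · exact h.2

/-- sets of nonzero vectors given by predicates on coordinates -/
def st (P : ℚ → ℚ → Prop) : Set NZ := {v | P (v.1 0) (v.1 1)}

lemma st_disj {P Q : ℚ → ℚ → Prop} (h : ∀ x y, (x ≠ 0 ∨ y ≠ 0) → P x y → Q x y → False) :
    Disjoint (st P) (st Q) := by
  rw [Set.disjoint_left]
  intro v hp hq
  exact h _ _ (NZ_ne v) hp hq

lemma st_ne {P : ℚ → ℚ → Prop} (x y : ℚ) (hx : x ≠ 0 ∨ y ≠ 0) (h : P x y) : (st P).Nonempty := by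
  refine ⟨⟨![x, y], ?_⟩, ?_⟩
  · intro h0
    have h1 := congrFun h0 0
    have h2 := congrFun h0 1
    simp at h1 h2
    tauto
  · exact h

lemma st_sub {P Q : ℚ → ℚ → Prop} {g : SL(2, ℚ)} (p q r s : ℚ) (hg : g.1 = !![p, q; r, s])
    (h : ∀ x y, (x ≠ 0 ∨ y ≠ 0) → ¬ P x y → Q (p * x + q * y) (r * x + s * y)) :
    g • (st P)ᶜ ⊆ st Q := by
  rintro _ ⟨v, hv, rfl⟩
  have := h _ _ (NZ_ne v) hv
  change Q ((g.1.mulVec v.1) 0) ((g.1.mulVec v.1) 1)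
  rw [hg]
  simpa [Matrix.mulVec, dotProduct, Fin.sum_univ_two] using this

lemma pingpong (A B : SL(2, ℚ)) (XA YA XB YB : ℚ → ℚ → Prop)
    (nA : (st XA).Nonempty) (nB : (st XB).Nonempty)
    (d1 : Disjoint (st XA) (st XB)) (d2 : Disjoint (st YA) (st YB))
    (d3 : Disjoint (st XA) (st YA)) (d4 : Disjoint (st XA) (st YB))
    (d5 : Disjoint (st XB) (st YA)) (d6 : Disjoint (st XB) (st YB))
    (a1 : A • (st YA)ᶜ ⊆ st XA) (a2 : A⁻¹ • (st XA)ᶜ ⊆ st YA)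
    (b1 : B • (st YB)ᶜ ⊆ st XB) (b2 : B⁻¹ • (st XB)ᶜ ⊆ st YB) :
    Function.Injective (hom2 A B) := by
  refine FreeGroup.injective_lift_of_ping_pong ![A, B] ![st XA, st XB] ![st YA, st YB]
    ?_ ?_ ?_ ?_ ?_ ?_
  · intro i; fin_cases i <;> assumption
  · intro i j h
    fin_cases i <;> fin_cases j <;> simp_all [Function.onFun, disjoint_comm]
  · intro i j h
    fin_cases i <;> fin_cases j <;> simp_all [Function.onFun, disjoint_comm]
  · intro i j
    fin_cases i <;> fin_cases j <;> simp_all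
  · intro i; fin_cases i <;> simpa
  · intro i; fin_cases i <;> simpa

def A0q : SL(2, ℚ) := ⟨!![2, 1; 1, 1], by norm_num [Matrix.det_fin_two_of]⟩
def B0q : SL(2, ℚ) := ⟨!![2, -1; -1, 1], by norm_num [Matrix.det_fin_two_of]⟩
def A1 : SL(2, ℚ) := ⟨!![5/3, 4/3; 4/3, 5/3], by norm_num [Matrix.det_fin_two_of]⟩
def B1 : SL(2, ℚ) := ⟨!![3, 0; 0, 1/3], by norm_num [Matrix.det_fin_two_of]⟩

lemma A1_inv : (A1⁻¹).1 = !![5/3, -4/3; -4/3, 5/3] := by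
  rw [Matrix.SpecialLinearGroup.coe_inv]; simp [A1, Matrix.adjugate_fin_two_of]; norm_num
lemma B1_inv : (B1⁻¹).1 = !![1/3, 0; 0, 3] := by
  rw [Matrix.SpecialLinearGroup.coe_inv]; simp [B1, Matrix.adjugate_fin_two_of]
lemma A0q_inv : (A0q⁻¹).1 = !![1, -1; -1, 2] := by
  rw [Matrix.SpecialLinearGroup.coe_inv]; simp [A0q, Matrix.adjugate_fin_two_of]
lemma B0q_inv : (B0q⁻¹).1 = !![1, 1; 1, 2] := by
  rw [Matrix.SpecialLinearGroup.coe_inv]; simp [B0q, Matrix.adjugate_fin_two_of]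

lemma inj1 : Function.Injective (hom2 A1 B1) := by
  apply pingpong A1 B1 (fun x y => 9 * (x - y)^2 < (x + y)^2) (fun x y => 9 * (x + y)^2 ≤ (x - y)^2)
    (fun x y => 9 * y^2 < x^2) (fun x y => 9 * x^2 ≤ y^2)
  · exact st_ne 1 1 (by norm_num) (by norm_num)
  · exact st_ne 1 0 (by norm_num) (by norm_num)
  · apply st_disj
    intro x y _ h1 h2; nlinarith [sq_nonneg (x - 4 * y), sq_nonneg (x+y), sq_nonneg (x-y)]
  · apply st_disj
    intro x y h0 h1 h2
    have : 0 < x^2 + y^2 := by rcases h0 with h | h <;> positivity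
    nlinarith [sq_nonneg (4 * x + y), sq_nonneg (x+y), sq_nonneg (x-y)]
  · apply st_disj
    intro x y _ h1 h2; nlinarith [sq_nonneg (x+y), sq_nonneg (x-y)]
  · apply st_disj
    intro x y _ h1 h2; nlinarith [sq_nonneg (4 * x - y), sq_nonneg (x+y), sq_nonneg (x-y)]
  · apply st_disj
    intro x y _ h1 h2; nlinarith [sq_nonneg (x + 4 * y), sq_nonneg (x+y), sq_nonneg (x-y)]
  · apply st_disj
    intro x y _ h1 h2; nlinarith [sq_nonneg (x+y), sq_nonneg (x-y)]
  · apply st_sub _ _ _ _ rfl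
    intro x y _ h1; nlinarith
  · apply st_sub _ _ _ _ A1_inv
    intro x y _ h1; nlinarith
  · apply st_sub _ _ _ _ rfl
    intro x y _ h1; nlinarith
  · apply st_sub _ _ _ _ B1_inv
    intro x y _ h1; nlinarith

lemma inj0q : Function.Injective (hom2 A0q B0q) := by
  apply pingpong A0q B0q (fun x y => 0 ≤ x * y ∧ y^2 < x^2) (fun x y => x * y ≤ 0 ∧ x^2 < y^2)
    (fun x y => x * y < 0 ∧ y^2 ≤ x^2) (fun x y => 0 < x * y ∧ x^2 ≤ y^2)
  · exact st_ne 1 0 (by norm_num) (by norm_num)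
  · exact st_ne 1 (-1) (by norm_num) (by norm_num)
  iterate 6
    · apply st_disj
      intro x y _ h1 h2; linarith
  · apply st_sub _ _ _ _ rfl
    intro x y h0 h1
    have hp : 0 < x^2 + y^2 := by rcases h0 with h | h <;> positivity
    rw [not_and_or, not_le, not_lt] at h1
    constructor <;> rcases h1 with h1 | h1 <;>
      nlinarith [sq_nonneg (x + y), sq_nonneg (x - y), sq_nonneg (3 * x + 2 * y), sq_nonneg x]
  · apply st_sub _ _ _ _ A0q_inv
    intro x y h0 h1
    have hp : 0 < x^2 + y^2 := by rcases h0 with h | h <;> positivity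
    rw [not_and_or, not_le, not_lt] at h1
    constructor <;> rcases h1 with h1 | h1 <;>
      nlinarith [sq_nonneg (x + y), sq_nonneg (x - y), sq_nonneg (3 * x + 2 * y), sq_nonneg x]
  · apply st_sub _ _ _ _ rfl
    intro x y h0 h1
    have hp : 0 < x^2 + y^2 := by rcases h0 with h | h <;> positivity
    rw [not_and_or, not_le, not_lt] at h1
    constructor <;> rcases h1 with h1 | h1 <;>
      nlinarith [sq_nonneg (x + y), sq_nonneg (x - y), sq_nonneg (3 * x + 2 * y), sq_nonneg x]
  · apply st_sub _ _ _ _ B0q_inv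
    intro x y h0 h1
    have hp : 0 < x^2 + y^2 := by rcases h0 with h | h <;> positivity
    rw [not_and_or, not_lt, not_le] at h1
    constructor <;> rcases h1 with h1 | h1 <;>
      nlinarith [sq_nonneg (x + y), sq_nonneg (x - y), sq_nonneg (3 * x + 2 * y), sq_nonneg x]

end F2GL

namespace F2GL

open scoped Pointwise

def A0 : SL(2, ℤ) := ⟨!![2, 1; 1, 1], by norm_num [Matrix.det_fin_two_of]⟩
def B0 : SL(2, ℤ) := ⟨!![2, -1; -1, 1], by norm_num [Matrix.det_fin_two_of]⟩

/-- the modular once-punctured torus representation -/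
def rho0 : F →* SL(2, ℤ) := hom2 A0 B0

@[simp] lemma rho0_a : rho0 (FreeGroup.of 0) = A0 := hom2_a ..
@[simp] lemma rho0_b : rho0 (FreeGroup.of 1) = B0 := hom2_b ..

lemma A0_1 : A0.1 = !![2, 1; 1, 1] := rfl
lemma B0_1 : B0.1 = !![2, -1; -1, 1] := rfl

/-- build an element of `SL(2, ℤ)` from its entries -/
def mkSL (p q r s : ℤ) (h : p * s - q * r = 1) : SL(2, ℤ) :=
  ⟨!![p, q; r, s], by rw [Matrix.det_fin_two_of]; exact h⟩
lemma mkSL_1 (p q r s : ℤ) (h : p * s - q * r = 1) : (mkSL p q r s h).1 = !![p, q; r, s] := rfl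

lemma rho0_inj : Function.Injective rho0 := by
  have h : (Matrix.SpecialLinearGroup.map (Int.castRingHom ℚ)).comp rho0 = hom2 A0q B0q := by
    apply hom_ext2
    · change Matrix.SpecialLinearGroup.map (Int.castRingHom ℚ) (rho0 a) = hom2 A0q B0q a
      rw [rho0_a, hom2_a]
      apply Subtype.ext
      rw [Matrix.SpecialLinearGroup.map_apply_coe, A0_1, show A0q.1 = !![2, 1; 1, 1] from rfl]
      ext i j
      fin_cases i <;> fin_cases j <;> simp
    · change Matrix.SpecialLinearGroup.map (Int.castRingHom ℚ) (rho0 b) = hom2 A0q B0q b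
      rw [rho0_b, hom2_b]
      apply Subtype.ext
      rw [Matrix.SpecialLinearGroup.map_apply_coe, B0_1, show B0q.1 = !![2, -1; -1, 1] from rfl]
      ext i j
      fin_cases i <;> fin_cases j <;> simp
  have h2 := inj0q
  rw [← h] at h2
  exact Function.Injective.of_comp (f := Matrix.SpecialLinearGroup.map (Int.castRingHom ℚ)) h2

lemma SLdet (U : SL(2, ℤ)) : U.1 0 0 * U.1 1 1 - U.1 0 1 * U.1 1 0 = 1 := by
  rw [← Matrix.det_fin_two]; exact U.2

lemma trace2 (m : Matrix (Fin 2) (Fin 2) ℤ) : m.trace = m 0 0 + m 1 1 := Matrix.trace_fin_two m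

/-- trace -/
def tr (U : SL(2, ℤ)) : ℤ := U.1 0 0 + U.1 1 1

lemma inv_entries (U : SL(2, ℤ)) : (U⁻¹).1 = !![U.1 1 1, - U.1 0 1; - U.1 1 0, U.1 0 0] := by
  rw [Matrix.SpecialLinearGroup.coe_inv, Matrix.adjugate_fin_two]

lemma mul_entries (U V : SL(2, ℤ)) : (U * V).1 =
    !![U.1 0 0 * V.1 0 0 + U.1 0 1 * V.1 1 0, U.1 0 0 * V.1 0 1 + U.1 0 1 * V.1 1 1;
       U.1 1 0 * V.1 0 0 + U.1 1 1 * V.1 1 0, U.1 1 0 * V.1 0 1 + U.1 1 1 * V.1 1 1] := by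
  rw [Matrix.SpecialLinearGroup.coe_mul]
  ext i j
  fin_cases i <;> fin_cases j <;> simp [Matrix.mul_apply, Fin.sum_univ_two]

lemma tr_inv (U : SL(2, ℤ)) : tr U⁻¹ = tr U := by
  simp only [tr, inv_entries]; simp [add_comm]

lemma tr_comm (U V : SL(2, ℤ)) : tr (U * V) = tr (V * U) := by
  simp only [tr, mul_entries]; simp; ring

lemma tr_conj (U V : SL(2, ℤ)) : tr (U * V * U⁻¹) = tr V := by
  rw [tr_comm, ← mul_assoc, inv_mul_cancel, one_mul]

lemma tr_mul_inv (U V : SL(2, ℤ)) : tr (U * V⁻¹) = tr U * tr V - tr (U * V) := by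
  simp only [tr, mul_entries, inv_entries]; simp; ring

/-! ### Base lemma -/

lemma SL_ext4 {U V : SL(2, ℤ)} (h1 : U.1 0 0 = V.1 0 0) (h2 : U.1 0 1 = V.1 0 1)
    (h3 : U.1 1 0 = V.1 1 0) (h4 : U.1 1 1 = V.1 1 1) : U = V := by
  ext i j
  fin_cases i <;> fin_cases j <;> assumption

lemma base1 (U V : SL(2, ℤ)) (hU : tr U = 3) (hV : tr V = 3)
    (h1 : U.1 0 1 + V.1 0 1 = 0) (h2 : U.1 1 1 + V.1 1 1 = 2) :
    ∃ P : SL(2, ℤ), (U * P = P * A0 ∧ V * P = P * B0) ∨ (U * P = P * B0 ∧ V * P = P * A0) := by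
  have dU := SLdet U
  have dV := SLdet V
  unfold tr at hU hV
  obtain ⟨p, hp⟩ : ∃ p, U.1 0 0 = p := ⟨_, rfl⟩
  obtain ⟨b, hb⟩ : ∃ p, U.1 0 1 = p := ⟨_, rfl⟩
  obtain ⟨c, hc⟩ : ∃ p, U.1 1 0 = p := ⟨_, rfl⟩
  obtain ⟨s, hs⟩ : ∃ p, U.1 1 1 = p := ⟨_, rfl⟩
  obtain ⟨p', hp'⟩ : ∃ p, V.1 0 0 = p := ⟨_, rfl⟩
  obtain ⟨b', hb'⟩ : ∃ p, V.1 0 1 = p := ⟨_, rfl⟩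
  obtain ⟨c', hc'⟩ : ∃ p, V.1 1 0 = p := ⟨_, rfl⟩
  obtain ⟨s', hs'⟩ : ∃ p, V.1 1 1 = p := ⟨_, rfl⟩
  rw [hp, hs] at hU
  rw [hp', hs'] at hV
  rw [hb, hb'] at h1
  rw [hs, hs'] at h2
  rw [hp, hb, hc, hs] at dU
  rw [hp', hb', hc', hs'] at dV
  obtain rfl : p = 3 - s := by linarith
  obtain rfl : s' = 2 - s := by linarith
  obtain rfl : b' = -b := by linarith
  obtain rfl : p' = 1 + s := by linarith
  have e1 : b * c = 1 + (s - 1) - (s - 1)^2 := by linarith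
  have e2 : b * (c + c') = 2 * (s - 1) := by linarith
  have hb4 : b ∣ 4 := ⟨4 * c - 2 * (c + c') + b * (c + c')^2, by
    have : b * b * (c + c')^2 = (2 * (s-1))^2 := by rw [← e2]; ring
    linear_combination -4 * e1 + 2 * e2 - this⟩
  have hodd : ¬ 2 ∣ b := by
    intro hd
    have h3 : (2 : ℤ) ∣ 1 + (s - 1) - (s - 1)^2 := e1 ▸ hd.mul_right c
    have h4 : (2 : ℤ) ∣ (s - 1) * (s - 1 - 1) := by
      rw [← even_iff_two_dvd]; exact Int.even_mul_pred_self _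
    have h5 : (2 : ℤ) ∣ 1 := by
      have := dvd_add h3 h4
      ring_nf at this
      simpa using this
    norm_num at h5
  have hb1 : b = 1 ∨ b = -1 := by
    have hle : b ≤ 4 := Int.le_of_dvd (by norm_num) hb4
    have hge : -b ≤ 4 := Int.le_of_dvd (by norm_num) ((neg_dvd).2 hb4)
    have : -4 ≤ b := by linarith
    clear e1 e2 dU dV h1
    interval_cases b <;> first | omega | (exfalso; revert hb4; decide)
  rcases hb1 with rfl | rfl
  · refine ⟨mkSL 1 0 (s - 1) 1 (by ring), Or.inl ⟨?_, ?_⟩⟩ <;>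
    · apply SL_ext4 <;> rw [mul_entries, mul_entries, mkSL_1] <;> simp [A0_1, B0_1, hp, hb, hc, hs, hp', hb', hc', hs'] <;> linarith
  · refine ⟨mkSL 1 0 (-(s - 1)) 1 (by ring), Or.inr ⟨?_, ?_⟩⟩ <;>
    · apply SL_ext4 <;> rw [mul_entries, mul_entries, mkSL_1] <;> simp [A0_1, B0_1, hp, hb, hc, hs, hp', hb', hc', hs'] <;> linarith

lemma base2 (U V : SL(2, ℤ)) (hU : tr U = 3) (hV : tr V = 3) (hUV : tr (U * V) = 3) :
    ∃ P : SL(2, ℤ), (U * P = P * A0 ∧ V * P = P * B0) ∨ (U * P = P * B0 ∧ V * P = P * A0) := by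
  have hdet : (U.1 + V.1 - 2).det = 0 := by
    have dU := SLdet U
    have dV := SLdet V
    simp only [tr, mul_entries] at hU hV hUV
    rw [Matrix.det_fin_two]
    simp at hUV ⊢
    simp [Matrix.ofNat_apply]
    have k : (U.1 0 0 + U.1 1 1) * (V.1 0 0 + V.1 1 1) = 9 := by rw [hU, hV]; norm_num
    linear_combination dU + dV - hUV + k - 2 * hU - 2 * hV
  obtain ⟨v, hv0, hv⟩ := Matrix.exists_mulVec_eq_zero_iff.2 hdet
  have hg : 0 < Int.gcd (v 0) (v 1) := by
    rw [Int.gcd_pos_iff]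
    by_contra! h
    apply hv0
    ext i
    fin_cases i
    · exact h.1
    · exact h.2
  obtain ⟨m, n, hco, hm, hn⟩ := Int.exists_gcd_one hg
  set g : ℤ := (Int.gcd (v 0) (v 1) : ℤ) with hgd
  have hg0 : g ≠ 0 := by positivity
  have r0 : (U.1 0 0 + V.1 0 0 - 2) * m + (U.1 0 1 + V.1 0 1) * n = 0 := by
    have := congrFun hv 0
    simp [Matrix.mulVec, dotProduct, Fin.sum_univ_two, Matrix.ofNat_apply] at this
    rw [hm, hn] at this
    apply mul_right_cancel₀ hg0
    linarith
  have r1 : (U.1 1 0 + V.1 1 0) * m + (U.1 1 1 + V.1 1 1 - 2) * n = 0 := by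
    have := congrFun hv 1
    simp [Matrix.mulVec, dotProduct, Fin.sum_univ_two, Matrix.ofNat_apply] at this
    rw [hm, hn] at this
    apply mul_right_cancel₀ hg0
    linarith
  obtain ⟨x, y, hxy⟩ := Int.isCoprime_iff_gcd_eq_one.2 hco
  -- x * m + y * n = 1
  let P : SL(2, ℤ) := ⟨!![y, m; -x, n], by rw [Matrix.det_fin_two_of]; linarith⟩
  have P00 : P.1 0 0 = y := rfl
  have P01 : P.1 0 1 = m := rfl
  have P10 : P.1 1 0 = -x := rfl
  have P11 : P.1 1 1 = n := rfl
  have c1 : tr (P⁻¹ * U * P) = 3 := by rw [← hU]; simpa using tr_conj P⁻¹ U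
  have c2 : tr (P⁻¹ * V * P) = 3 := by rw [← hV]; simpa using tr_conj P⁻¹ V
  obtain ⟨R, hR⟩ := base1 (P⁻¹ * U * P) (P⁻¹ * V * P) c1 c2 (by
      simp only [mul_entries, inv_entries]
      simp [P00, P01, P10, P11]
      linear_combination n * r0 - m * r1) (by
      simp only [mul_entries, inv_entries]
      simp [P00, P01, P10, P11]
      linear_combination x * r0 + y * r1 + 2 * hxy)
  refine ⟨P * R, ?_⟩
  have key : ∀ X Y : SL(2, ℤ), P⁻¹ * X * P * R = R * Y → X * (P * R) = P * R * Y := by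
    intro X Y h
    rw [mul_assoc P R Y, ← h]
    group
  rcases hR with ⟨h, hV2⟩ | ⟨h, hV2⟩
  · exact Or.inl ⟨key _ _ h, key _ _ hV2⟩
  · exact Or.inr ⟨key _ _ h, key _ _ hV2⟩

/-! ### The normaliser -/

lemma S_1 : ModularGroup.S.1 = !![0, -1; 1, 0] := rfl
lemma T_1 : ModularGroup.T.1 = !![1, 1; 0, 1] := rfl

lemma tau_S : (MulAut.conj ModularGroup.S).toMonoidHom.comp rho0 =
    rho0.comp (MulAut.conj (a * b)⁻¹ * tau ^ (3 : ℤ)).toMonoidHom := by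
  have h : (tau ^ (3 : ℤ)) = tau * tau * tau := by
    rw [show (3 : ℤ) = 1 + 1 + 1 by norm_num, zpow_add, zpow_add, zpow_one]
  rw [h]
  apply hom_ext2
  · simp [mul_assoc]
    apply SL_ext4 <;> simp only [A0_1, B0_1, S_1, mul_entries, inv_entries] <;> simp
  · simp [mul_assoc]
    apply SL_ext4 <;> simp only [A0_1, B0_1, S_1, mul_entries, inv_entries] <;> simp

lemma tau_T : (MulAut.conj ModularGroup.T).toMonoidHom.comp rho0 =
    rho0.comp (MulAut.conj 1 * tau ^ (1 : ℤ)).toMonoidHom := by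
  apply hom_ext2
  · simp [mul_assoc]
    apply SL_ext4 <;> simp only [A0_1, B0_1, T_1, mul_entries, inv_entries] <;> simp
  · simp [mul_assoc]
    apply SL_ext4 <;> simp only [A0_1, B0_1, T_1, mul_entries, inv_entries] <;> simp

lemma conj_aut (δ : MulAut F) (g : F) : δ * MulAut.conj g = MulAut.conj (δ g) * δ := by
  ext w
  simp

lemma normal_SL (P : SL(2, ℤ)) : ∃ (g : F) (j : ℤ), ∀ w,
    P * rho0 w * P⁻¹ = rho0 ((MulAut.conj g * tau ^ j) w) := by
  have hP : P ∈ Subgroup.closure {ModularGroup.S, ModularGroup.T} := by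
    simp [SpecialLinearGroup.SL2Z_generators]
  induction hP using Subgroup.closure_induction with
  | mem x hx =>
    rcases hx with rfl | hx
    · exact ⟨_, _, fun w => DFunLike.congr_fun tau_S w⟩
    · rw [Set.mem_singleton_iff] at hx
      subst hx
      exact ⟨_, _, fun w => DFunLike.congr_fun tau_T w⟩
  | one => exact ⟨1, 0, fun w => by simp⟩
  | mul x y _ _ hx hy =>
    obtain ⟨g, j, hx⟩ := hx
    obtain ⟨g', j', hy⟩ := hy
    refine ⟨g * (tau ^ j) g', j + j', fun w => ?_⟩
    have : MulAut.conj (g * (tau ^ j) g') * tau ^ (j + j') =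
        (MulAut.conj g * tau ^ j) * (MulAut.conj g' * tau ^ j') := by
      have hc := conj_aut (tau ^ j) g'
      rw [map_mul, zpow_add]
      calc _ = MulAut.conj g * (MulAut.conj ((tau ^ j) g') * tau ^ j) * tau ^ j' := by
            simp only [mul_assoc]
        _ = _ := by rw [← hc]; simp only [mul_assoc]
    rw [this, MulAut.mul_apply, ← hx, ← hy]
    group
  | inv x _ hx =>
    obtain ⟨g, j, hx⟩ := hx
    refine ⟨(tau ^ (-j)) g⁻¹, -j, fun w => ?_⟩
    have : MulAut.conj ((tau ^ (-j)) g⁻¹) * tau ^ (-j) = (MulAut.conj g * tau ^ j)⁻¹ := by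
      rw [← conj_aut]; simp
    rw [this]
    have h := hx ((MulAut.conj g * tau ^ j)⁻¹ w)
    rw [MulAut.apply_inv_self] at h
    rw [← h]
    group

lemma eq_of_sq {u v : F} (h : (rho0 u) = rho0 v ∨ rho0 u = - rho0 v) : u = v := by
  have h2 : u ^ 2 = v ^ 2 := by
    apply rho0_inj
    rw [map_pow, map_pow]
    rcases h with h | h <;> rw [h]
    rw [sq, sq, neg_mul_neg]
  exact pow_left_injective (two_ne_zero) h2

/-- trace of a word -/
def t (w : F) : ℤ := tr (rho0 w)

lemma tr_neg (U : SL(2, ℤ)) : tr (-U) = - tr U := by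
  simp [tr]; ring

lemma base3 (γ : MulAut F) (hx : |t (γ a)| = 3) (hy : |t (γ b)| = 3) (hz : |t (γ (a * b))| = 3)
    (hpos : 0 < t (γ a) * t (γ b) * t (γ (a * b))) :
    ∃ (g : F) (j : ℤ), γ = MulAut.conj g * tau ^ j ∨ γ = MulAut.conj g * tau ^ j * sig := by
  have hU : ∃ U : SL(2, ℤ), (rho0 (γ a) = U ∨ rho0 (γ a) = -U) ∧ tr U = 3 ∧
      ∃ V : SL(2, ℤ), (rho0 (γ b) = V ∨ rho0 (γ b) = -V) ∧ tr V = 3 ∧ tr (U * V) = 3 := by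
    unfold t at *
    rw [map_mul γ, map_mul] at hz hpos
    generalize rho0 (γ a) = X at *
    generalize rho0 (γ b) = Y at *
    rcases abs_eq (by norm_num : (0:ℤ) ≤ 3) |>.1 hx with h1 | h1 <;>
    rcases abs_eq (by norm_num : (0:ℤ) ≤ 3) |>.1 hy with h2 | h2 <;>
    rcases abs_eq (by norm_num : (0:ℤ) ≤ 3) |>.1 hz with h3 | h3 <;>
    rw [h1, h2, h3] at hpos <;> norm_num at hpos
    · exact ⟨X, by simp, h1, Y, by simp, h2, h3⟩
    · exact ⟨X, by simp, h1, -Y, by simp, by rw [tr_neg, h2]; rfl, by rw [mul_neg, tr_neg, h3]; rfl⟩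
    · exact ⟨-X, by simp, by rw [tr_neg, h1]; rfl, Y, by simp, h2, by rw [neg_mul, tr_neg, h3]; rfl⟩
    · exact ⟨-X, by simp, by rw [tr_neg, h1]; rfl, -Y, by simp, by rw [tr_neg, h2]; rfl,
        by rw [neg_mul_neg, h3]⟩
  obtain ⟨U, hU, hU3, V, hV, hV3, hUV⟩ := hU
  obtain ⟨P, hP⟩ := base2 U V hU3 hV3 hUV
  obtain ⟨g, j, hg⟩ := normal_SL P
  refine ⟨g, j, ?_⟩
  rcases hP with ⟨h, h'⟩ | ⟨h, h'⟩
  · left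
    apply aut_ext2
    · apply eq_of_sq
      rw [← hg, rho0_a, ← h, mul_inv_cancel_right]
      exact hU
    · apply eq_of_sq
      rw [← hg, rho0_b, ← h', mul_inv_cancel_right]
      exact hV
  · right
    apply aut_ext2
    · apply eq_of_sq
      rw [MulAut.mul_apply F (MulAut.conj g * tau ^ j) sig, sig_a, ← hg, rho0_b, ← h, mul_inv_cancel_right]
      exact hU
    · apply eq_of_sq
      rw [MulAut.mul_apply F (MulAut.conj g * tau ^ j) sig, sig_b, ← hg, rho0_a, ← h', mul_inv_cancel_right]
      exact hV

end F2GL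

namespace F2GL

open scoped Pointwise

lemma t_one : t 1 = 2 := by
  unfold t tr
  rw [map_one, Matrix.SpecialLinearGroup.coe_one]
  simp

lemma t_ne_zero (w : F) : t w ≠ 0 := by
  intro h
  have hd := SLdet (rho0 w)
  have h2 : rho0 (w ^ 2) = - rho0 1 := by
    rw [map_pow, sq, map_one]
    unfold t tr at h
    have e : ((- 1 : SL(2, ℤ))).1 = !![-1, 0; 0, -1] := by
      rw [Matrix.SpecialLinearGroup.coe_neg, Matrix.SpecialLinearGroup.coe_one]
      ext i j
      fin_cases i <;> fin_cases j <;> simp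
    have hs : (rho0 w).1 1 1 = - (rho0 w).1 0 0 := by linarith
    rw [hs] at hd
    apply SL_ext4 <;> rw [mul_entries, e] <;> simp <;> (try rw [hs]) <;> linarith
  have h3 : w ^ 2 = 1 := eq_of_sq (Or.inr h2)
  have h4 : w = 1 := by
    apply pow_left_injective (two_ne_zero)
    simpa using h3
  rw [h4, t_one] at h
  norm_num at h

/-! ### Reduction mod 3 -/

/-- membership in the quaternion group -/
def Qz (p q r s : ZMod 3) : Prop := p * s - q * r = 1 ∧ (p + s = 0 ∨ (q = 0 ∧ r = 0 ∧ p = s))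

instance (p q r s : ZMod 3) : Decidable (Qz p q r s) := by unfold Qz; infer_instance

lemma Qz_mul : ∀ p q r s : ZMod 3, Qz p q r s → ∀ p' q' r' s' : ZMod 3, Qz p' q' r' s' →
    Qz (p * p' + q * r') (p * q' + q * s') (r * p' + s * r') (r * q' + s * s') := by decide

lemma Qz_inv : ∀ p q r s : ZMod 3, Qz p q r s → Qz s (-q) (-r) p := by decide

/-- quaternion condition for integral matrices -/
def Q8 (U : SL(2, ℤ)) : Prop := Qz (U.1 0 0) (U.1 0 1) (U.1 1 0) (U.1 1 1)

lemma Q8_mul {U V : SL(2, ℤ)} (hU : Q8 U) (hV : Q8 V) : Q8 (U * V) := by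
  unfold Q8 at *
  rw [mul_entries]
  have := Qz_mul _ _ _ _ hU _ _ _ _ hV
  simpa using this

lemma Q8_inv {U : SL(2, ℤ)} (hU : Q8 U) : Q8 U⁻¹ := by
  unfold Q8 at *
  rw [inv_entries]
  have := Qz_inv _ _ _ _ hU
  simpa using this

lemma Q8_rho (w : F) : Q8 (rho0 w) := by
  induction w using FreeGroup.induction_on with
  | C1 =>
    unfold Q8
    rw [map_one, Matrix.SpecialLinearGroup.coe_one]
    simp
    decide
  | of j =>
    fin_cases j
    · change Q8 (rho0 a)
      rw [rho0_a]; unfold Q8; rw [A0_1]; simp; decide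
    · change Q8 (rho0 b)
      rw [rho0_b]; unfold Q8; rw [B0_1]; simp; decide
  | inv_of j h => rw [map_inv]; exact Q8_inv h
  | mul u v hu hv => rw [map_mul]; exact Q8_mul hu hv

/-- reduction mod 3 -/
def red3 : SL(2, ℤ) →* SL(2, ZMod 3) := Matrix.SpecialLinearGroup.map (Int.castRingHom (ZMod 3))

lemma red3_apply (U : SL(2, ℤ)) (i j) : (red3 U).1 i j = (U.1 i j : ZMod 3) := rfl

lemma commute_all {G : Type*} [Group G] (f : F →* G) (x : G) (ha : Commute (f a) x)
    (hb : Commute (f b) x) (w : F) : Commute (f w) x := by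
  induction w using FreeGroup.induction_on with
  | C1 => rw [map_one]; exact Commute.one_left x
  | of j =>
    fin_cases j
    · exact ha
    · exact hb
  | inv_of j h => rw [map_inv]; exact h.inv_left
  | mul u v hu hv => rw [map_mul]; exact hu.mul_left hv

lemma three_dvd (α : MulAut F) : 3 ∣ t (α a) := by
  rcases (Q8_rho (α a)).2 with h | ⟨h1, h2, h3⟩
  · unfold t tr
    rw [← Int.cast_add] at h
    exact (ZMod.intCast_zmod_eq_zero_iff_dvd _ 3).1 h
  · exfalso
    set f : F →* SL(2, ZMod 3) := red3.comp (rho0.comp α.toMonoidHom) with hf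
    have fa : f a = red3 (rho0 (α a)) := rfl
    have hc : ∀ x, Commute (f a) x := by
      intro x
      rw [fa]
      apply Subtype.ext
      rw [Matrix.SpecialLinearGroup.coe_mul, Matrix.SpecialLinearGroup.coe_mul]
      ext i j
      rw [← red3_apply] at h1 h2 h3
      rw [← red3_apply] at h3
      fin_cases i <;> fin_cases j <;>
        simp [Matrix.mul_apply, Fin.sum_univ_two, h1, h2, h3] <;> ring
    have h1 : ∀ w, Commute (f w) (f b) := commute_all f (f b) (hc _) (Commute.refl _)
    have h2 : ∀ v w, Commute (f v) (f w) := fun v w =>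
      commute_all f (f w) (hc _) (h1 w).symm v
    have h3 := h2 (α⁻¹ a) (α⁻¹ b)
    have e1 : ∀ w, f (α⁻¹ w) = red3 (rho0 w) := by
      intro w
      change red3 (rho0 (α (α⁻¹ w))) = _
      rw [MulAut.apply_inv_self]
    rw [e1, e1, rho0_a, rho0_b] at h3
    have h4 := congrArg (fun m : SL(2, ZMod 3) => m.1 0 1) h3.eq
    rw [← map_mul, ← map_mul] at h4
    simp only [red3_apply, mul_entries, A0_1, B0_1] at h4
    revert h4
    simp
    try decide

/-! ### The span -/

/-- membership in the span of `1, U, V, UV` -/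
def InS (U V m : Matrix (Fin 2) (Fin 2) ℤ) : Prop :=
  ∃ c : Fin 4 → ℤ, m = c 0 • 1 + c 1 • U + c 2 • V + c 3 • (U * V)

section
variable (U V : SL(2, ℤ))

lemma idUU : U.1 * U.1 = tr U • U.1 - 1 := by
  have h := SLdet U
  ext i j
  fin_cases i <;> fin_cases j <;> simp [-zsmul_eq_mul, -zsmul_one, Matrix.mul_apply, Fin.sum_univ_two, tr] <;>
    linarith

lemma idVU : V.1 * U.1 = - (U.1 * V.1) + tr U • V.1 + tr V • U.1 +
    (tr (U * V) - tr U * tr V) • (1 : Matrix (Fin 2) (Fin 2) ℤ) := by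
  unfold tr
  rw [mul_entries]
  ext i j
  fin_cases i <;> fin_cases j <;> simp [-zsmul_eq_mul, -zsmul_one, Matrix.mul_apply, Fin.sum_univ_two] <;>
    ring

lemma idUVU : U.1 * (V.1 * U.1) = tr (U * V) • U.1 - tr V • 1 + V.1 := by
  have h := SLdet U
  unfold tr
  rw [mul_entries]
  ext i j
  fin_cases i <;> fin_cases j <;> simp [-zsmul_eq_mul, -zsmul_one, Matrix.mul_apply, Fin.sum_univ_two]
  · linear_combination - V.1 1 1 * h
  · linear_combination V.1 0 1 * h
  · linear_combination V.1 1 0 * h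
  · linear_combination - V.1 0 0 * h

lemma inS_mulU {m} (h : InS U.1 V.1 m) : InS U.1 V.1 (m * U.1) := by
  obtain ⟨c, rfl⟩ := h
  refine ⟨![- c 1 + c 2 * (tr (U * V) - tr U * tr V) - c 3 * tr V,
    c 0 + c 1 * tr U + c 2 * tr V + c 3 * tr (U * V), c 2 * tr U + c 3, - c 2], ?_⟩
  simp only [add_mul, smul_mul_assoc, mul_assoc, idUVU]
  rw [idUU, idVU]
  simp [-zsmul_eq_mul, -zsmul_one]
  module

lemma inS_mulV {m} (h : InS U.1 V.1 m) : InS U.1 V.1 (m * V.1) := by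
  obtain ⟨c, rfl⟩ := h
  refine ⟨![- c 2, - c 3, c 0 + c 2 * tr V, c 1 + c 3 * tr V], ?_⟩
  simp only [add_mul, smul_mul_assoc, mul_assoc, idUU V, mul_sub, mul_smul_comm]
  simp [-zsmul_eq_mul, -zsmul_one]
  module

lemma inS_sub {m m'} (k : ℤ) (h : InS U.1 V.1 m) (h' : InS U.1 V.1 m') :
    InS U.1 V.1 (k • m - m') := by
  obtain ⟨c, rfl⟩ := h
  obtain ⟨c', rfl⟩ := h'
  refine ⟨k • c - c', ?_⟩
  simp [-zsmul_eq_mul, -zsmul_one]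
  module

lemma inv_eq : (U⁻¹).1 = tr U • 1 - U.1 := by
  rw [inv_entries]
  ext i j
  fin_cases i <;> fin_cases j <;> simp [-zsmul_eq_mul, -zsmul_one, tr]

lemma inS_all (f : F →* SL(2, ℤ)) (w : F) : ∀ m, InS (f a).1 (f b).1 m →
    InS (f a).1 (f b).1 (m * (f w).1) := by
  have hof : ∀ j : Fin 2, ∀ m, InS (f a).1 (f b).1 m →
    InS (f a).1 (f b).1 (m * (f (FreeGroup.of j)).1) := by
    intro j m h
    fin_cases j
    · exact inS_mulU _ _ h
    · exact inS_mulV _ _ h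
  induction w using FreeGroup.induction_on with
  | C1 => intro m h; rw [map_one, Matrix.SpecialLinearGroup.coe_one, mul_one]; exact h
  | of j => exact hof j
  | inv_of j _ =>
    intro m h
    rw [map_inv, inv_eq, mul_sub, mul_smul_comm, mul_one]
    exact inS_sub _ _ _ h (hof j m h)
  | mul u v hu hv =>
    intro m h
    rw [map_mul, Matrix.SpecialLinearGroup.coe_mul, ← mul_assoc]
    exact hv _ (hu _ h)

/-- flattening -/
def flat (m : Fin 4 → Matrix (Fin 2) (Fin 2) ℤ) : Matrix (Fin 4) (Fin 4) ℤ :=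
  fun i => ![m i 0 0, m i 0 1, m i 1 0, m i 1 1]

lemma det4 (p q r s p' q' r' s' p'' q'' r'' s'' : ℤ) :
    (!![1, 0, 0, 1; p, q, r, s; p', q', r', s'; p'', q'', r'', s''] : Matrix (Fin 4) (Fin 4) ℤ).det
    = (q * (r' * s'' - s' * r'') - r * (q' * s'' - s' * q'') + s * (q' * r'' - r' * q''))
    - (p * (q' * r'' - r' * q'') - q * (p' * r'' - r' * p'') + r * (p' * q'' - q' * p'')) := by
  rw [Matrix.det_succ_row_zero, Fin.sum_univ_four]
  have h1 : (!![1, 0, 0, 1; p, q, r, s; p', q', r', s'; p'', q'', r'', s''] :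
    Matrix (Fin 4) (Fin 4) ℤ).submatrix Fin.succ (Fin.succAbove 0) =
      !![q, r, s; q', r', s'; q'', r'', s''] := by
    ext i j
    fin_cases i <;> fin_cases j <;> rfl
  have h2 : (!![1, 0, 0, 1; p, q, r, s; p', q', r', s'; p'', q'', r'', s''] :
    Matrix (Fin 4) (Fin 4) ℤ).submatrix Fin.succ (Fin.succAbove 3) =
      !![p, q, r; p', q', r'; p'', q'', r''] := by
    ext i j
    fin_cases i <;> fin_cases j <;> rfl
  have e0 : (!![1, 0, 0, 1; p, q, r, s; p', q', r', s'; p'', q'', r'', s''] :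
    Matrix (Fin 4) (Fin 4) ℤ) 0 = ![1, 0, 0, 1] := rfl
  rw [h1, h2, e0]
  simp only [Matrix.det_fin_three]
  simp
  ring

lemma flat_det : (flat ![1, U.1, V.1, U.1 * V.1]).det =
    -(tr U ^ 2 + tr V ^ 2 + tr (U * V) ^ 2 - tr U * tr V * tr (U * V) - 4) := by
  have hU := SLdet U
  have hV := SLdet V
  unfold tr
  rw [mul_entries]
  have e : flat ![1, U.1, V.1, U.1 * V.1] = !![1, 0, 0, 1;
      U.1 0 0, U.1 0 1, U.1 1 0, U.1 1 1; V.1 0 0, V.1 0 1, V.1 1 0, V.1 1 1;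
      U.1 0 0 * V.1 0 0 + U.1 0 1 * V.1 1 0, U.1 0 0 * V.1 0 1 + U.1 0 1 * V.1 1 1,
      U.1 1 0 * V.1 0 0 + U.1 1 1 * V.1 1 0, U.1 1 0 * V.1 0 1 + U.1 1 1 * V.1 1 1] := by
    rw [← Matrix.SpecialLinearGroup.coe_mul, mul_entries, Matrix.one_fin_two]
    ext i j
    fin_cases i <;> fin_cases j <;> rfl
  rw [e, det4]
  simp
  linear_combination (-1) * ((U.1 0 0 + U.1 1 1) ^ 2 * hV + (V.1 0 0 + V.1 1 1) ^ 2 * hU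
    - 4 * ((V.1 0 0 * V.1 1 1 - V.1 0 1 * V.1 1 0) * hU + hV))

lemma flat_mul (m m' : Fin 4 → Matrix (Fin 2) (Fin 2) ℤ) (C : Fin 4 → Fin 4 → ℤ)
    (h : ∀ i, m i = C i 0 • m' 0 + C i 1 • m' 1 + C i 2 • m' 2 + C i 3 • m' 3) :
    flat m = Matrix.of C * flat m' := by
  ext i j
  rw [Matrix.mul_apply, Fin.sum_univ_four]
  simp only [flat, h]
  fin_cases j <;> simp [-zsmul_eq_mul, -zsmul_one]
end

lemma t_mul_eq (α : MulAut F) : tr (rho0 (α a) * rho0 (α b)) = t (α (a * b)) := by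
  rw [t, map_mul, map_mul]

lemma markov_dvd (α : MulAut F) :
    t (α a) ^ 2 + t (α b) ^ 2 + t (α (a * b)) ^ 2 - t (α a) * t (α b) * t (α (a * b)) - 4 ∣ 4 := by
  set f : F →* SL(2, ℤ) := rho0.comp α.toMonoidHom with hf
  have hall : ∀ w, InS (f a).1 (f b).1 (rho0 w).1 := by
    intro w
    have h := inS_all f (α⁻¹ w) 1 ⟨![1, 0, 0, 0], by simp⟩
    rw [one_mul] at h
    have e : f (α⁻¹ w) = rho0 w := by
      change rho0 (α (α⁻¹ w)) = _
      rw [MulAut.apply_inv_self]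
    rwa [e] at h
  obtain ⟨c1, h1⟩ := hall 1
  obtain ⟨c2, h2⟩ := hall a
  obtain ⟨c3, h3⟩ := hall b
  obtain ⟨c4, h4⟩ := hall (a * b)
  rw [map_one, Matrix.SpecialLinearGroup.coe_one] at h1
  rw [rho0_a] at h2
  rw [rho0_b] at h3
  rw [map_mul, rho0_a, rho0_b, Matrix.SpecialLinearGroup.coe_mul] at h4
  have key := flat_mul ![1, A0.1, B0.1, A0.1 * B0.1] ![1, (f a).1, (f b).1, (f a).1 * (f b).1]
    ![c1, c2, c3, c4] (by
      intro i
      fin_cases i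
      · exact h1
      · exact h2
      · exact h3
      · exact h4)
  have kd := congrArg Matrix.det key
  rw [Matrix.det_mul, flat_det, flat_det] at kd
  have e1 : -(tr A0 ^ 2 + tr B0 ^ 2 + tr (A0 * B0) ^ 2 - tr A0 * tr B0 * tr (A0 * B0) - 4) = 4 := by
    unfold tr
    rw [mul_entries, A0_1, B0_1]
    simp
  rw [e1] at kd
  have e2 : tr (f a * f b) = t (α (a * b)) := t_mul_eq α
  have e3 : tr (f a) = t (α a) := rfl
  have e4 : tr (f b) = t (α b) := rfl
  rw [e2, e3, e4] at kd
  exact ⟨-(Matrix.of ![c1, c2, c3, c4]).det, by linear_combination kd⟩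

lemma t_inv (w : F) : t w⁻¹ = t w := by rw [t, map_inv, tr_inv]; rfl

lemma t_conj (g w : F) : t (g * w * g⁻¹) = t w := by
  rw [t, map_mul, map_mul, map_inv, tr_conj]; rfl

lemma t_mul_inv (u v : F) : t (u * v⁻¹) = t u * t v - t (u * v) := by
  simp only [t, map_mul, map_inv, tr_mul_inv]

lemma markov (α : MulAut F) :
    t (α a) ^ 2 + t (α b) ^ 2 + t (α (a * b)) ^ 2 = t (α a) * t (α b) * t (α (a * b)) := by
  have h := markov_dvd α
  have h1 := three_dvd α
  have h2 := three_dvd (α * sig)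
  have h3 := three_dvd (α * tau)
  rw [MulAut.mul_apply, sig_a] at h2
  rw [MulAut.mul_apply, tau_a] at h3
  obtain ⟨x, hx⟩ := h1
  obtain ⟨y, hy⟩ := h2
  obtain ⟨z, hz⟩ := h3
  rw [hx, hy, hz] at h ⊢
  obtain ⟨n, hn⟩ : ∃ n, n = x ^ 2 + y ^ 2 + z ^ 2 - 3 * x * y * z := ⟨_, rfl⟩
  have e : (3 * x) ^ 2 + (3 * y) ^ 2 + (3 * z) ^ 2 - 3 * x * (3 * y) * (3 * z) - 4 = 9 * n - 4 := by
    rw [hn]; ring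
  rw [e] at h
  have l1 := Int.le_of_dvd (by norm_num) h
  have l2 := Int.le_of_dvd (by norm_num) ((neg_dvd).2 h)
  have : n = 0 := by omega
  rw [this] at hn
  linear_combination -9 * hn

lemma markov_pos (α : MulAut F) : 0 < t (α a) * t (α b) * t (α (a * b)) := by
  rw [← markov]
  have := t_ne_zero (α a)
  positivity

end F2GL

namespace F2GL

open scoped Pointwise

/-- the quadratic form of the hexagonal lattice -/
def qf (x y : ℤ) : ℤ := x ^ 2 - x * y + y ^ 2

/-- absolute traces and norms -/
def tX (α : MulAut F) : ℤ := |t (α a)|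
def tY (α : MulAut F) : ℤ := |t (α b)|
def tZ (α : MulAut F) : ℤ := |t (α (a * b))|
def nP (α : MulAut F) : ℤ := qf (Mat α 0 0) (Mat α 1 0)
def nQ (α : MulAut F) : ℤ := qf (Mat α 0 1) (Mat α 1 1)
def nR (α : MulAut F) : ℤ := qf (Mat α 0 0 + Mat α 0 1) (Mat α 1 0 + Mat α 1 1)

lemma qf_nonneg (x y : ℤ) : 0 ≤ qf x y := by
  unfold qf; nlinarith [sq_nonneg (x - y), sq_nonneg x, sq_nonneg y]

lemma tX_tau (α : MulAut F) : tX (α * tau) = tZ α := by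
  rw [tX, MulAut.mul_apply, tau_a]; rfl
lemma tY_tau (α : MulAut F) : tY (α * tau) = tX α := by
  rw [tY, MulAut.mul_apply, tau_b, map_inv, t_inv]; rfl
lemma tZ_tau (α : MulAut F) : tZ (α * tau) = tY α := by
  rw [tZ, MulAut.mul_apply, map_mul tau, tau_a, tau_b, map_mul, map_mul, map_inv, t_conj]; rfl

lemma Mat_mul_tau (α : MulAut F) (i) : Mat (α * tau) i 0 = Mat α i 0 + Mat α i 1 ∧
    Mat (α * tau) i 1 = - Mat α i 0 := by
  rw [Mat_mul, Mat_tau]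
  simp [Matrix.mul_apply, Fin.sum_univ_two]

lemma Mat_mul_ib (α : MulAut F) (i) : Mat (α * ib) i 0 = Mat α i 0 ∧
    Mat (α * ib) i 1 = - Mat α i 1 := by
  rw [Mat_mul, Mat_ib]
  simp [Matrix.mul_apply, Fin.sum_univ_two]

lemma Mat_mul_sig (α : MulAut F) (i) : Mat (α * sig) i 0 = Mat α i 1 ∧
    Mat (α * sig) i 1 = Mat α i 0 := by
  rw [Mat_mul, Mat_sig]
  simp [Matrix.mul_apply, Fin.sum_univ_two]

lemma nP_tau (α : MulAut F) : nP (α * tau) = nR α := by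
  unfold nP nR qf; simp only [(Mat_mul_tau α _).1]
lemma nQ_tau (α : MulAut F) : nQ (α * tau) = nP α := by
  unfold nP nQ qf; simp only [(Mat_mul_tau α _).2]; ring
lemma nR_tau (α : MulAut F) : nR (α * tau) = nQ α := by
  unfold nQ nR qf; simp only [(Mat_mul_tau α _).1, (Mat_mul_tau α _).2]; ring
lemma nP_ib (α : MulAut F) : nP (α * ib) = nP α := by
  unfold nP qf; simp only [(Mat_mul_ib α _).1]
lemma nQ_ib (α : MulAut F) : nQ (α * ib) = nQ α := by
  unfold nQ qf; simp only [(Mat_mul_ib α _).2]; ring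
lemma nR_ib (α : MulAut F) : nR (α * ib) = 2 * nP α + 2 * nQ α - nR α := by
  unfold nP nQ nR qf; simp only [(Mat_mul_ib α _).1, (Mat_mul_ib α _).2]; ring

lemma tX_ib (α : MulAut F) : tX (α * ib) = tX α := by
  rw [tX, MulAut.mul_apply, ib_a]; rfl
lemma tY_ib (α : MulAut F) : tY (α * ib) = tY α := by
  rw [tY, MulAut.mul_apply, ib_b, map_inv, t_inv]; rfl

lemma abs_three_dvd {x : ℤ} (h : 3 ∣ x) (h0 : x ≠ 0) : 3 ≤ |x| :=
  Int.le_of_dvd (abs_pos.2 h0) ((dvd_abs _ _).2 h)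

lemma tX_ge (α : MulAut F) : 3 ≤ tX α := abs_three_dvd (three_dvd α) (t_ne_zero _)
lemma tZ_ge (α : MulAut F) : 3 ≤ tZ α := by rw [← tX_tau]; exact tX_ge _
lemma tY_ge (α : MulAut F) : 3 ≤ tY α := by rw [← tZ_tau]; exact tZ_ge _

lemma tmarkov (α : MulAut F) : tX α ^ 2 + tY α ^ 2 + tZ α ^ 2 = tX α * tY α * tZ α := by
  unfold tX tY tZ
  rw [sq_abs, sq_abs, sq_abs, markov, ← abs_mul, ← abs_mul, abs_of_pos (markov_pos α)]

lemma tZ_ib (α : MulAut F) : tZ (α * ib) = tX α * tY α - tZ α := by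
  have h1 := markov α
  have h2 := markov_pos α
  have e : t ((α * ib) (a * b)) = t (α a) * t (α b) - t (α (a * b)) := by
    rw [MulAut.mul_apply, map_mul ib, ib_a, ib_b, map_mul, map_inv, t_mul_inv, map_mul]
  unfold tX tY tZ
  rw [e, ← abs_mul]
  have h0 : t (α (a * b)) ≠ 0 := t_ne_zero _
  have hx : t (α a) ≠ 0 := t_ne_zero _
  generalize t (α (a * b)) = z at *
  generalize t (α a) = x at *
  generalize t (α b) = y at *
  have hxp : 0 < x ^ 2 := by positivity
  have h3 : 0 < (x * y - z) * z := by nlinarith [sq_nonneg y]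
  rcases lt_or_gt_of_ne h0 with hz | hz
  · have h4 : x * y - z < 0 := by nlinarith
    have h5 : x * y < 0 := by nlinarith
    rw [abs_of_neg h4, abs_of_neg h5, abs_of_neg hz]; ring
  · have h4 : 0 < x * y - z := by nlinarith
    have h5 : 0 < x * y := by nlinarith
    rw [abs_of_pos h4, abs_of_pos h5, abs_of_pos hz]

lemma Mat_det (α : MulAut F) : (Mat α).det = 1 ∨ (Mat α).det = -1 := by
  have h := congrArg Matrix.det (Mat_mul_inv α)
  rw [Matrix.det_mul, Matrix.det_one] at h
  exact Int.isUnit_iff.1 (IsUnit.of_mul_eq_one _ h)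

lemma parity (α : MulAut F) : nP α + nQ α ≠ nR α := by
  intro h
  have hd := Mat_det α
  rw [Matrix.det_fin_two] at hd
  unfold nP nQ nR qf at h
  have h2 : Mat α 0 0 * Mat α 1 1 - Mat α 0 1 * Mat α 1 0 =
    2 * (Mat α 0 0 * Mat α 0 1 + Mat α 1 0 * Mat α 1 1 - Mat α 0 1 * Mat α 1 0) := by
    linear_combination h
  generalize Mat α 0 0 * Mat α 0 1 + Mat α 1 0 * Mat α 1 1 - Mat α 0 1 * Mat α 1 0 = k at h2
  omega

/-- unit triple -/
def T1 (α : MulAut F) : Prop := nP α = 1 ∧ nQ α = 1 ∧ nR α = 1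

lemma T1_tau (α : MulAut F) : T1 (α * tau) ↔ T1 α := by
  unfold T1
  rw [nP_tau, nQ_tau, nR_tau]
  tauto

lemma T1_sig (α : MulAut F) : T1 (α * sig) ↔ T1 α := by
  unfold T1 nP nQ nR
  simp only [(Mat_mul_sig α _).1, (Mat_mul_sig α _).2]
  rw [add_comm (Mat α 0 1), add_comm (Mat α 1 1)]
  tauto

lemma T1_one : T1 1 := by
  unfold T1 nP nQ nR qf
  rw [Mat_one]
  simp

lemma T1_zpow (j : ℤ) : T1 (tau ^ j) := by
  induction j using Int.induction_on with
  | zero => exact T1_one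
  | succ i h => rw [zpow_add_one, T1_tau]; exact h
  | pred i h => rw [← T1_tau, ← zpow_add_one, sub_add_cancel]; exact h

lemma T1_conj (g : F) (α : MulAut F) : T1 (MulAut.conj g * α) ↔ T1 α := by
  unfold T1 nP nQ nR
  rw [Mat_mul, Mat_conj, one_mul]

lemma markov_min {X Y Z : ℤ} (hX : 3 ≤ X) (hXY : X ≤ Y) (hYZ : Y ≤ Z)
    (h : X ^ 2 + Y ^ 2 + Z ^ 2 = X * Y * Z) (hb : 2 * Z ≤ X * Y) (d : 3 ∣ Z):
    X = 3 ∧ Y = 3 ∧ Z = 3 := by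
  have h1 : 0 ≤ (Z - Y) * (X * Y - Z - Y) := by
    apply mul_nonneg <;> nlinarith
  have h2 : X * Y ^ 2 ≤ 2 * Y ^ 2 + X ^ 2 := by nlinarith
  have h3 : X ≤ 3 := by
    by_contra hc
    have : 4 ≤ X := by omega
    nlinarith [sq_nonneg Y, mul_self_le_mul_self (by omega : 0 ≤ X) hXY]
  have h4 : X = 3 := by omega
  subst h4
  have h5 : Y = 3 := by nlinarith
  subst h5
  have : Z ≤ 4 := by omega
  omega

lemma none_big (α : MulAut F) (h1 : 2 * tZ α ≤ tX α * tY α) (h2 : 2 * tX α ≤ tY α * tZ α)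
    (h3 : 2 * tY α ≤ tZ α * tX α) : tX α = 3 ∧ tY α = 3 ∧ tZ α = 3 := by
  have hm := tmarkov α
  have gX := tX_ge α
  have gY := tY_ge α
  have gZ := tZ_ge α
  have dX : 3 ∣ tX α := (dvd_abs _ _).2 (three_dvd α)
  have dZ : 3 ∣ tZ α := by rw [← tX_tau]; exact (dvd_abs _ _).2 (three_dvd _)
  have dY : 3 ∣ tY α := by
    rw [← tZ_tau, ← tX_tau]; exact (dvd_abs _ _).2 (three_dvd _)
  generalize tX α = X at *
  generalize tY α = Y at *
  generalize tZ α = Z at *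
  rcases le_total X Y with a1 | a1 <;> rcases le_total Y Z with a2 | a2 <;>
    rcases le_total X Z with a3 | a3
  · have := markov_min gX a1 a2 (by linarith) (by linarith) dZ; tauto
  · have := markov_min gX a1 a2 (by linarith) (by linarith) dZ; tauto
  · have := markov_min gX a3 a2 (by linarith) (by linarith) dY; tauto
  · have := markov_min gZ a3 a1 (by linarith) (by linarith) dY; tauto
  · have := markov_min gY a1 a3 (by linarith) (by linarith) dZ; tauto
  · have := markov_min gY a2 a3 (by linarith) (by linarith) dX; tauto
  · have := markov_min gY a1 a3 (by linarith) (by linarith) dZ; tauto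
  · have := markov_min gZ a2 a1 (by linarith) (by linarith) dX; tauto

lemma base4 (α : MulAut F) (h : tX α = 3 ∧ tY α = 3 ∧ tZ α = 3) :
    ∃ (g : F) (j : ℤ), α = MulAut.conj g * tau ^ j ∨ α = MulAut.conj g * tau ^ j * sig :=
  base3 α h.1 h.2.1 h.2.2 (markov_pos α)

/-- the comparison -/
def Cmp (α : MulAut F) : Prop :=
  (tX α * tY α < 2 * tZ α ↔ nP α + nQ α < nR α) ∧
  (tY α * tZ α < 2 * tX α ↔ nQ α + nR α < nP α) ∧
  (tZ α * tX α < 2 * tY α ↔ nR α + nP α < nQ α)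

lemma Cmp_tau (α : MulAut F) : Cmp (α * tau) ↔ Cmp α := by
  unfold Cmp
  rw [tX_tau, tY_tau, tZ_tau, nP_tau, nQ_tau, nR_tau]
  tauto

lemma not_two_big {X Y Z : ℤ} (hX : 3 ≤ X) (hY : 3 ≤ Y) (hZ : 3 ≤ Z) (h : X * Y < 2 * Z) :
    ¬ Y * Z < 2 * X ∧ ¬ Z * X < 2 * Y := by
  constructor <;> intro h' <;> nlinarith

lemma Cmp_step (α : MulAut F) (hZ : tX α * tY α < 2 * tZ α) (ih : Cmp (α * ib)) : Cmp α := by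
  have h1 := ih.1
  rw [tX_ib, tY_ib, tZ_ib, nP_ib, nQ_ib, nR_ib] at h1
  have h2 : ¬ (nP α + nQ α < 2 * nP α + 2 * nQ α - nR α) := by
    rw [← h1]; linarith
  have h3 := parity α
  have h4 : nP α + nQ α < nR α := by omega
  have h5 := not_two_big (tX_ge α) (tY_ge α) (tZ_ge α) hZ
  have p0 : 0 ≤ nP α := qf_nonneg _ _
  have q0 : 0 ≤ nQ α := qf_nonneg _ _
  refine ⟨⟨fun _ => h4, fun _ => hZ⟩, ⟨fun h => absurd h h5.1, fun h => ?_⟩,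
    ⟨fun h => absurd h h5.2, fun h => ?_⟩⟩ <;> omega

lemma Cmp_all (α : MulAut F) : Cmp α := by
  obtain ⟨n, hn⟩ : ∃ n : ℕ, (tX α + tY α + tZ α).toNat ≤ n := ⟨_, le_rfl⟩
  induction n generalizing α with
  | zero =>
    have := tX_ge α; have := tY_ge α; have := tZ_ge α
    omega
  | succ n ih =>
    have main : ∀ β : MulAut F, (tX β + tY β + tZ β).toNat ≤ n + 1 →
        tX β * tY β < 2 * tZ β → Cmp β := by
      intro β hb hZ
      apply Cmp_step β hZ
      apply ih
      have := tX_ge β; have := tY_ge β; have := tZ_ge β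
      have := tZ_ge (β * ib)
      rw [tX_ib, tY_ib]
      rw [tZ_ib] at this ⊢
      omega
    by_cases h1 : tX α * tY α < 2 * tZ α
    · exact main α hn h1
    by_cases h2 : tZ α * tX α < 2 * tY α
    · rw [← Cmp_tau]
      apply main
      · rw [tX_tau, tY_tau, tZ_tau]; omega
      · rw [tX_tau, tY_tau, tZ_tau]; exact h2
    by_cases h3 : tY α * tZ α < 2 * tX α
    · rw [← Cmp_tau, ← Cmp_tau]
      apply main
      · simp only [tX_tau, tY_tau, tZ_tau]; omega
      · simp only [tX_tau, tY_tau, tZ_tau]; exact h3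
    push Not at h1 h2 h3
    have h4 := none_big α h1 h3 h2
    have h5 : T1 α := by
      obtain ⟨g, j, h | h⟩ := base4 α h4
      · rw [h, T1_conj]; exact T1_zpow j
      · rw [h, T1_sig, T1_conj]; exact T1_zpow j
    obtain ⟨e1, e2, e3⟩ := h4
    obtain ⟨e4, e5, e6⟩ := h5
    unfold Cmp
    rw [e1, e2, e3, e4, e5, e6]
    norm_num

lemma unit_form (α : MulAut F) (h : T1 α) :
    ∃ (g : F) (j : ℕ), j < 6 ∧ (α = MulAut.conj g * tau ^ j ∨ α = MulAut.conj g * tau ^ j * sig) := by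
  have hc := Cmp_all α
  obtain ⟨e4, e5, e6⟩ := h
  unfold Cmp at hc
  rw [e4, e5, e6] at hc
  norm_num at hc
  obtain ⟨g, j, hj⟩ := base4 α (none_big α hc.1 hc.2.1 hc.2.2)
  have key : MulAut.conj g * tau ^ j =
      MulAut.conj (g * (a * b * a⁻¹ * b⁻¹) ^ (j / 6)) * tau ^ (j % 6).toNat := by
    have e : tau ^ j = (tau ^ 6) ^ (j / 6) * tau ^ (j % 6).toNat := by
      rw [← zpow_natCast tau 6, ← zpow_mul, ← zpow_natCast tau (j % 6).toNat, ← zpow_add]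
      congr 1
      omega
    rw [e, tau_six, map_mul MulAut.conj g, map_zpow]
    exact (mul_assoc _ _ _).symm
  rw [key] at hj
  exact ⟨_, _, by omega, hj⟩

/-- Nielsen: the kernel of the action on the abelianization is inner. -/
lemma kernel_inner (α : MulAut F) (h : Mat α = 1) : ∃ g : F, α = MulAut.conj g := by
  have hT : T1 α := by
    unfold T1 nP nQ nR
    rw [h, ← Mat_one]
    exact T1_one
  obtain ⟨g, j, hj, hα | hα⟩ := unit_form α hT
  · rw [hα, Mat_mul, Mat_conj, one_mul, Mat_pow, Mat_tau] at h
    have : j = 0 := by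
      interval_cases j
      · rfl
      all_goals exfalso; revert h; decide
    subst this
    exact ⟨g, by rw [hα, pow_zero, mul_one]⟩
  · rw [hα, Mat_mul, Mat_mul, Mat_conj, one_mul, Mat_pow, Mat_tau, Mat_sig] at h
    exfalso
    interval_cases j <;> revert h <;> decide

end F2GL

namespace F2GL

open scoped Pointwise

abbrev GC := GL (Fin 2) ℂ

/-- automorphisms realised by conjugation in `GL(2,ℂ)` -/
def Nm (ρ : F →* GC) : Subgroup (MulAut F) where
  carrier := {α | ∃ T : GC, ∀ w, T * ρ w * T⁻¹ = ρ (α w)}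
  one_mem' := ⟨1, fun w => by simp⟩
  mul_mem' := by
    rintro α β ⟨T, hT⟩ ⟨U, hU⟩
    refine ⟨T * U, fun w => ?_⟩
    rw [MulAut.mul_apply, ← hT, ← hU]
    group
  inv_mem' := by
    rintro α ⟨T, hT⟩
    refine ⟨T⁻¹, fun w => ?_⟩
    have h := hT (α⁻¹ w)
    rw [MulAut.apply_inv_self] at h
    rw [← h]
    group

lemma Nm_conj (ρ : F →* GC) (g : F) : MulAut.conj g ∈ Nm ρ :=
  ⟨ρ g, fun w => by simp [MulAut.conj_apply]⟩

lemma Nm_of (ρ : F →* GC) (α : MulAut F) (T : GC) (ha : T * ρ a = ρ (α a) * T)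
    (hb : T * ρ b = ρ (α b) * T) : α ∈ Nm ρ := by
  have : (MulAut.conj T).toMonoidHom.comp ρ = ρ.comp α.toMonoidHom := by
    apply hom_ext2
    · change T * ρ a * T⁻¹ = ρ (α a)
      rw [ha]; group
    · change T * ρ b * T⁻¹ = ρ (α b)
      rw [hb]; group
  exact ⟨T, fun w => DFunLike.congr_fun this w⟩

/-- `α` is realised -/
def Fx (α : MulAut F) : Prop := ∃ ρ : F →* GC, Function.Injective ρ ∧
  (∀ w, Matrix.GeneralLinearGroup.det (ρ w) = 1) ∧ α ∈ Nm ρ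

lemma Fx_conj (α β : MulAut F) (h : Fx (β⁻¹ * α * β)) : Fx α := by
  obtain ⟨ρ, h1, h2, T, hT⟩ := h
  refine ⟨ρ.comp (β⁻¹).toMonoidHom, h1.comp (β⁻¹).injective, fun w => h2 _, T, fun w => ?_⟩
  have := hT (β⁻¹ w)
  change T * ρ (β⁻¹ w) * T⁻¹ = ρ (β⁻¹ (α w))
  rw [this, MulAut.mul_apply, MulAut.mul_apply, MulAut.apply_inv_self]

/-- complexification -/
def cx {R : Type*} [CommRing R] (f : R →+* ℂ) : SL(2, R) →* GC :=
  Matrix.SpecialLinearGroup.toGL.comp (Matrix.SpecialLinearGroup.map f)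

lemma cx_inj {R : Type*} [CommRing R] (f : R →+* ℂ) (hf : Function.Injective f) :
    Function.Injective (cx f) := by
  intro x y h
  have h' := congrArg Units.val h
  ext i j
  have := congrFun (congrFun h' i) j
  exact hf this

lemma cx_det {R : Type*} [CommRing R] (f : R →+* ℂ) (x : SL(2, R)) :
    Matrix.GeneralLinearGroup.det (cx f x) = 1 := by
  ext
  exact (Matrix.SpecialLinearGroup.map f x).2

lemma cx_1 {R : Type*} [CommRing R] (f : R →+* ℂ) (x : SL(2, R)) :
    (cx f x).1 = !![f (x.1 0 0), f (x.1 0 1); f (x.1 1 0), f (x.1 1 1)] := by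
  ext i j
  fin_cases i <;> fin_cases j <;> rfl

noncomputable def r0 : F →* GC := (cx (Int.castRingHom ℂ)).comp rho0
noncomputable def r1 : F →* GC := (cx (algebraMap ℚ ℂ)).comp (hom2 A1 B1)

lemma Fx0 (α : MulAut F) (h : α ∈ Nm r0) : Fx α :=
  ⟨r0, (cx_inj _ Int.cast_injective).comp rho0_inj, fun _ => cx_det _ _, h⟩
lemma Fx1 (α : MulAut F) (h : α ∈ Nm r1) : Fx α :=
  ⟨r1, (cx_inj _ (algebraMap ℚ ℂ).injective).comp inj1, fun _ => cx_det _ _, h⟩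

lemma r0_a : (r0 (FreeGroup.of 0)).1 = !![2, 1; 1, 1] := by
  change (cx _ (rho0 _)).1 = _
  rw [rho0_a, cx_1, A0_1]; simp
lemma r0_b : (r0 (FreeGroup.of 1)).1 = !![2, -1; -1, 1] := by
  change (cx _ (rho0 _)).1 = _
  rw [rho0_b, cx_1, B0_1]; simp
lemma r1_a : (r1 (FreeGroup.of 0)).1 = !![5/3, 4/3; 4/3, 5/3] := by
  change (cx _ (hom2 A1 B1 _)).1 = _
  rw [hom2_a, cx_1]; simp [A1]
lemma r1_b : (r1 (FreeGroup.of 1)).1 = !![3, 0; 0, 1/3] := by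
  change (cx _ (hom2 A1 B1 _)).1 = _
  rw [hom2_b, cx_1]; simp [B1]
lemma r1_ai : (r1 (FreeGroup.of 0)⁻¹).1 = !![5/3, -4/3; -4/3, 5/3] := by
  change (cx _ (hom2 A1 B1 _)).1 = _
  rw [map_inv, hom2_a, cx_1, A1_inv]; simp
lemma r1_bi : (r1 (FreeGroup.of 1)⁻¹).1 = !![1/3, 0; 0, 3] := by
  change (cx _ (hom2 A1 B1 _)).1 = _
  rw [map_inv, hom2_b, cx_1, B1_inv]; simp

/-- explicit elements of GL -/
noncomputable def mkG (p q r s : ℂ) (h : p * s - q * r ≠ 0) : GC :=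
  Matrix.GeneralLinearGroup.mkOfDetNeZero !![p, q; r, s] (by rw [Matrix.det_fin_two_of]; exact h)
lemma mkG_1 (p q r s : ℂ) (h : p * s - q * r ≠ 0) : (mkG p q r s h).1 = !![p, q; r, s] := rfl

lemma tau_r0 : tau ∈ Nm r0 := by
  refine ⟨cx (Int.castRingHom ℂ) ModularGroup.T, fun w => ?_⟩
  have h := DFunLike.congr_fun tau_T w
  have h2 : ModularGroup.T * rho0 w * (ModularGroup.T)⁻¹ = rho0 (tau w) := by
    have e : rho0.comp (MulAut.conj 1 * tau ^ (1:ℤ)).toMonoidHom = rho0.comp tau.toMonoidHom := by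
      rw [map_one, one_mul, zpow_one]
    rw [e] at h
    exact h
  change cx _ _ * cx _ (rho0 w) * _ = cx _ (rho0 (tau w))
  rw [← h2, map_mul, map_mul, map_inv]

lemma sig_r0 : sig ∈ Nm r0 := by
  apply Nm_of r0 sig (mkG 1 0 0 (-1) (by norm_num))
  · apply Units.ext
    rw [Units.val_mul, Units.val_mul, sig_a, mkG_1, r0_a, r0_b]
    simp
  · apply Units.ext
    rw [Units.val_mul, Units.val_mul, sig_b, mkG_1, r0_a, r0_b]
    simp

lemma ib_r1 : ib ∈ Nm r1 := by
  apply Nm_of r1 ib (mkG 0 1 1 0 (by norm_num))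
  · apply Units.ext
    rw [Units.val_mul, Units.val_mul, ib_a, mkG_1, r1_a]
    simp
  · apply Units.ext
    rw [Units.val_mul, Units.val_mul, ib_b, mkG_1, r1_b, r1_bi]
    simp

lemma ia_r1 : ia ∈ Nm r1 := by
  apply Nm_of r1 ia (mkG 1 0 0 (-1) (by norm_num))
  · apply Units.ext
    rw [Units.val_mul, Units.val_mul, ia_a, mkG_1, r1_a, r1_ai]
    simp [neg_div]
  · apply Units.ext
    rw [Units.val_mul, Units.val_mul, ia_b, mkG_1, r1_b]
    simp

lemma rot_r1 : rot ∈ Nm r1 := by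
  apply Nm_of r1 rot (mkG 1 1 (-1) 1 (by norm_num))
  · apply Units.ext
    rw [Units.val_mul, Units.val_mul, rot_a, mkG_1, r1_a, r1_b]
    simp
    norm_num
  · apply Units.ext
    rw [Units.val_mul, Units.val_mul, rot_b, mkG_1, r1_b, r1_ai]
    simp
    norm_num

lemma L1 (α : MulAut F) (h : T1 α) : Fx α := by
  apply Fx0
  obtain ⟨g, j, -, rfl | rfl⟩ := unit_form α h
  · exact mul_mem (Nm_conj _ _) (pow_mem tau_r0 _)
  · exact mul_mem (mul_mem (Nm_conj _ _) (pow_mem tau_r0 _)) sig_r0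

lemma L2 (α s : MulAut F) (h : Mat α = Mat s) (hs : s ∈ Nm r1) : Fx α := by
  apply Fx1
  obtain ⟨g, hg⟩ := kernel_inner (α * s⁻¹) (by rw [Mat_mul, h, Mat_mul_inv])
  have : α = MulAut.conj g * s := by rw [← hg]; group
  rw [this]
  exact mul_mem (Nm_conj _ _) hs

lemma final (α : MulAut F) (h : Fx α) :
    ∃ ψ : (F ⋊[zpowersHom (MulAut F) α] Multiplicative ℤ) →* GC, Function.Injective ψ := by
  obtain ⟨ρ, h1, h2, T0, hT0⟩ := h
  obtain ⟨T, hT, hd⟩ : ∃ T : GC, (∀ w, T * ρ w * T⁻¹ = ρ (α w)) ∧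
      ‖(Matrix.GeneralLinearGroup.det T : ℂ)‖ ≠ 1 := by
    by_cases hd : ‖(Matrix.GeneralLinearGroup.det T0 : ℂ)‖ = 1
    · let D : GC := mkG 2 0 0 2 (by norm_num)
      have hD : ∀ x : GC, D * x = x * D := by
        intro x
        apply Units.ext
        rw [Units.val_mul, Units.val_mul, mkG_1]
        ext i j
        fin_cases i <;> fin_cases j <;> simp [Matrix.mul_apply, Fin.sum_univ_two, mul_comm]
      refine ⟨D * T0, fun w => ?_, ?_⟩
      · rw [← hT0, mul_inv_rev, mul_assoc D, hD, mul_assoc (T0 * ρ w), ← mul_assoc D, hD,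
          mul_assoc _ D, mul_inv_cancel, mul_one]
      · rw [map_mul, Units.val_mul, norm_mul, hd]
        have : (Matrix.GeneralLinearGroup.det D : ℂ) = 4 := by
          change Matrix.det D.1 = 4
          rw [mkG_1, Matrix.det_fin_two_of]; norm_num
        rw [this]; norm_num
    · exact ⟨T0, hT0, hd⟩
  have hk : ∀ n : ℤ, ∀ w, T ^ n * ρ w * (T ^ n)⁻¹ = ρ ((α ^ n) w) := by
    let S : Subgroup (GC × MulAut F) :=
      { carrier := {p | ∀ w, p.1 * ρ w * p.1⁻¹ = ρ (p.2 w)}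
        one_mem' := fun w => by simp
        mul_mem' := by
          intro p q hp hq w
          change (p.1 * q.1) * ρ w * (p.1 * q.1)⁻¹ = ρ (p.2 (q.2 w))
          rw [← hp, ← hq]; group
        inv_mem' := by
          intro p hp w
          change p.1⁻¹ * ρ w * p.1⁻¹⁻¹ = ρ (p.2⁻¹ w)
          have h := hp (p.2⁻¹ w)
          rw [MulAut.apply_inv_self] at h
          rw [← h]; group }
    have hm : ((T, α) : GC × MulAut F) ∈ S := hT
    intro n w
    exact (S.zpow_mem hm n) w
  refine ⟨SemidirectProduct.lift ρ (zpowersHom GC T) ?_, ?_⟩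
  · intro n
    refine MonoidHom.ext fun x => ?_
    have := (hk n.toAdd x).symm
    simp only [MonoidHom.comp_apply, MulEquiv.coe_toMonoidHom, zpowersHom_apply]
    rw [MulAut.conj_apply]
    exact this
  · rw [injective_iff_map_eq_one]
    rintro ⟨w, n⟩ hw
    have e : ρ w * T ^ n.toAdd = 1 := by
      simpa [SemidirectProduct.lift] using hw
    have hn : n.toAdd = 0 := by
      have e2 := congrArg Matrix.GeneralLinearGroup.det e
      rw [map_mul, h2, one_mul, map_zpow, map_one] at e2
      have e3 := congrArg (fun u : ℂˣ => ‖(u : ℂ)‖) e2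
      simp only [Units.val_zpow_eq_zpow_val, norm_zpow, Units.val_one, norm_one] at e3
      by_contra hne
      rcases (zpow_eq_one_iff_of_ne_zero₀ hne).1 e3 with h | h
      · exact hd h
      · have := norm_nonneg (Matrix.GeneralLinearGroup.det T : ℂ)
        linarith [h.1]
    rw [hn, zpow_zero, mul_one] at e
    have hw1 : w = 1 := h1 (by rw [e, map_one])
    have hn1 : n = 1 := hn
    rw [hw1, hn1]; rfl

end F2GL

namespace F2GL

open scoped Pointwise

abbrev M2 := Matrix (Fin 2) (Fin 2) ℤ

lemma lucas (m : M2) (hd : m 0 0 * m 1 1 - m 0 1 * m 1 0 = 1) (ht : 2 ≤ |m 0 0 + m 1 1|) (n : ℕ) :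
    ∃ u v : ℤ, |v| < |u| ∧ m ^ (n + 1) = !![u * m 0 0 - v, u * m 0 1; u * m 1 0, u * m 1 1 - v] := by
  induction n with
  | zero =>
    refine ⟨1, 0, by norm_num, ?_⟩
    rw [zero_add, pow_one]
    ext i j
    fin_cases i <;> fin_cases j <;> simp
  | succ n ih =>
    obtain ⟨u, v, h, e⟩ := ih
    refine ⟨(m 0 0 + m 1 1) * u - v, u, ?_, ?_⟩
    · have h1 : |(m 0 0 + m 1 1) * u| - |v| ≤ |(m 0 0 + m 1 1) * u - v| := abs_sub_abs_le_abs_sub _ _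
      rw [abs_mul] at h1
      nlinarith [abs_nonneg u]
    · rw [pow_succ, e]
      ext i j
      fin_cases i <;> fin_cases j <;> simp [Matrix.mul_apply, Fin.sum_univ_two]
      · linear_combination (-u) * hd
      · ring
      · ring
      · linear_combination (-u) * hd

lemma scalar_of (m : M2) (hd : m 0 0 * m 1 1 - m 0 1 * m 1 0 = 1) (ht : 2 ≤ |m 0 0 + m 1 1|)
    (n : ℕ) (hn : 0 < n) (h : m ^ n = 1) : m 0 1 = 0 ∧ m 1 0 = 0 ∧ m 0 0 = m 1 1 := by
  obtain ⟨k, rfl⟩ : ∃ k, n = k + 1 := ⟨n - 1, by omega⟩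
  obtain ⟨u, v, huv, e⟩ := lucas m hd ht k
  rw [h] at e
  have hu : u ≠ 0 := by
    rintro rfl
    simp at huv
    linarith [abs_nonneg v]
  have e00 := congrFun (congrFun e 0) 0
  have e01 := congrFun (congrFun e 0) 1
  have e10 := congrFun (congrFun e 1) 0
  have e11 := congrFun (congrFun e 1) 1
  simp [hu] at e00 e01 e10 e11
  refine ⟨e01, e10, ?_⟩
  apply mul_left_cancel₀ hu
  linarith

/-- necessary conditions for finite order -/
def Good (m : M2) : Prop :=
  (m 0 0 * m 1 1 - m 0 1 * m 1 0 = 1 ∧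
    ((-1 ≤ m 0 0 + m 1 1 ∧ m 0 0 + m 1 1 ≤ 1) ∨ (m 0 1 = 0 ∧ m 1 0 = 0 ∧ m 0 0 = m 1 1))) ∨
  (m 0 0 * m 1 1 - m 0 1 * m 1 0 = -1 ∧ m 0 0 + m 1 1 = 0)

lemma good_of (m : M2) (hd : m.det = 1 ∨ m.det = -1) (n : ℕ) (hn : 0 < n) (h : m ^ n = 1) :
    Good m := by
  rw [Matrix.det_fin_two] at hd
  rcases hd with hd | hd
  · left
    refine ⟨hd, ?_⟩
    by_cases ht : 2 ≤ |m 0 0 + m 1 1|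
    · exact Or.inr (scalar_of m hd ht n hn h)
    · left
      push Not at ht
      rw [abs_lt] at ht
      omega
  · right
    refine ⟨hd, ?_⟩
    have q00 : (m * m) 0 0 = m 0 0 * m 0 0 + m 0 1 * m 1 0 := by
      simp [Matrix.mul_apply, Fin.sum_univ_two]
    have q01 : (m * m) 0 1 = m 0 0 * m 0 1 + m 0 1 * m 1 1 := by
      simp [Matrix.mul_apply, Fin.sum_univ_two]
    have q10 : (m * m) 1 0 = m 1 0 * m 0 0 + m 1 1 * m 1 0 := by
      simp [Matrix.mul_apply, Fin.sum_univ_two]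
    have q11 : (m * m) 1 1 = m 1 0 * m 0 1 + m 1 1 * m 1 1 := by
      simp [Matrix.mul_apply, Fin.sum_univ_two]
    obtain ⟨h1, h2, h3⟩ := scalar_of (m * m)
      (by
        rw [q00, q01, q10, q11]
        linear_combination (m 0 0 * m 1 1 - m 0 1 * m 1 0 - 1) * hd)
      (by
        rw [q00, q11]
        refine le_trans ?_ (le_abs_self _)
        nlinarith [sq_nonneg (m 0 0 + m 1 1)]) n hn (by rw [← pow_two, ← pow_mul, mul_comm, pow_mul, h, one_pow])
    rw [q01] at h1
    rw [q10] at h2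
    rw [q00, q11] at h3
    by_contra ht
    have k1 : m 0 1 = 0 := mul_left_cancel₀ ht (by linear_combination h1)
    have k3 : m 0 0 = m 1 1 := mul_left_cancel₀ ht (by linear_combination h3)
    rw [k1, k3] at hd
    nlinarith [sq_nonneg (m 1 1)]

/-- entries of `Mat` in bracket form -/
lemma Mat_cj_shear (α : MulAut F) (k p q r s : ℤ) (h : Mat α = !![p, q; r, s]) :
    Mat ((shear k)⁻¹ * α * shear k) = !![p - k * r, q - k * s + k * (p - k * r); r, s + k * r] := by
  have e : (shear k)⁻¹ = shear (-k) := by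
    rw [inv_eq_iff_mul_eq_one]
    apply aut_ext2 <;> simp [MulAut.mul_apply]
  rw [e, Mat_mul, Mat_mul, Mat_shear, Mat_shear, h]
  ext i j
  fin_cases i <;> fin_cases j <;> simp [Matrix.mul_apply, Fin.sum_univ_two] <;> ring

lemma Mat_cj_sig (α : MulAut F) (p q r s : ℤ) (h : Mat α = !![p, q; r, s]) :
    Mat (sig⁻¹ * α * sig) = !![s, r; q, p] := by
  have e : sig⁻¹ = sig := by
    rw [inv_eq_iff_mul_eq_one]
    apply aut_ext2 <;> simp [MulAut.mul_apply]
  rw [e, Mat_mul, Mat_mul, Mat_sig, h]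
  ext i j
  fin_cases i <;> fin_cases j <;> simp [Matrix.mul_apply, Fin.sum_univ_two]

lemma Mat_cj_ib (α : MulAut F) (p q r s : ℤ) (h : Mat α = !![p, q; r, s]) :
    Mat (ib⁻¹ * α * ib) = !![p, -q; -r, s] := by
  have e : ib⁻¹ = ib := by
    rw [inv_eq_iff_mul_eq_one]
    apply aut_ext2 <;> simp [MulAut.mul_apply]
  rw [e, Mat_mul, Mat_mul, Mat_ib, h]
  ext i j
  fin_cases i <;> fin_cases j <;> simp [Matrix.mul_apply, Fin.sum_univ_two]

lemma T1_iff (α : MulAut F) (p q r s : ℤ) (h : Mat α = !![p, q; r, s]) :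
    T1 α ↔ p ^ 2 - p * r + r ^ 2 = 1 ∧ q ^ 2 - q * s + s ^ 2 = 1 ∧
      (p + q) ^ 2 - (p + q) * (r + s) + (r + s) ^ 2 = 1 := by
  unfold T1 nP nQ nR qf
  rw [h]
  simp

def Gd (p q r s : ℤ) : Prop :=
  (p * s - q * r = 1 ∧ ((-1 ≤ p + s ∧ p + s ≤ 1) ∨ (q = 0 ∧ r = 0 ∧ p = s))) ∨
  (p * s - q * r = -1 ∧ p + s = 0)

lemma near (c r : ℤ) (hr : r ≠ 0) : ∃ k : ℤ, |c - 2 * k * r| ≤ |r| := by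
  have hp : 0 < |r| := abs_pos.mpr hr
  have h1 := Int.emod_nonneg (c + |r|) (b := 2 * |r|) (by omega)
  have h2 := Int.emod_lt_of_pos (c + |r|) (b := 2 * |r|) (by omega)
  have h3 := Int.emod_add_mul_ediv (c + |r|) (2 * |r|)
  set k := (c + |r|) / (2 * |r|)
  rcases abs_choice r with h | h
  · refine ⟨k, ?_⟩
    rw [abs_le]
    have : 2 * |r| * k = 2 * k * r := by rw [h]; ring
    constructor <;> linarith
  · refine ⟨-k, ?_⟩
    rw [abs_le]
    have : 2 * |r| * k = 2 * (-k) * r := by rw [h]; ring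
    constructor <;> linarith

/-- small matrices -/
lemma leaf (α : MulAut F) (p q r s : ℤ) (h : Mat α = !![p, q; r, s]) (hg : Gd p q r s)
    (hr : r = 1 ∨ r = -1) (hq : q = 1 ∨ q = -1) (hp : -1 ≤ p ∧ p ≤ 1) (hs : -1 ≤ s ∧ s ≤ 1)
    (hps : |p - s| ≤ 1) :
    Fx α := by
  by_cases c1 : T1 α
  · exact L1 α c1
  by_cases c2 : T1 (ib⁻¹ * α * ib)
  · exact Fx_conj α ib (L1 _ c2)
  rw [T1_iff _ _ _ _ _ h] at c1
  rw [T1_iff _ _ _ _ _ (Mat_cj_ib _ _ _ _ _ h)] at c2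
  by_cases c3 : p = 0 ∧ q = -1 ∧ r = 1 ∧ s = 0
  · obtain ⟨rfl, rfl, rfl, rfl⟩ := c3
    exact L2 α rot (by rw [h, Mat_rot]) rot_r1
  by_cases c4 : p = 0 ∧ q = 1 ∧ r = -1 ∧ s = 0
  · obtain ⟨rfl, rfl, rfl, rfl⟩ := c4
    refine L2 α (rot * rot * rot) ?_ (mul_mem (mul_mem rot_r1 rot_r1) rot_r1)
    rw [h, Mat_mul, Mat_mul, Mat_rot]
    decide
  exfalso
  unfold Gd at hg
  obtain ⟨p1, p2⟩ := hp
  obtain ⟨s1, s2⟩ := hs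
  clear h
  rcases hr with rfl | rfl <;> rcases hq with rfl | rfl <;> interval_cases p <;> interval_cases s <;>
    revert hg c1 c2 c3 c4 hps <;> decide

lemma reduce (n : ℕ) : ∀ (α : MulAut F) (p q r s : ℤ), r.natAbs = n → Mat α = !![p, q; r, s] →
    Gd p q r s → Fx α := by
  induction n using Nat.strong_induction_on with
  | _ n ih =>
  intro α p q r s hn h hg
  by_cases hr : r = 0
  · subst hr
    unfold Gd at hg
    rcases hg with ⟨hd, hg⟩ | ⟨hd, ht⟩
    · have hps : p = s := by
        have : p * s = 1 := by linarith
        rcases Int.eq_one_or_neg_one_of_mul_eq_one' this with h | h <;> omega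
      have hq : q = 0 := by
        rcases hg with hg | hg
        · exfalso
          subst hps
          have : p = 0 := by omega
          subst this
          norm_num at hd
        · exact hg.1
      subst hps hq
      apply L1
      rw [T1_iff _ _ _ _ _ h]
      refine ⟨?_, ?_, ?_⟩ <;> nlinarith
    · have hs : s = -p := by linarith
      subst hs
      have hp : p = 1 ∨ p = -1 := by
        have : p * p = 1 := by linarith
        rcases Int.eq_one_or_neg_one_of_mul_eq_one' this with h | h <;> omega
      obtain ⟨k, hk⟩ : ∃ k, q - k * (-p) + k * (p - k * 0) = 0 ∨ q - k * (-p) + k * (p - k * 0) = -p := by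
        rcases hp with rfl | rfl
        · rcases Int.even_or_odd' q with ⟨j, rfl | rfl⟩
          · exact ⟨-j, by left; ring⟩
          · exact ⟨-j - 1, by right; ring⟩
        · rcases Int.even_or_odd' q with ⟨j, rfl | rfl⟩
          · exact ⟨j, by left; ring⟩
          · exact ⟨j, by right; ring⟩
      have hM := Mat_cj_shear α k _ _ _ _ h
      apply Fx_conj α (shear k)
      rcases hk with hk | hk
      · rw [hk] at hM
        rcases hp with rfl | rfl
        · exact L2 _ ib (by rw [hM, Mat_ib]; norm_num) ib_r1
        · exact L2 _ ia (by rw [hM, Mat_ia]; norm_num) ia_r1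
      · rw [hk] at hM
        apply L1
        rw [T1_iff _ _ _ _ _ hM]
        refine ⟨?_, ?_, ?_⟩ <;> nlinarith
  · obtain ⟨k, hk⟩ := near (p - s) r hr
    have hM := Mat_cj_shear α k _ _ _ _ h
    apply Fx_conj α (shear k)
    generalize (shear k)⁻¹ * α * shear k = α' at hM
    have hg' : Gd (p - k * r) (q - k * s + k * (p - k * r)) r (s + k * r) := by
      unfold Gd at hg ⊢
      rcases hg with ⟨hd, hg⟩ | ⟨hd, ht⟩
      · left
        refine ⟨by linear_combination hd, ?_⟩
        left
        rcases hg with hg | hg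
        · constructor <;> linarith [hg.1, hg.2]
        · exact absurd hg.2.1 hr
      · right
        exact ⟨by linear_combination hd, by linear_combination ht⟩
    have hk' : |(p - k * r) - (s + k * r)| ≤ |r| := by
      have : (p - k * r) - (s + k * r) = p - s - 2 * k * r := by ring
      rw [this]; exact hk
    generalize p - k * r = p' at *
    generalize q - k * s + k * p' = q' at *
    generalize s + k * r = s' at *
    clear h hg hk
    by_cases hq : q'.natAbs < r.natAbs
    · have hS := Mat_cj_sig α' _ _ _ _ hM
      apply Fx_conj α' sig
      refine ih q'.natAbs (by omega) _ _ _ _ _ rfl hS ?_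
      unfold Gd at hg' ⊢
      rcases hg' with ⟨hd, hg⟩ | ⟨hd, ht⟩
      · left
        refine ⟨by linear_combination hd, ?_⟩
        rcases hg with hg | hg
        · left; constructor <;> linarith [hg.1, hg.2]
        · exact absurd hg.2.1 hr
      · right
        exact ⟨by linear_combination hd, by linear_combination ht⟩
    · have hqr : |r| ≤ |q'| := by
        rw [Int.abs_eq_natAbs, Int.abs_eq_natAbs]; omega
      have hr1 : 1 ≤ |r| := Int.one_le_abs hr
      have htt : -1 ≤ p' + s' ∧ p' + s' ≤ 1 := by
        rcases hg' with ⟨hd, hg | hg⟩ | ⟨hd, ht⟩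
        · exact hg
        · exact absurd hg.2.1 hr
        · constructor <;> linarith
      have hb : |4 * (q' * r)| ≤ 4 + |r| ^ 2 := by
        have h1 : 4 * (q' * r) = (p' + s') ^ 2 - 4 * (p' * s' - q' * r) - (p' - s') ^ 2 := by ring
        have h2 : (p' - s') ^ 2 ≤ |r| ^ 2 := by
          rw [← sq_abs (p' - s')]
          exact pow_le_pow_left₀ (abs_nonneg _) hk' 2
        have h3 : (p' + s') ^ 2 ≤ 1 := by nlinarith [htt.1, htt.2]
        rw [h1, abs_le]
        rcases hg' with ⟨hd, -⟩ | ⟨hd, ht⟩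
        · rw [hd]
          constructor <;> nlinarith [sq_nonneg (p' + s'), sq_nonneg (p' - s')]
        · rw [hd, ht]
          constructor <;> nlinarith [sq_nonneg (p' + s'), sq_nonneg (p' - s')]
      rw [abs_mul, abs_mul] at hb
      norm_num at hb
      rw [← sq_abs r] at hb
      have r1 : |r| = 1 := by nlinarith
      rw [r1] at hb hk' hqr
      have q1 : |q'| = 1 := by linarith
      have hk2 := abs_le.1 hk'
      exact leaf α' p' q' r s' hM hg' (eq_or_eq_neg_of_abs_eq r1) (eq_or_eq_neg_of_abs_eq q1)
        (by omega) (by omega) hk'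

lemma main (α : MulAut F) (hα : ∃ n : ℕ, 0 < n ∧ α ^ n ∈ (MulAut.conj : F →* MulAut F).range) :
    Fx α := by
  obtain ⟨n, hn, g, hg⟩ := hα
  have h := good_of (Mat α) (Mat_det α) n hn (by rw [← Mat_pow, ← hg, Mat_conj])
  exact reduce _ α (Mat α 0 0) (Mat α 0 1) (Mat α 1 0) (Mat α 1 1) rfl
    (Matrix.eta_fin_two _) h

end F2GL

/-- If `α` is an automorphism of the free group `F₂` of rank
two whose image in `Out(F₂)` has finite order (some positive power of `α` is an
inner automorphism), then `F₂ ⋊_α ℤ` embeds in `GL(2,ℂ)`. -/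
theorem free2_semidirect_finite_order_embeds_in_GL2C
    (α : MulAut (FreeGroup (Fin 2)))
    (hα : ∃ n : ℕ, 0 < n ∧ α ^ n ∈
      (MulAut.conj : FreeGroup (Fin 2) →* MulAut (FreeGroup (Fin 2))).range) :
    ∃ ψ : (FreeGroup (Fin 2) ⋊[zpowersHom (MulAut (FreeGroup (Fin 2))) α]
        Multiplicative ℤ) →* GL (Fin 2) ℂ,
      Function.Injective ψ := by
  exact F2GL.final α (F2GL.main α hα)
end
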